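/- arXiv:1607.03084 — 5 statements merged into one kernel-verified Lean document; each statement's English description precedes it below -/
import Mathlib

section
/- Let n ≥ 1, T ≥ 10 with T ≥ n, let ε = 1/(1600e), and let p be a (1/e)-approximately log-concave probability measure supported on a convex body 𝒦 ⊂ ℝⁿ of diameter at most T, with mean μ(p) and covariance Cov(p). Let r[p] be the Gaussian measure N(μ(p), (ε²/(n·log T))·Cov(p)). Then for every convex, nonnegative, T-Lipschitz function g : ℝⁿ → [0,∞) with g(μ(p)) ≤ 2, one has ∫ g dr[p] ≤ ∫ g dp + 1/T². -/
open MeasureTheory ProbabilityTheory Real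

noncomputable section

/-- A nonnegative function `g` is log-concave if it satisfies the pointwise
multiplicative concavity inequality (equivalently, `g = exp` of a concave
function, with the value `0 = exp (-∞)` allowed). -/
def IsLogConcave {E : Type*} [AddCommMonoid E] [SMul ℝ E] (g : E → ℝ) : Prop :=
  (∀ x, 0 ≤ g x) ∧
    ∀ x y : E, ∀ a b : ℝ, 0 ≤ a → 0 ≤ b → a + b = 1 →
      g x ^ a * g y ^ b ≤ g (a • x + b • y)

/-- A density `p` is `ε`-approximately log-concave if there is a log-concave
function `g` with `ε • g ≤ p ≤ (1/ε) • g` pointwise. -/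
def ApproxLogConcave {E : Type*} [AddCommMonoid E] [SMul ℝ E] (ε : ℝ) (p : E → ℝ) : Prop :=
  ∃ g : E → ℝ, IsLogConcave g ∧ ∀ x, ε * g x ≤ p x ∧ p x ≤ (1 / ε) * g x

/-- Mean (barycenter) of the probability density `p` on `ℝⁿ`. -/
def densMean (n : ℕ) (p : EuclideanSpace ℝ (Fin n) → ℝ) : EuclideanSpace ℝ (Fin n) :=
  ∫ x, p x • x

/-- Covariance matrix of the probability density `p` on `ℝⁿ`. -/
def densCov (n : ℕ) (p : EuclideanSpace ℝ (Fin n) → ℝ) : Matrix (Fin n) (Fin n) ℝ :=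
  Matrix.of fun i j => ∫ x, p x * ((x i - densMean n p i) * (x j - densMean n p j))

/-- The (Mahalanobis-type) norm `‖x‖_A = √(xᵀ A x)` associated with a matrix `A`. -/
def mahal (n : ℕ) (A : Matrix (Fin n) (Fin n) ℝ) (x : EuclideanSpace ℝ (Fin n)) : ℝ :=
  Real.sqrt (∑ i, ∑ j, x i * A i j * x j)

/-- Density of the Gaussian measure `N(μ, S)` on `ℝⁿ`. -/
def gaussPdf (n : ℕ) (μ : EuclideanSpace ℝ (Fin n)) (S : Matrix (Fin n) (Fin n) ℝ)
    (x : EuclideanSpace ℝ (Fin n)) : ℝ :=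
  (2 * π) ^ (-(n : ℝ) / 2) * S.det ^ (-(1 : ℝ) / 2) *
    Real.exp (-(1 / 2) * ∑ i, ∑ j, (x i - μ i) * S⁻¹ i j * (x j - μ j))

/-
Write `m` and `Σ` for the mean and covariance of `p`. By the Prékopa–Leindler inequality a
log-concave density defines a log-concave measure, so by Borell's lemma a seminorm has exponential
tails and satisfies reverse Hölder inequalities; both survive a bounded change of density. In
particular `∫ ⟪u, y - m⟫² p ≤ C (∫ |⟪u, y - m⟫| p)²` for every vector `u`.

Let `g` be convex with subgradient `v` at `m`, and let `x` be close to `m` in the metric `Σ⁻¹`. If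
`w` is a subgradient at `x`, then `g` dominates two affine functions with slopes `v` and `w` that
agree at `m`, so `∫ g p` exceeds their common value by half of `∫ |⟪w - v, y - m⟫| p`, which by
Cauchy–Schwarz and reverse Hölder is at least `⟪w - v, x - m⟫`. Hence
`g x ≤ ⟪v, x - m⟫ + ∫ g p`, and the linear term has Gaussian mean zero. Far from `m`, the Gaussian
with covariance `s Σ` has so little mass that the Lipschitz bound on `g` suffices.
-/

open scoped ENNReal NNReal Pointwise

section PrekopaLeindler

lemma volume_add_volume_le_of_isCompact {K L C : Set ℝ} (hK : IsCompact K) (hL : IsCompact L)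
    (hK' : K.Nonempty) (hL' : L.Nonempty) (hC : ∀ x ∈ K, ∀ y ∈ L, x + y ∈ C) :
    volume K + volume L ≤ volume C := by
  obtain ⟨k, hk, hk_max⟩ := hK.exists_isGreatest hK'
  obtain ⟨l, hl, hl_min⟩ := hL.exists_isLeast hL'
  have hdisj : AEDisjoint volume ((fun x => x + l) '' K) ((fun y => k + y) '' L) := by
    refine measure_mono_null (t := {k + l}) ?_ (by simp)
    rintro _ ⟨⟨x, hx, rfl⟩, ⟨y, hy, hxy⟩⟩
    have hxk : x ≤ k := hk_max hx
    have hly : l ≤ y := hl_min hy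
    rw [Set.mem_singleton_iff]
    linarith
  have hmeas : MeasurableSet ((fun y => k + y) '' L) :=
    (hL.image (by fun_prop)).measurableSet
  calc volume K + volume L
      = volume ((fun x => x + l) '' K) + volume ((fun y => k + y) '' L) := by simp
    _ = volume ((fun x => x + l) '' K ∪ (fun y => k + y) '' L) :=
        (measure_union₀ hmeas.nullMeasurableSet hdisj).symm
    _ ≤ volume C := by
        refine measure_mono ?_
        rintro _ (⟨x, hx, rfl⟩ | ⟨y, hy, rfl⟩)
        · exact hC x hx l hl
        · exact hC k hk y hy

/- A set `C` containing the sumset is used because the sumset of measurable sets need not be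
measurable. -/
lemma volume_add_volume_le_of_add_mem {A B C : Set ℝ} (hA : MeasurableSet A)
    (hB : MeasurableSet B) (hA' : A.Nonempty) (hB' : B.Nonempty)
    (hC : ∀ x ∈ A, ∀ y ∈ B, x + y ∈ C) : volume A + volume B ≤ volume C := by
  obtain ⟨a₀, ha₀⟩ := hA'
  obtain ⟨b₀, hb₀⟩ := hB'
  rw [hA.measure_eq_iSup_isCompact, hB.measure_eq_iSup_isCompact]
  simp_rw [iSup_and']
  refine ENNReal.biSup_add_biSup_le' ⟨∅, by simp⟩ ⟨∅, by simp⟩ fun K hK L hL => ?_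
  calc volume K + volume L ≤ volume (insert a₀ K) + volume (insert b₀ L) := by
        gcongr <;> exact Set.subset_insert _ _
    _ ≤ volume C :=
        volume_add_volume_le_of_isCompact (hK.2.insert _) (hL.2.insert _) (by simp) (by simp)
          fun x hx y hy => hC x (Set.insert_subset ha₀ hK.1 hx) y (Set.insert_subset hb₀ hL.1 hy)

lemma lintegral_eq_lintegral_meas_ofReal_lt {α : Type*} [MeasurableSpace α] {μ : Measure α}
    {f : α → ℝ≥0∞} (hf : Measurable f) (hf_top : ∀ x, f x ≠ ∞) :
    ∫⁻ x, f x ∂μ = ∫⁻ t in Set.Ioi (0 : ℝ), μ {x | ENNReal.ofReal t < f x} := by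
  calc ∫⁻ x, f x ∂μ = ∫⁻ x, ENNReal.ofReal (f x).toReal ∂μ := by
        simp_rw [ENNReal.ofReal_toReal (hf_top _)]
    _ = ∫⁻ t in Set.Ioi (0 : ℝ), μ {x | t < (f x).toReal} :=
        lintegral_eq_lintegral_meas_lt μ (.of_forall fun _ => ENNReal.toReal_nonneg)
          hf.ennreal_toReal.aemeasurable
    _ = ∫⁻ t in Set.Ioi (0 : ℝ), μ {x | ENNReal.ofReal t < f x} := by
        refine setLIntegral_congr_fun measurableSet_Ioi fun t ht => ?_
        simp_rw [ENNReal.ofReal_lt_iff_lt_toReal (le_of_lt ht) (hf_top _)]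

lemma lintegral_eq_iSup_lintegral_min_natCast {α : Type*} [MeasurableSpace α] {μ : Measure α}
    {f : α → ℝ≥0∞} (hf : Measurable f) :
    ∫⁻ x, f x ∂μ = ⨆ k : ℕ, ∫⁻ x, min (f x) k ∂μ := by
  rw [← lintegral_iSup (fun k => hf.min measurable_const)
    fun i j hij x => min_le_min_left _ (by exact_mod_cast hij)]
  refine lintegral_congr fun x => ?_
  rw [← inf_iSup_eq, ENNReal.iSup_natCast, inf_top_eq]

variable {a b : ℝ}

lemma rpow_mul_rpow_le_add (ha : 0 < a) (hb : 0 < b) (hab : a + b = 1) (u v : ℝ≥0∞) :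
    u ^ a * v ^ b ≤ ENNReal.ofReal a * u + ENNReal.ofReal b * v := by
  have hpq : a⁻¹.HolderConjugate b⁻¹ :=
    Real.holderConjugate_iff.mpr ⟨(one_lt_inv₀ ha).mpr (by linarith), by simpa using hab⟩
  have h := ENNReal.young_inequality (u ^ a) (v ^ b) hpq
  rw [ENNReal.rpow_rpow_inv ha.ne', ENNReal.rpow_rpow_inv hb.ne', ENNReal.ofReal_inv_of_pos ha,
    ENNReal.ofReal_inv_of_pos hb, div_eq_mul_inv, div_eq_mul_inv, inv_inv, inv_inv] at h
  rwa [mul_comm u, mul_comm v] at h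

lemma lt_rpow_mul_rpow (ha : 0 < a) (hb : 0 < b) (hab : a + b = 1) {t u v : ℝ≥0∞}
    (hu : t < u) (hv : t < v) : t < u ^ a * v ^ b :=
  calc t = t ^ a * t ^ b := by
        rw [← ENNReal.rpow_add_of_nonneg _ _ ha.le hb.le, hab, ENNReal.rpow_one]
    _ < u ^ a * v ^ b :=
        ENNReal.mul_lt_mul (ENNReal.rpow_lt_rpow hu ha) (ENNReal.rpow_lt_rpow hv hb)

lemma volume_superlevel_add_le (ha : 0 < a) (hb : 0 < b) (hab : a + b = 1)
    {f g h : ℝ → ℝ≥0∞} (hf : Measurable f) (hg : Measurable g)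
    (hfg : ∀ x y, f x ^ a * g y ^ b ≤ h (a * x + b * y)) {t : ℝ≥0∞}
    (hft : ∃ x, t < f x) (hgt : ∃ x, t < g x) :
    ENNReal.ofReal a * volume {x | t < f x} + ENNReal.ofReal b * volume {x | t < g x}
      ≤ volume {x | t < h x} := by
  have volume_smul : ∀ (c : ℝ) (s : Set ℝ), 0 < c →
      ENNReal.ofReal c * volume s = volume (c • s) := fun c s hc => by
    simp [Measure.addHaar_smul, abs_of_pos hc]
  rw [volume_smul a _ ha, volume_smul b _ hb]
  refine volume_add_volume_le_of_add_mem ((measurableSet_lt measurable_const hf).const_smul₀ a)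
    ((measurableSet_lt measurable_const hg).const_smul₀ b) (Set.Nonempty.smul_set hft)
    (Set.Nonempty.smul_set hgt) ?_
  rintro _ ⟨x, hx, rfl⟩ _ ⟨y, hy, rfl⟩
  exact (lt_rpow_mul_rpow ha hb hab hx hy).trans_le (hfg x y)

lemma prekopa_leindler_of_iSup_eq_one (ha : 0 < a) (hb : 0 < b) (hab : a + b = 1)
    {f g h : ℝ → ℝ≥0∞} (hf : Measurable f) (hg : Measurable g) (hh : Measurable h)
    (hf1 : ⨆ x, f x = 1) (hg1 : ⨆ x, g x = 1)
    (hfg : ∀ x y, f x ^ a * g y ^ b ≤ h (a * x + b * y)) :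
    (∫⁻ x, f x) ^ a * (∫⁻ x, g x) ^ b ≤ ∫⁻ x, h x := by
  have hf_le : ∀ x, f x ≤ 1 := fun x => hf1 ▸ le_iSup f x
  have hg_le : ∀ x, g x ≤ 1 := fun x => hg1 ▸ le_iSup g x
  have hfg_min : ∀ x y, f x ^ a * g y ^ b ≤ min (h (a * x + b * y)) 1 := fun x y =>
    le_min (hfg x y) (mul_le_one' (ENNReal.rpow_le_one (hf_le x) ha.le)
      (ENNReal.rpow_le_one (hg_le y) hb.le))
  have superlevel (t : ℝ) : ENNReal.ofReal a * volume {x | ENNReal.ofReal t < f x}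
      + ENNReal.ofReal b * volume {x | ENNReal.ofReal t < g x}
      ≤ volume {x | ENNReal.ofReal t < min (h x) 1} := by
    rcases lt_or_ge (ENNReal.ofReal t) 1 with ht | ht
    · exact volume_superlevel_add_le ha hb hab hf hg hfg_min
        (lt_iSup_iff.mp (ht.trans_eq hf1.symm)) (lt_iSup_iff.mp (ht.trans_eq hg1.symm))
    · have hft : {x | ENNReal.ofReal t < f x} = ∅ :=
        Set.eq_empty_of_forall_notMem fun x => not_lt.mpr ((hf_le x).trans ht)
      have hgt : {x | ENNReal.ofReal t < g x} = ∅ :=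
        Set.eq_empty_of_forall_notMem fun x => not_lt.mpr ((hg_le x).trans ht)
      simp [hft, hgt]
  have ne_top {u : ℝ → ℝ≥0∞} (hu : ∀ x, u x ≤ 1) (x : ℝ) : u x ≠ ∞ :=
    ne_top_of_le_ne_top ENNReal.one_ne_top (hu x)
  calc (∫⁻ x, f x) ^ a * (∫⁻ x, g x) ^ b
      ≤ ENNReal.ofReal a * (∫⁻ x, f x) + ENNReal.ofReal b * ∫⁻ x, g x :=
        rpow_mul_rpow_le_add ha hb hab _ _
    _ ≤ ∫⁻ t in Set.Ioi (0 : ℝ), volume {x | ENNReal.ofReal t < min (h x) 1} := by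
        rw [lintegral_eq_lintegral_meas_ofReal_lt hf (ne_top hf_le),
          lintegral_eq_lintegral_meas_ofReal_lt hg (ne_top hg_le)]
        exact (add_le_add (lintegral_const_mul_le _ _) (lintegral_const_mul_le _ _)).trans
          ((le_lintegral_add _ _).trans (lintegral_mono superlevel))
    _ = ∫⁻ x, min (h x) 1 := (lintegral_eq_lintegral_meas_ofReal_lt (hh.min measurable_const)
          (ne_top fun x => min_le_right _ _)).symm
    _ ≤ ∫⁻ x, h x := lintegral_mono fun x => min_le_left _ _

lemma prekopa_leindler_of_iSup_ne_top (ha : 0 < a) (hb : 0 < b) (hab : a + b = 1)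
    {f g h : ℝ → ℝ≥0∞} (hf : Measurable f) (hg : Measurable g) (hh : Measurable h)
    (hf_top : ⨆ x, f x ≠ ∞) (hg_top : ⨆ x, g x ≠ ∞)
    (hfg : ∀ x y, f x ^ a * g y ^ b ≤ h (a * x + b * y)) :
    (∫⁻ x, f x) ^ a * (∫⁻ x, g x) ^ b ≤ ∫⁻ x, h x := by
  rcases eq_or_ne (⨆ x, f x) 0 with hM | hM
  · simp [ENNReal.iSup_eq_zero.mp hM, ha]
  rcases eq_or_ne (⨆ x, g x) 0 with hN | hN
  · simp [ENNReal.iSup_eq_zero.mp hN, hb]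
  generalize hMdef : ⨆ x, f x = M at *
  generalize hNdef : ⨆ x, g x = N at *
  have hc_ne_zero : M ^ a * N ^ b ≠ 0 := by simp [hM, hN, hf_top, hg_top]
  have hc_ne_top : M ^ a * N ^ b ≠ ∞ :=
    ENNReal.mul_ne_top (ENNReal.rpow_ne_top_of_nonneg ha.le hf_top)
      (ENNReal.rpow_ne_top_of_nonneg hb.le hg_top)
  have normalize (u v : ℝ≥0∞) :
      (M⁻¹ * u) ^ a * (N⁻¹ * v) ^ b = (M ^ a * N ^ b)⁻¹ * (u ^ a * v ^ b) := by
    rw [ENNReal.mul_rpow_of_nonneg _ _ ha.le, ENNReal.mul_rpow_of_nonneg _ _ hb.le,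
      mul_mul_mul_comm, ENNReal.inv_rpow, ENNReal.inv_rpow,
      ← ENNReal.mul_inv (by simp [hM, hf_top]) (by simp [hN, hg_top])]
  have key := prekopa_leindler_of_iSup_eq_one (f := fun x => M⁻¹ * f x) (g := fun x => N⁻¹ * g x)
    (h := fun x => (M ^ a * N ^ b)⁻¹ * h x) ha hb hab (hf.const_mul _) (hg.const_mul _)
    (hh.const_mul _) (by rw [← ENNReal.mul_iSup, hMdef, ENNReal.inv_mul_cancel hM hf_top])
    (by rw [← ENNReal.mul_iSup, hNdef, ENNReal.inv_mul_cancel hN hg_top])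
    fun x y => (normalize _ _).trans_le (mul_le_mul_right (hfg x y) _)
  rw [lintegral_const_mul _ hf, lintegral_const_mul _ hg, lintegral_const_mul _ hh,
    normalize] at key
  exact (ENNReal.mul_le_mul_iff_right (ENNReal.inv_ne_zero.mpr hc_ne_top)
    (ENNReal.inv_ne_top.mpr hc_ne_zero)).mp key

lemma prekopa_leindler_real (ha : 0 < a) (hb : 0 < b) (hab : a + b = 1)
    {f g h : ℝ → ℝ≥0∞} (hf : Measurable f) (hg : Measurable g) (hh : Measurable h)
    (hfg : ∀ x y, f x ^ a * g y ^ b ≤ h (a * x + b * y)) :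
    (∫⁻ x, f x) ^ a * (∫⁻ x, g x) ^ b ≤ ∫⁻ x, h x := by
  have iSup_rpow (c : ℝ) (hc : 0 < c) (u : ℕ → ℝ≥0∞) : (⨆ k, u k) ^ c = ⨆ k, u k ^ c :=
    (ENNReal.orderIsoRpow c hc).map_iSup u
  have iSup_min_ne_top (u : ℝ → ℝ≥0∞) (k : ℕ) : ⨆ x, min (u x) k ≠ ∞ :=
    ne_top_of_le_ne_top (ENNReal.natCast_ne_top k) (iSup_le fun x => min_le_right _ _)
  rw [lintegral_eq_iSup_lintegral_min_natCast hf, lintegral_eq_iSup_lintegral_min_natCast hg,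
    iSup_rpow a ha, iSup_rpow b hb, ENNReal.iSup_mul]
  refine iSup_le fun k => ?_
  rw [ENNReal.mul_iSup]
  refine iSup_le fun l => ?_
  refine prekopa_leindler_of_iSup_ne_top ha hb hab (hf.min measurable_const)
    (hg.min measurable_const) hh (iSup_min_ne_top f k) (iSup_min_ne_top g l)
    fun x y => le_trans ?_ (hfg x y)
  gcongr
  · exact min_le_left _ _
  · exact min_le_left _ _

lemma prekopa_leindler_lmarginal (ha : 0 < a) (hb : 0 < b) (hab : a + b = 1)
    {ι : Type*} [DecidableEq ι] {f g h : (ι → ℝ) → ℝ≥0∞} (hf : Measurable f) (hg : Measurable g)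
    (hh : Measurable h) (hfg : ∀ x y, f x ^ a * g y ^ b ≤ h (a • x + b • y)) (s : Finset ι)
    (x y : ι → ℝ) :
    lmarginal (fun _ => volume) s f x ^ a * lmarginal (fun _ => volume) s g y ^ b
      ≤ lmarginal (fun _ => volume) s h (a • x + b • y) := by
  induction s using Finset.induction generalizing x y with
  | empty => simpa using hfg x y
  | insert i s his ih =>
    have measurable_update {u : (ι → ℝ) → ℝ≥0∞} (hu : Measurable u) (z : ι → ℝ) :
        Measurable fun t => lmarginal (fun _ => volume) s u (Function.update z i t) :=
      (hu.lmarginal _).comp (measurable_update z)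
    rw [lmarginal_insert _ hf his, lmarginal_insert _ hg his, lmarginal_insert _ hh his]
    refine prekopa_leindler_real ha hb hab (measurable_update hf x) (measurable_update hg y)
      (measurable_update hh _) fun t u => (ih _ _).trans_eq (congrArg _ ?_)
    ext j
    rcases eq_or_ne j i with rfl | hj
    · simp
    · simp [hj]

theorem prekopa_leindler (ha : 0 < a) (hb : 0 < b) (hab : a + b = 1)
    {E : Type*} [NormedAddCommGroup E] [InnerProductSpace ℝ E] [FiniteDimensional ℝ E]
    [MeasurableSpace E] [BorelSpace E] {f g h : E → ℝ≥0∞}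
    (hf : Measurable f) (hg : Measurable g) (hh : Measurable h)
    (hfg : ∀ x y, f x ^ a * g y ^ b ≤ h (a • x + b • y)) :
    (∫⁻ x, f x) ^ a * (∫⁻ x, g x) ^ b ≤ ∫⁻ x, h x := by
  let e := stdOrthonormalBasis ℝ E
  let φ : (Fin (Module.finrank ℝ E) → ℝ) → E := fun v => e.repr.symm (WithLp.toLp 2 v)
  have hφ : MeasurePreserving φ :=
    e.measurePreserving_repr_symm.comp (PiLp.volume_preserving_toLp _)
  have lintegral_comp {u : E → ℝ≥0∞} (hu : Measurable u) :
      ∫⁻ x, u x = lmarginal (fun _ => volume) Finset.univ (u ∘ φ) 0 := by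
    rw [lmarginal_univ]
    exact (hφ.lintegral_comp hu).symm
  rw [lintegral_comp hf, lintegral_comp hg, lintegral_comp hh]
  have hφ_comb (v w) : a • φ v + b • φ w = φ (a • v + b • w) := by simp [φ]
  refine (prekopa_leindler_lmarginal ha hb hab (hf.comp hφ.measurable) (hg.comp hφ.measurable)
    (hh.comp hφ.measurable) (fun v w => ?_) Finset.univ 0 0).trans_eq (by simp)
  exact (hfg (φ v) (φ w)).trans_eq (congrArg h (hφ_comb v w))

end PrekopaLeindler

section LogConcaveMeasure

variable {E : Type*}

/-- A measure `ν` is log-concave if `ν (a A + b B) ≥ ν(A)^a ν(B)^b` for `a + b = 1`. As for the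
Brunn–Minkowski inequality, `a A + b B` is replaced by a measurable set containing it. -/
def IsLogConcaveMeasure [AddCommMonoid E] [SMul ℝ E] [MeasurableSpace E] (ν : Measure E) : Prop :=
  ∀ ⦃A B C : Set E⦄, MeasurableSet A → MeasurableSet B → MeasurableSet C →
    ∀ ⦃a b : ℝ⦄, 0 < a → 0 < b → a + b = 1 → (∀ x ∈ A, ∀ y ∈ B, a • x + b • y ∈ C) →
      ν A ^ a * ν B ^ b ≤ ν C

namespace IsLogConcave

lemma indicator [AddCommMonoid E] [Module ℝ E] {f : E → ℝ} (hf : IsLogConcave f) {s : Set E}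
    (hs : Convex ℝ s) : IsLogConcave (s.indicator f) := by
  have nonneg : ∀ x, 0 ≤ s.indicator f x := Set.indicator_nonneg fun x _ => hf.1 x
  refine ⟨nonneg, fun x y a b ha hb hab => ?_⟩
  rcases ha.eq_or_lt with rfl | ha'
  · obtain rfl : b = 1 := by linarith
    simp
  rcases hb.eq_or_lt with rfl | hb'
  · obtain rfl : a = 1 := by linarith
    simp
  by_cases hx : x ∈ s
  · by_cases hy : y ∈ s
    · rw [Set.indicator_of_mem hx, Set.indicator_of_mem hy,
        Set.indicator_of_mem (hs hx hy ha hb hab)]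
      exact hf.2 x y a b ha hb hab
    · rw [Set.indicator_of_notMem hy, Real.zero_rpow hb'.ne', mul_zero]
      exact nonneg _
  · rw [Set.indicator_of_notMem hx, Real.zero_rpow ha'.ne', zero_mul]
    exact nonneg _

lemma concaveOn_log [AddCommMonoid E] [Module ℝ E] {f : E → ℝ} (hf : IsLogConcave f) :
    ConcaveOn ℝ {x | 0 < f x} fun x => Real.log (f x) := by
  refine ⟨fun x (hx : 0 < f x) y (hy : 0 < f y) a b ha hb hab => ?_,
    fun x (hx : 0 < f x) y (hy : 0 < f y) a b ha hb hab => ?_⟩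
  · exact lt_of_lt_of_le (by positivity) (hf.2 x y a b ha hb hab)
  · have h := Real.log_le_log (by positivity) (hf.2 x y a b ha hb hab)
    rwa [Real.log_mul (by positivity) (by positivity), Real.log_rpow hx, Real.log_rpow hy] at h

variable [NormedAddCommGroup E] [NormedSpace ℝ E] [FiniteDimensional ℝ E]

lemma continuousOn_interior {f : E → ℝ} (hf : IsLogConcave f) :
    ContinuousOn f (interior {x | 0 < f x}) := by
  refine (Real.continuous_exp.comp_continuousOn hf.concaveOn_log.continuousOn_interior).congr
    fun x hx => ?_
  have hfx : x ∈ {x | 0 < f x} := interior_subset hx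
  exact (Real.exp_log hfx).symm

variable [MeasurableSpace E] [BorelSpace E]

lemma measurable_indicator_interior {f : E → ℝ} (hf : IsLogConcave f) :
    Measurable ((interior {x | 0 < f x}).indicator f) := by
  classical
  rw [← Set.piecewise_eq_indicator]
  exact hf.continuousOn_interior.measurable_piecewise continuousOn_const
    (isOpen_interior (s := {x | 0 < f x})).measurableSet

lemma indicator_interior_ae_eq {f : E → ℝ} (hf : IsLogConcave f) (ν : Measure E)
    [ν.IsAddHaarMeasure] : (interior {x | 0 < f x}).indicator f =ᵐ[ν] f := by
  have hfrontier : ∀ᵐ x ∂ν, x ∉ frontier {x | 0 < f x} := by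
    rw [ae_iff]
    simpa using hf.concaveOn_log.1.addHaar_frontier ν
  filter_upwards [hfrontier] with x hx
  by_cases hxi : x ∈ interior {x | 0 < f x}
  · rw [Set.indicator_of_mem hxi]
  · rw [Set.indicator_of_notMem hxi]
    have hfx : ¬ 0 < f x := fun h => hx ⟨subset_closure h, hxi⟩
    exact le_antisymm (hf.1 x) (not_lt.mp hfx)

end IsLogConcave

variable [NormedAddCommGroup E] [InnerProductSpace ℝ E] [FiniteDimensional ℝ E]
  [MeasurableSpace E] [BorelSpace E] {f : E → ℝ}

namespace IsLogConcave

lemma withDensity_of_measurable (hf : IsLogConcave f) (hf_meas : Measurable f) :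
    IsLogConcaveMeasure (volume.withDensity fun x => ENNReal.ofReal (f x)) := by
  intro A B C hA hB hC a b ha hb hab hABC
  simp only [withDensity_apply _ hA, withDensity_apply _ hB, withDensity_apply _ hC,
    ← lintegral_indicator hA, ← lintegral_indicator hB, ← lintegral_indicator hC]
  have measurable {s : Set E} (hs : MeasurableSet s) :
      Measurable (s.indicator fun x => ENNReal.ofReal (f x)) :=
    hf_meas.ennreal_ofReal.indicator hs
  refine prekopa_leindler ha hb hab (measurable hA) (measurable hB) (measurable hC) fun x y => ?_
  by_cases hx : x ∈ A
  · by_cases hy : y ∈ B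
    · rw [Set.indicator_of_mem hx, Set.indicator_of_mem hy,
        Set.indicator_of_mem (hABC x hx y hy), ENNReal.ofReal_rpow_of_nonneg (hf.1 x) ha.le,
        ENNReal.ofReal_rpow_of_nonneg (hf.1 y) hb.le,
        ← ENNReal.ofReal_mul (Real.rpow_nonneg (hf.1 x) a)]
      exact ENNReal.ofReal_le_ofReal (hf.2 x y a b ha.le hb.le hab)
    · simp [Set.indicator_of_notMem hy, hb]
  · simp [Set.indicator_of_notMem hx, ha]

theorem isLogConcaveMeasure_withDensity (hf : IsLogConcave f) :
    IsLogConcaveMeasure (volume.withDensity fun x => ENNReal.ofReal (f x)) := by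
  have h_ae : (fun x => ENNReal.ofReal ((interior {x | 0 < f x}).indicator f x))
      =ᵐ[volume] fun x => ENNReal.ofReal (f x) :=
    (hf.indicator_interior_ae_eq volume).fun_comp ENNReal.ofReal
  rw [← withDensity_congr_ae h_ae]
  exact (hf.indicator hf.concaveOn_log.1.interior).withDensity_of_measurable
    hf.measurable_indicator_interior

end IsLogConcave

end LogConcaveMeasure

section ReverseHolder

lemma mul_measure_lt_le_measure_le {Ω : Type*} [MeasurableSpace Ω] {P : Measure Ω}
    [IsProbabilityMeasure P] {f : Ω → ℝ} (hf : Measurable f) {M : ℝ} (hM : 0 < M)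
    (hfM : ∫⁻ x, ENNReal.ofReal (f x) ∂P ≤ ENNReal.ofReal M) (k : ℝ≥0) :
    k * P {x | (1 + k) * M < f x} ≤ P {x | f x ≤ (1 + k) * M} := by
  set s := {x | (1 + k) * M < f x} with hs
  have hs_meas : MeasurableSet s := measurableSet_lt measurable_const hf
  have hs_compl : {x | f x ≤ (1 + k) * M} = sᶜ := by
    ext x
    simp [hs]
  have markov : P s + k * P s ≤ P s + P sᶜ := by
    have hM_ne_zero : ENNReal.ofReal M ≠ 0 := by simpa using hM
    rw [prob_add_prob_compl hs_meas, ← one_add_mul,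
      ← ENNReal.mul_le_mul_iff_right hM_ne_zero ENNReal.ofReal_ne_top]
    calc ENNReal.ofReal M * ((1 + k) * P s)
        = ENNReal.ofReal ((1 + k) * M) * P s := by
          rw [ENNReal.ofReal_mul (by positivity), ENNReal.ofReal_add zero_le_one k.coe_nonneg,
            ENNReal.ofReal_one, ENNReal.ofReal_coe_nnreal]
          ring
      _ ≤ ENNReal.ofReal ((1 + k) * M) *
            P {x | ENNReal.ofReal ((1 + k) * M) ≤ ENNReal.ofReal (f x)} := by
          refine mul_le_mul_right (measure_mono fun x hx => ?_) _
          exact ENNReal.ofReal_le_ofReal (le_of_lt hx)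
      _ ≤ ENNReal.ofReal M * 1 := by
          rw [mul_one]
          exact (mul_meas_ge_le_lintegral hf.ennreal_ofReal _).trans hfM
  rw [hs_compl]
  exact (ENNReal.add_le_add_iff_left (measure_ne_top _ _)).mp markov

lemma lintegral_rpow_le_of_exp_tail {Ω : Type*} [MeasurableSpace Ω] {μ : Measure Ω} {f : Ω → ℝ}
    (hf : Measurable f) (hf_nonneg : ∀ x, 0 ≤ f x) {r τ : ℝ} (hr : 0 < r) (hτ : 0 < τ)
    {k : ℝ≥0∞} (tail : ∀ t, 0 < t → μ {x | t < f x} ≤ k * ENNReal.ofReal (exp (-(τ⁻¹ * t)))) :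
    ∫⁻ x, ENNReal.ofReal (f x ^ r) ∂μ ≤ k * ENNReal.ofReal (Gamma (r + 1) * τ ^ r) := by
  have moment : ∫⁻ t in Set.Ioi 0, ENNReal.ofReal (t ^ (r - 1) * exp (-(τ⁻¹ * t)))
      = ENNReal.ofReal (τ ^ r * Gamma r) := by
    have h := Real.integral_rpow_mul_exp_neg_mul_Ioi hr (inv_pos.mpr hτ)
    rw [one_div, inv_inv] at h
    have h_pos : 0 < τ ^ r * Gamma r := mul_pos (rpow_pos_of_pos hτ r) (Gamma_pos_of_pos hr)
    rw [← h]
    refine (ofReal_integral_eq_lintegral_ofReal (.of_integral_ne_zero (by rw [h]; exact h_pos.ne'))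
      ?_).symm
    exact (ae_restrict_iff' measurableSet_Ioi).mpr (.of_forall fun t ht =>
      mul_nonneg (rpow_nonneg (le_of_lt ht) _) (exp_nonneg _))
  calc ∫⁻ x, ENNReal.ofReal (f x ^ r) ∂μ
      = ENNReal.ofReal r *
          ∫⁻ t in Set.Ioi 0, μ {x | t < f x} * ENNReal.ofReal (t ^ (r - 1)) :=
        lintegral_rpow_eq_lintegral_meas_lt_mul μ (.of_forall hf_nonneg) hf.aemeasurable hr
    _ ≤ ENNReal.ofReal r *
          ∫⁻ t in Set.Ioi 0, k * ENNReal.ofReal (t ^ (r - 1) * exp (-(τ⁻¹ * t))) := by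
        gcongr 1
        refine setLIntegral_mono' measurableSet_Ioi fun t ht => ?_
        rw [mul_comm (t ^ (r - 1)), ENNReal.ofReal_mul (exp_nonneg _), ← mul_assoc]
        gcongr
        exact tail t ht
    _ = k * ENNReal.ofReal (Gamma (r + 1) * τ ^ r) := by
        rw [lintegral_const_mul _ (by fun_prop), moment, mul_left_comm,
          ← ENNReal.ofReal_mul hr.le, Gamma_add_one hr.ne']
        ring_nf

lemma one_le_sq_of_le_smul {Ω : Type*} [MeasurableSpace Ω] {P ν : Measure Ω}
    [IsProbabilityMeasure P] {c : ℝ≥0} (hPν : P ≤ c • ν) (hνP : ν ≤ c • P) : 1 ≤ c ^ 2 := by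
  have h : (1 : ℝ≥0∞) ≤ c ^ 2 :=
    calc 1 = P Set.univ := measure_univ.symm
      _ ≤ c * (c * P Set.univ) := (hPν _).trans (mul_le_mul_right (hνP _) _)
      _ = c ^ 2 := by rw [measure_univ, mul_one, sq]
  exact_mod_cast h

variable {E : Type*} [AddCommGroup E] [Module ℝ E] {q : Seminorm ℝ E} {m : E}

lemma lt_seminorm_combo_sub {x y : E} {t τ : ℝ} (ht : 1 < t) (hx : t * τ < q (x - m))
    (hy : q (y - m) ≤ τ) : τ < q ((2 / (t + 1)) • x + ((t - 1) / (t + 1)) • y - m) := by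
  have ht' : 0 < t + 1 := by linarith
  have hb : 0 ≤ (t - 1) / (t + 1) := div_nonneg (by linarith) ht'.le
  have hab : (t - 1) / (t + 1) = 1 - 2 / (t + 1) := by field_simp; ring
  have hsplit : (2 / (t + 1)) • (x - m) = ((2 / (t + 1)) • x + ((t - 1) / (t + 1)) • y - m)
      - ((t - 1) / (t + 1)) • (y - m) := by
    rw [hab]
    module
  have htri := map_sub_le_add q ((2 / (t + 1)) • x + ((t - 1) / (t + 1)) • y - m)
    (((t - 1) / (t + 1)) • (y - m))
  rw [← hsplit, map_smul_eq_mul, map_smul_eq_mul, Real.norm_of_nonneg (by positivity),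
    Real.norm_of_nonneg hb] at htri
  calc τ = 2 / (t + 1) * (t * τ) - (t - 1) / (t + 1) * τ := by field_simp; ring
    _ < 2 / (t + 1) * q (x - m) - (t - 1) / (t + 1) * q (y - m) := by
        have hx' := mul_lt_mul_of_pos_left hx (show 0 < 2 / (t + 1) by positivity)
        have hy' := mul_le_mul_of_nonneg_left hy hb
        linarith
    _ ≤ q ((2 / (t + 1)) • x + ((t - 1) / (t + 1)) • y - m) := by linarith

/-- The constant `C` in the reverse Hölder inequality `∫ q ^ r dP ≤ C (∫ q dP) ^ r`, for a
probability measure `P` which is within a factor `c` of a log-concave measure. -/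
def reverseHolderConst (c r : ℝ) : ℝ :=
  exp 1 * c ^ 2 * (Gamma (r + 1) * (1 + exp 2 * c ^ 2) ^ r)

lemma reverseHolderConst_pos {c r : ℝ} (hc : c ≠ 0) (hr : 0 < r) : 0 < reverseHolderConst c r := by
  have := Gamma_pos_of_pos (show 0 < r + 1 by linarith)
  unfold reverseHolderConst
  positivity

namespace IsLogConcaveMeasure

variable [MeasurableSpace E] {ν : Measure E}

/-- Borell's lemma: a point of `{q ≤ τ}` and a point of `{t τ < q}` have a convex combination,
with weights independent of the points, in `{τ < q}`. -/
lemma rpow_mul_rpow_le (hν : IsLogConcaveMeasure ν) (hq : Measurable fun x => q (x - m))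
    {t : ℝ} (ht : 1 < t) (τ : ℝ) :
    ν {x | t * τ < q (x - m)} ^ (2 / (t + 1)) * ν {x | q (x - m) ≤ τ} ^ ((t - 1) / (t + 1))
      ≤ ν {x | τ < q (x - m)} := by
  refine hν (measurableSet_lt measurable_const hq) (measurableSet_le hq measurable_const)
    (measurableSet_lt measurable_const hq) (by positivity) (div_pos (by linarith) (by linarith))
    (by field_simp; ring) fun x hx y hy => ?_
  exact lt_seminorm_combo_sub ht hx hy

lemma measure_mul_lt_le (hν : IsLogConcaveMeasure ν) (hq : Measurable fun x => q (x - m))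
    {τ : ℝ} (hτ : 0 ≤ τ) (h_fin : ν {x | q (x - m) ≤ τ} ≠ ∞)
    (h_exp : ENNReal.ofReal (exp 2) * ν {x | τ < q (x - m)} ≤ ν {x | q (x - m) ≤ τ})
    {t : ℝ} (ht : 1 < t) :
    ν {x | t * τ < q (x - m)} ≤ ENNReal.ofReal (exp (-(t + 1))) * ν {x | q (x - m) ≤ τ} := by
  set b := ν {x | q (x - m) ≤ τ}
  have : 0 < t + 1 := by linarith
  have h_outer : ν {x | τ < q (x - m)} ≤ ENNReal.ofReal (exp (-2)) * b := by
    rw [exp_neg, ENNReal.ofReal_inv_of_pos (exp_pos 2), mul_comm, ← div_eq_mul_inv]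
    rwa [ENNReal.le_div_iff_mul_le (by simp [exp_pos]) (by simp), mul_comm]
  rcases eq_or_ne b 0 with hb | hb
  · rw [hb, mul_zero] at h_outer ⊢
    have h_sub : {x | t * τ < q (x - m)} ⊆ {x | τ < q (x - m)} := fun x hx =>
      lt_of_le_of_lt (le_mul_of_one_le_left hτ ht.le) hx
    exact (measure_mono h_sub).trans h_outer
  have hweights : 2 / (t + 1) + (t - 1) / (t + 1) = 1 := by field_simp; ring
  have borell : ν {x | t * τ < q (x - m)} ^ (2 / (t + 1)) * b ^ ((t - 1) / (t + 1))
      ≤ ENNReal.ofReal (exp (-2)) * b ^ (2 / (t + 1)) * b ^ ((t - 1) / (t + 1)) := by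
    rw [mul_assoc, ← ENNReal.rpow_add _ _ hb h_fin, hweights, ENNReal.rpow_one]
    exact (hν.rpow_mul_rpow_le hq ht τ).trans h_outer
  rw [ENNReal.mul_le_mul_iff_left (by simp [hb, h_fin]) (by simp [hb, h_fin])] at borell
  rw [← ENNReal.rpow_le_rpow_iff (z := 2 / (t + 1)) (by positivity),
    ENNReal.mul_rpow_of_nonneg _ _ (by positivity),
    ENNReal.ofReal_rpow_of_nonneg (exp_nonneg _) (by positivity), ← exp_mul]
  convert borell using 4
  field_simp

variable {P : Measure E} [IsProbabilityMeasure P] {c : ℝ≥0}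

lemma measure_mul_lt_le_exp (hν : IsLogConcaveMeasure ν) (hPν : P ≤ c • ν) (hνP : ν ≤ c • P)
    (hq : Measurable fun x => q (x - m)) {τ : ℝ} (hτ : 0 ≤ τ)
    (h_outer : ENNReal.ofReal (exp 2) * c ^ 2 * P {x | τ < q (x - m)} ≤ P {x | q (x - m) ≤ τ})
    (t : ℝ) :
    P {x | t * τ < q (x - m)} ≤ ENNReal.ofReal (exp 1) * c ^ 2 * ENNReal.ofReal (exp (-t)) := by
  have hP (s : Set E) : P s ≤ c * ν s := hPν s
  have hν_le (s : Set E) : ν s ≤ c * P s := hνP s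
  have one_le : (1 : ℝ≥0∞) ≤ c ^ 2 := by exact_mod_cast one_le_sq_of_le_smul hPν hνP
  rcases le_or_gt t 1 with ht | ht
  · calc P {x | t * τ < q (x - m)} ≤ 1 * 1 := prob_le_one.trans_eq (one_mul 1).symm
      _ ≤ c ^ 2 * ENNReal.ofReal (exp 1 * exp (-t)) := by
          gcongr
          rw [← exp_add, ENNReal.one_le_ofReal]
          exact one_le_exp (by linarith)
      _ = ENNReal.ofReal (exp 1) * c ^ 2 * ENNReal.ofReal (exp (-t)) := by
          rw [ENNReal.ofReal_mul (exp_nonneg _)]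
          ring
  have c_ne_zero : (c : ℝ≥0∞) ≠ 0 := by
    rintro h
    simp [h] at one_le
  have hν_outer : ENNReal.ofReal (exp 2) * ν {x | τ < q (x - m)} ≤ ν {x | q (x - m) ≤ τ} := by
    rw [← ENNReal.mul_le_mul_iff_right c_ne_zero ENNReal.coe_ne_top]
    calc c * (ENNReal.ofReal (exp 2) * ν {x | τ < q (x - m)})
        ≤ c * (ENNReal.ofReal (exp 2) * (c * P {x | τ < q (x - m)})) := by
          gcongr
          exact hν_le _
      _ = ENNReal.ofReal (exp 2) * c ^ 2 * P {x | τ < q (x - m)} := by ring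
      _ ≤ c * ν {x | q (x - m) ≤ τ} := h_outer.trans (hP _)
  have hν_fin : ν {x | q (x - m) ≤ τ} ≠ ∞ :=
    ne_top_of_le_ne_top (ENNReal.mul_ne_top ENNReal.coe_ne_top (measure_ne_top P _)) (hν_le _)
  calc P {x | t * τ < q (x - m)}
      ≤ c * (ENNReal.ofReal (exp (-(t + 1))) * (c * 1)) := by
        refine (hP _).trans (mul_le_mul_right ?_ _)
        refine (hν.measure_mul_lt_le hq hτ hν_fin hν_outer ht).trans (mul_le_mul_right ?_ _)
        exact (hν_le _).trans (mul_le_mul_right prob_le_one _)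
    _ = ENNReal.ofReal (exp (-(t + 1))) * c ^ 2 := by ring
    _ ≤ ENNReal.ofReal (exp 1 * exp (-t)) * c ^ 2 := by
        rw [← exp_add]
        gcongr
        linarith
    _ = ENNReal.ofReal (exp 1) * c ^ 2 * ENNReal.ofReal (exp (-t)) := by
        rw [ENNReal.ofReal_mul (exp_nonneg _)]
        ring

lemma lintegral_rpow_le_of_lintegral_le (hν : IsLogConcaveMeasure ν) (hPν : P ≤ c • ν)
    (hνP : ν ≤ c • P) (hq : Measurable fun x => q (x - m)) {r M : ℝ} (hr : 0 < r) (hM : 0 < M)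
    (hqM : ∫⁻ x, ENNReal.ofReal (q (x - m)) ∂P ≤ ENNReal.ofReal M) :
    ∫⁻ x, ENNReal.ofReal (q (x - m) ^ r) ∂P ≤ ENNReal.ofReal (reverseHolderConst c r * M ^ r) := by
  have hτ : 0 < (1 + exp 2 * c ^ 2) * M := by positivity
  have h_outer : ENNReal.ofReal (exp 2) * c ^ 2 * P {x | (1 + exp 2 * c ^ 2) * M < q (x - m)}
      ≤ P {x | q (x - m) ≤ (1 + exp 2 * c ^ 2) * M} := by
    have h := mul_measure_lt_le_measure_le hq hM hqM ((exp 2).toNNReal * c ^ 2)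
    push_cast [Real.coe_toNNReal _ (exp_nonneg 2)] at h
    exact h
  have tail (t : ℝ) : P {x | t < q (x - m)} ≤ ENNReal.ofReal (exp 1) * c ^ 2 *
      ENNReal.ofReal (exp (-(((1 + exp 2 * c ^ 2) * M)⁻¹ * t))) := by
    have h := hν.measure_mul_lt_le_exp hPν hνP hq hτ.le h_outer (((1 + exp 2 * c ^ 2) * M)⁻¹ * t)
    rwa [mul_right_comm, inv_mul_cancel₀ hτ.ne', one_mul] at h
  refine (lintegral_rpow_le_of_exp_tail hq (fun x => apply_nonneg q _) hr hτ
    fun t _ => tail t).trans_eq ?_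
  rw [← ENNReal.ofReal_coe_nnreal, ← ENNReal.ofReal_pow c.coe_nonneg,
    ← ENNReal.ofReal_mul (exp_nonneg _), ← ENNReal.ofReal_mul (by positivity),
    mul_rpow (by positivity) hM.le, reverseHolderConst]
  ring_nf

theorem lintegral_rpow_le (hν : IsLogConcaveMeasure ν) (hPν : P ≤ c • ν) (hνP : ν ≤ c • P)
    (hq : Measurable fun x => q (x - m)) {r : ℝ} (hr : 0 < r) :
    ∫⁻ x, ENNReal.ofReal (q (x - m) ^ r) ∂P
      ≤ ENNReal.ofReal (reverseHolderConst c r) * (∫⁻ x, ENNReal.ofReal (q (x - m)) ∂P) ^ r := by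
  set I := ∫⁻ x, ENNReal.ofReal (q (x - m)) ∂P
  have hc : c ≠ 0 := by
    rintro rfl
    simpa using one_le_sq_of_le_smul hPν hνP
  have hC : 0 < reverseHolderConst c r := reverseHolderConst_pos (NNReal.coe_ne_zero.mpr hc) hr
  rcases eq_or_ne I 0 with hI0 | hI0
  · have h_ae := (lintegral_eq_zero_iff hq.ennreal_ofReal).mp hI0
    have h_zero : ∫⁻ x, ENNReal.ofReal (q (x - m) ^ r) ∂P = 0 := by
      refine (lintegral_congr_ae (g := 0) (h_ae.mono fun x hx => ?_)).trans lintegral_zero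
      have hqx : q (x - m) = 0 :=
        le_antisymm (ENNReal.ofReal_eq_zero.mp hx) (apply_nonneg q _)
      simp [hqx, zero_rpow hr.ne']
    rw [h_zero]
    exact bot_le
  rcases eq_or_ne I ∞ with hI_top | hI_top
  · simp [hI_top, hr, ENNReal.mul_top, hC]
  have hM : 0 < I.toReal := ENNReal.toReal_pos hI0 hI_top
  have hqM : I ≤ ENNReal.ofReal I.toReal := (ENNReal.ofReal_toReal hI_top).ge
  refine (hν.lintegral_rpow_le_of_lintegral_le hPν hνP hq hr hM hqM).trans_eq ?_
  rw [ENNReal.ofReal_mul hC.le, ← ENNReal.ofReal_rpow_of_pos hM, ENNReal.ofReal_toReal hI_top]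

end IsLogConcaveMeasure

end ReverseHolder

section Density

variable {E : Type*} [NormedAddCommGroup E] [InnerProductSpace ℝ E] [FiniteDimensional ℝ E]
  [MeasurableSpace E] [BorelSpace E] {K : Set E} {p : E → ℝ} {c : ℝ}

lemma ApproxLogConcave.exists_isLogConcaveMeasure (hp : ApproxLogConcave c p) (hc : 0 < c) :
    ∃ ν : Measure E, IsLogConcaveMeasure ν ∧
      (volume.withDensity fun x => ENNReal.ofReal (p x)) ≤ c⁻¹.toNNReal • ν ∧
      ν ≤ c⁻¹.toNNReal • volume.withDensity fun x => ENNReal.ofReal (p x) := by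
  obtain ⟨f, hf, hfp⟩ := hp
  have h_mono : ∀ {u v : E → ℝ}, (∀ x, u x ≤ c⁻¹ * v x) →
      (volume.withDensity fun x => ENNReal.ofReal (u x)) ≤
        c⁻¹.toNNReal • volume.withDensity fun x => ENNReal.ofReal (v x) := by
    intro u v huv
    rw [ENNReal.smul_def, ← withDensity_smul' _ _ ENNReal.coe_ne_top]
    refine withDensity_mono (.of_forall fun x => ?_)
    calc ENNReal.ofReal (u x) ≤ ENNReal.ofReal (c⁻¹ * v x) := ENNReal.ofReal_le_ofReal (huv x)
      _ = ENNReal.ofReal c⁻¹ * ENNReal.ofReal (v x) := ENNReal.ofReal_mul (inv_pos.mpr hc).le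
  exact ⟨_, hf.isLogConcaveMeasure_withDensity,
    h_mono fun x => (hfp x).2.trans_eq (by rw [one_div]),
    h_mono fun x => (le_inv_mul_iff₀ hc).mpr (hfp x).1⟩

/-- `p` is a probability density on `E` vanishing outside the compact set `K`. It is integrable
because its integral is nonzero. -/
structure IsCompactDensity (K : Set E) (p : E → ℝ) : Prop where
  isCompact : IsCompact K
  nonneg : ∀ x, 0 ≤ p x
  integral_eq_one : ∫ x, p x = 1
  eq_zero : ∀ x, x ∉ K → p x = 0

namespace IsCompactDensity

lemma integrable (h : IsCompactDensity K p) : Integrable p :=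
  .of_integral_ne_zero (by simp [h.integral_eq_one])

lemma integrable_smul {F : Type*} [NormedAddCommGroup F] [NormedSpace ℝ F]
    [SecondCountableTopology F] (h : IsCompactDensity K p) {φ : E → F} (hφ : Continuous φ) :
    Integrable fun x => p x • φ x := by
  obtain ⟨C, hC⟩ := h.isCompact.exists_bound_of_continuousOn hφ.continuousOn
  refine (h.integrable.mul_const C).mono'
    (h.integrable.aestronglyMeasurable.smul hφ.aestronglyMeasurable) (.of_forall fun x => ?_)
  rw [norm_smul, Real.norm_of_nonneg (h.nonneg x)]
  by_cases hx : x ∈ K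
  · exact mul_le_mul_of_nonneg_left (hC x hx) (h.nonneg x)
  · simp [h.eq_zero x hx]

lemma integrable_mul (h : IsCompactDensity K p) {φ : E → ℝ} (hφ : Continuous φ) :
    Integrable fun x => φ x * p x := by
  simpa only [smul_eq_mul, mul_comm] using h.integrable_smul hφ

lemma lintegral_withDensity (h : IsCompactDensity K p) {φ : E → ℝ} (hφ : Continuous φ)
    (hφ0 : ∀ x, 0 ≤ φ x) :
    ∫⁻ x, ENNReal.ofReal (φ x) ∂(volume.withDensity fun x => ENNReal.ofReal (p x))
      = ENNReal.ofReal (∫ x, φ x * p x) := by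
  rw [lintegral_withDensity_eq_lintegral_mul₀ h.integrable.aemeasurable.ennreal_ofReal
    (hφ.measurable.ennreal_ofReal.aemeasurable), ofReal_integral_eq_lintegral_ofReal
      (h.integrable_mul hφ) (.of_forall fun x => mul_nonneg (hφ0 x) (h.nonneg x))]
  refine lintegral_congr fun x => ?_
  rw [Pi.mul_apply, mul_comm, ENNReal.ofReal_mul (hφ0 x)]

lemma isProbabilityMeasure (h : IsCompactDensity K p) :
    IsProbabilityMeasure (volume.withDensity fun x => ENNReal.ofReal (p x)) where
  measure_univ := by
    simpa [h.integral_eq_one] using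
      h.lintegral_withDensity (φ := fun _ => 1) continuous_const fun _ => zero_le_one

lemma integral_seminorm_rpow_le (h : IsCompactDensity K p) (hlc : ApproxLogConcave c p)
    (hc : 0 < c) {q : Seminorm ℝ E} (hq : Continuous q) (m : E) {r : ℝ} (hr : 0 < r) :
    ∫ y, q (y - m) ^ r * p y ≤ reverseHolderConst c⁻¹ r * (∫ y, q (y - m) * p y) ^ r := by
  obtain ⟨ν, hν, hpν, hνp⟩ := hlc.exists_isLogConcaveMeasure hc
  have := h.isProbabilityMeasure
  have hqm : Continuous fun y => q (y - m) := hq.comp (by fun_prop)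
  have hq0 : ∀ y, 0 ≤ q (y - m) := fun y => apply_nonneg q _
  have hI : 0 ≤ ∫ y, q (y - m) * p y := integral_nonneg fun y => mul_nonneg (hq0 y) (h.nonneg y)
  have h_const : 0 ≤ reverseHolderConst c⁻¹ r := (reverseHolderConst_pos (by positivity) hr).le
  have key := hν.lintegral_rpow_le hpν hνp hqm.measurable hr
  rw [Real.coe_toNNReal _ (inv_pos.mpr hc).le, h.lintegral_withDensity hqm hq0,
    h.lintegral_withDensity (hqm.rpow_const fun _ => .inr hr.le)
      fun y => Real.rpow_nonneg (hq0 y) r,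
    ENNReal.ofReal_rpow_of_nonneg hI hr.le, ← ENNReal.ofReal_mul h_const] at key
  exact (ENNReal.ofReal_le_ofReal_iff (mul_nonneg h_const (Real.rpow_nonneg hI r))).mp key

lemma integral_inner_sq_le (h : IsCompactDensity K p) (hlc : ApproxLogConcave c p) (hc : 0 < c)
    (u m : E) :
    ∫ y, inner ℝ u (y - m) ^ 2 * p y ≤
      reverseHolderConst c⁻¹ 2 * (∫ y, |inner ℝ u (y - m)| * p y) ^ 2 := by
  have hq : Continuous (innerₛₗ ℝ u).toSeminorm := by
    change Continuous fun y => ‖inner ℝ u y‖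
    fun_prop
  simpa [LinearMap.toSeminorm_apply] using h.integral_seminorm_rpow_le hlc hc hq m two_pos

end IsCompactDensity

end Density

section Gaussian

variable {n : ℕ} {S : Matrix (Fin n) (Fin n) ℝ} {μ : EuclideanSpace ℝ (Fin n)}

/-- The quadratic form `dᵀ M d` of a matrix on Euclidean space, written as the double sum that
appears in `gaussPdf`. -/
def quadForm (M : Matrix (Fin n) (Fin n) ℝ) (d : EuclideanSpace ℝ (Fin n)) : ℝ :=
  ∑ i, ∑ j, d i * M i j * d j

lemma quadForm_eq_dotProduct (M : Matrix (Fin n) (Fin n) ℝ) (d : EuclideanSpace ℝ (Fin n)) :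
    quadForm M d = d.ofLp ⬝ᵥ M.mulVec d.ofLp := by
  simp only [quadForm, dotProduct, Matrix.mulVec, Finset.mul_sum, mul_assoc]

@[fun_prop]
lemma continuous_quadForm (M : Matrix (Fin n) (Fin n) ℝ) : Continuous (quadForm M) := by
  unfold quadForm
  fun_prop

lemma quadForm_neg (M : Matrix (Fin n) (Fin n) ℝ) (d : EuclideanSpace ℝ (Fin n)) :
    quadForm M (-d) = quadForm M d := by
  simp [quadForm]

open scoped Matrix in
lemma quadForm_transpose_mul_self (A : Matrix (Fin n) (Fin n) ℝ) (d : EuclideanSpace ℝ (Fin n)) :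
    quadForm (Aᵀ * A) d = ‖Matrix.toLpLin 2 2 A d‖ ^ 2 := by
  rw [quadForm_eq_dotProduct, ← Matrix.mulVec_mulVec, Matrix.dotProduct_mulVec,
    Matrix.vecMul_transpose, EuclideanSpace.real_norm_sq_eq]
  simp [dotProduct, sq, Matrix.toLpLin_apply]

open scoped Matrix MatrixOrder Matrix.Norms.L2Operator in
lemma exists_inv_eq_transpose_mul_self (hS : S.PosDef) :
    ∃ A : Matrix (Fin n) (Fin n) ℝ, IsUnit A.det ∧ S⁻¹ = Aᵀ * A := by
  obtain ⟨A, hA, h⟩ := CStarAlgebra.isStrictlyPositive_iff_eq_star_mul_self.mp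
    hS.inv.isStrictlyPositive
  exact ⟨A, (Matrix.isUnit_iff_isUnit_det A).mp hA, by simpa [Matrix.star_eq_conjTranspose] using h⟩

lemma quadForm_nonneg (hS : S.PosSemidef) (d : EuclideanSpace ℝ (Fin n)) : 0 ≤ quadForm S d := by
  simpa [quadForm_eq_dotProduct] using hS.dotProduct_mulVec_nonneg d.ofLp

lemma quadForm_inv_eq_mul_quadForm_smul_inv (hS : S.PosDef) {s : ℝ} (hs : s ≠ 0)
    (d : EuclideanSpace ℝ (Fin n)) : quadForm S⁻¹ d = s * quadForm (s • S)⁻¹ d := by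
  have h_inv : (s • S)⁻¹ = s⁻¹ • S⁻¹ :=
    Matrix.inv_smul' S (Units.mk0 s hs) ((Matrix.isUnit_iff_isUnit_det S).mp hS.isUnit)
  simp [h_inv, quadForm_eq_dotProduct, Matrix.smul_mulVec, hs]

open scoped Matrix in
lemma inner_sq_le_quadForm_mul (hS : S.PosDef) (w d : EuclideanSpace ℝ (Fin n)) :
    inner ℝ w d ^ 2 ≤ quadForm S w * quadForm S⁻¹ d := by
  obtain ⟨A, hAu, hA⟩ := exists_inv_eq_transpose_mul_self hS
  have hSA : S = A⁻¹ * A⁻¹ᵀ := by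
    rw [← Matrix.nonsing_inv_nonsing_inv S ((Matrix.isUnit_iff_isUnit_det S).mp hS.isUnit), hA,
      Matrix.mul_inv_rev, Matrix.transpose_nonsing_inv]
  have hqS : quadForm S w = ‖Matrix.toLpLin 2 2 A⁻¹ᵀ w‖ ^ 2 := by
    rw [← quadForm_transpose_mul_self, Matrix.transpose_transpose, ← hSA]
  have h_inner : inner ℝ w d =
      inner ℝ (Matrix.toLpLin 2 2 A⁻¹ᵀ w) (Matrix.toLpLin 2 2 A d) := by
    simp only [EuclideanSpace.inner_eq_star_dotProduct, Matrix.toLpLin_apply, star_trivial]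
    rw [Matrix.mulVec_transpose, dotProduct_comm (A.mulVec d.ofLp), ← Matrix.dotProduct_mulVec,
      Matrix.mulVec_mulVec, Matrix.nonsing_inv_mul A hAu, Matrix.one_mulVec, dotProduct_comm]
  rw [hqS, hA, quadForm_transpose_mul_self, h_inner, ← mul_pow, ← sq_abs]
  gcongr
  exact abs_real_inner_le_norm _ _

lemma integral_exp_neg_mul_quadForm (hS : S.PosDef) {b : ℝ} (hb : 0 < b) :
    ∫ x : EuclideanSpace ℝ (Fin n), Real.exp (-b * quadForm S⁻¹ (x - μ)) =
      S.det ^ (1 / 2 : ℝ) * (π / b) ^ ((n : ℝ) / 2) := by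
  obtain ⟨A, hAu, hA⟩ := exists_inv_eq_transpose_mul_self hS
  have hdet : LinearMap.det (Matrix.toLpLin 2 2 A) = A.det := LinearMap.det_toLpLin 2 A
  have hdet0 : A.det ≠ 0 := hAu.ne_zero
  have hdetS : S.det ^ (1 / 2 : ℝ) = |A.det⁻¹| := by
    have h_sq : S.det⁻¹ = A.det ^ 2 := by
      have h := congrArg Matrix.det hA
      rw [Matrix.det_nonsing_inv, Ring.inverse_eq_inv', Matrix.det_mul, Matrix.det_transpose] at h
      rw [h, sq]
    rw [← Real.sqrt_eq_rpow, ← inv_inv S.det, h_sq, ← inv_pow, Real.sqrt_sq_eq_abs]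
  rw [integral_sub_right_eq_self (fun x => Real.exp (-b * quadForm S⁻¹ x)) μ]
  simp_rw [hA, quadForm_transpose_mul_self]
  have hcont : Continuous (Matrix.toLpLin 2 2 A : EuclideanSpace ℝ (Fin n) →ₗ[ℝ] _) :=
    LinearMap.continuous_of_finiteDimensional _
  rw [← integral_map (f := fun y : EuclideanSpace ℝ (Fin n) => Real.exp (-b * ‖y‖ ^ 2))
    hcont.aemeasurable (by fun_prop),
    Measure.map_linearMap_addHaar_eq_smul_addHaar _ (by rwa [hdet]), integral_smul_measure,
    GaussianFourier.integral_rexp_neg_mul_sq_norm hb, hdet, hdetS]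
  simp

lemma gaussPdf_eq (x : EuclideanSpace ℝ (Fin n)) :
    gaussPdf n μ S x = (2 * π) ^ (-(n : ℝ) / 2) * S.det ^ (-(1 : ℝ) / 2) *
      Real.exp (-(1 / 2) * quadForm S⁻¹ (x - μ)) := rfl

lemma gaussPdf_nonneg (hS : S.PosSemidef) (x : EuclideanSpace ℝ (Fin n)) :
    0 ≤ gaussPdf n μ S x := by
  have := hS.det_nonneg
  rw [gaussPdf_eq]
  positivity

@[fun_prop]
lemma continuous_gaussPdf : Continuous (gaussPdf n μ S) := by
  simp_rw [funext (gaussPdf_eq (μ := μ) (S := S))]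
  fun_prop

lemma integral_gaussPdf_mul_exp (hS : S.PosDef) {b : ℝ} (hb : 0 < b) :
    ∫ x, gaussPdf n μ S x * Real.exp ((1 / 2 - b) * quadForm S⁻¹ (x - μ)) =
      (2 * b) ^ (-(n : ℝ) / 2) := by
  have h_mul : ∀ x, gaussPdf n μ S x * Real.exp ((1 / 2 - b) * quadForm S⁻¹ (x - μ)) =
      (2 * π) ^ (-(n : ℝ) / 2) * S.det ^ (-(1 : ℝ) / 2) *
        Real.exp (-b * quadForm S⁻¹ (x - μ)) := by
    intro x
    rw [gaussPdf_eq, mul_assoc, ← Real.exp_add]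
    ring_nf
  have h_det : S.det ^ (-(1 : ℝ) / 2) * S.det ^ (1 / 2 : ℝ) = 1 := by
    rw [← Real.rpow_add hS.det_pos]
    norm_num
  have h_pi : (2 * π) ^ (-(n : ℝ) / 2) * (π / b) ^ ((n : ℝ) / 2) = (2 * b) ^ (-(n : ℝ) / 2) := by
    have : 2 * b = 2 * π / (π / b) := by field_simp
    rw [this, Real.div_rpow (y := π / b) (by positivity) (by positivity), neg_div,
      Real.rpow_neg (x := π / b) (by positivity), div_inv_eq_mul]
  simp_rw [h_mul, integral_const_mul, integral_exp_neg_mul_quadForm hS hb]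
  rw [mul_assoc, ← mul_assoc (S.det ^ _), h_det, one_mul, h_pi]

lemma integrable_gaussPdf_mul_exp (hS : S.PosDef) {b : ℝ} (hb : 0 < b) :
    Integrable fun x => gaussPdf n μ S x * Real.exp ((1 / 2 - b) * quadForm S⁻¹ (x - μ)) := by
  refine .of_integral_ne_zero ?_
  rw [integral_gaussPdf_mul_exp hS hb]
  positivity

lemma integrable_gaussPdf (hS : S.PosDef) : Integrable (gaussPdf n μ S) := by
  simpa using integrable_gaussPdf_mul_exp (μ := μ) hS (b := 1 / 2) (by norm_num)

lemma integral_gaussPdf (hS : S.PosDef) : ∫ x, gaussPdf n μ S x = 1 := by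
  simpa using integral_gaussPdf_mul_exp (μ := μ) hS (b := 1 / 2) (by norm_num)

lemma integrable_gaussPdf_mul_inner (hS : S.PosDef) (v : EuclideanSpace ℝ (Fin n)) :
    Integrable fun x => gaussPdf n μ S x * inner ℝ v (x - μ) := by
  refine ((integrable_gaussPdf_mul_exp (μ := μ) hS (b := 1 / 4) (by norm_num)).const_mul
    (quadForm S v + 4)).mono' (by fun_prop) (.of_forall fun x => ?_)
  have hv := quadForm_nonneg hS.posSemidef v
  have hq := quadForm_nonneg hS.inv.posSemidef (x - μ)
  have h_exp := Real.add_one_le_exp ((1 / 2 - 1 / 4) * quadForm S⁻¹ (x - μ))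
  have h_cs := inner_sq_le_quadForm_mul hS v (x - μ)
  rw [norm_mul, Real.norm_of_nonneg (gaussPdf_nonneg hS.posSemidef x), Real.norm_eq_abs,
    mul_left_comm]
  refine mul_le_mul_of_nonneg_left ?_ (gaussPdf_nonneg hS.posSemidef x)
  calc |inner ℝ v (x - μ)| ≤ quadForm S v + quadForm S⁻¹ (x - μ) := by
        refine abs_le_of_sq_le_sq ?_ (by positivity)
        nlinarith
    _ ≤ (quadForm S v + 4) * (1 + (1 / 2 - 1 / 4) * quadForm S⁻¹ (x - μ)) := by nlinarith
    _ ≤ _ := by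
        gcongr
        linarith

lemma integral_gaussPdf_mul_inner (v : EuclideanSpace ℝ (Fin n)) :
    ∫ x, gaussPdf n μ S x * inner ℝ v (x - μ) = 0 := by
  have h_reflect := integral_sub_left_eq_self
    (fun x => gaussPdf n μ S x * inner ℝ v (x - μ)) volume ((2 : ℝ) • μ)
  have h_neg : ∀ x : EuclideanSpace ℝ (Fin n), (2 : ℝ) • μ - x - μ = -(x - μ) := by
    intro x
    module
  simp_rw [gaussPdf_eq, h_neg, quadForm_neg, inner_neg_right, mul_neg, integral_neg] at h_reflect
  simp_rw [gaussPdf_eq]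
  linarith

lemma integrable_gaussPdf_mul_affine (hS : S.PosDef) (a : ℝ) (v : EuclideanSpace ℝ (Fin n)) :
    Integrable fun x => gaussPdf n μ S x * (a + inner ℝ v (x - μ)) := by
  simpa only [mul_add] using!
    ((integrable_gaussPdf hS).mul_const a).add (integrable_gaussPdf_mul_inner hS v)

lemma integral_gaussPdf_mul_affine (hS : S.PosDef) (a : ℝ) (v : EuclideanSpace ℝ (Fin n)) :
    ∫ x, gaussPdf n μ S x * (a + inner ℝ v (x - μ)) = a := by
  simp_rw [mul_add]
  rw [integral_add ((integrable_gaussPdf hS).mul_const a) (integrable_gaussPdf_mul_inner hS v),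
    integral_mul_const, integral_gaussPdf hS, integral_gaussPdf_mul_inner, one_mul, add_zero]

lemma integral_gaussPdf_mul_le (hS : S.PosDef) {g : EuclideanSpace ℝ (Fin n) → ℝ}
    (hg : Continuous g) {a₁ a₂ κ b : ℝ} (hb : 0 < b) {v₁ v₂ : EuclideanSpace ℝ (Fin n)}
    (h_lower : ∀ x, a₁ + inner ℝ v₁ (x - μ) ≤ g x)
    (h_upper : ∀ x, g x ≤ a₂ + inner ℝ v₂ (x - μ) +
      κ * Real.exp ((1 / 2 - b) * quadForm S⁻¹ (x - μ))) :
    ∫ x, gaussPdf n μ S x * g x ≤ a₂ + κ * (2 * b) ^ (-(n : ℝ) / 2) := by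
  have h_exp := (integrable_gaussPdf_mul_exp (μ := μ) hS hb).const_mul κ
  have h_sum := (integrable_gaussPdf_mul_affine (μ := μ) hS a₂ v₂).add h_exp
  have hg_le : ∀ x, gaussPdf n μ S x * g x ≤ gaussPdf n μ S x * (a₂ + inner ℝ v₂ (x - μ)) +
      κ * (gaussPdf n μ S x * Real.exp ((1 / 2 - b) * quadForm S⁻¹ (x - μ))) := fun x =>
    (mul_le_mul_of_nonneg_left (h_upper x) (gaussPdf_nonneg hS.posSemidef x)).trans_eq (by ring)
  have hg_ge : ∀ x, gaussPdf n μ S x * (a₁ + inner ℝ v₁ (x - μ)) ≤ gaussPdf n μ S x * g x :=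
    fun x => mul_le_mul_of_nonneg_left (h_lower x) (gaussPdf_nonneg hS.posSemidef x)
  have hg_int : Integrable fun x => gaussPdf n μ S x * g x :=
    integrable_of_le_of_le (by fun_prop) (.of_forall hg_ge) (.of_forall hg_le)
      (integrable_gaussPdf_mul_affine hS a₁ v₁) h_sum
  refine (integral_mono hg_int h_sum hg_le).trans_eq ?_
  simp only [Pi.add_apply]
  rw [integral_add (integrable_gaussPdf_mul_affine hS a₂ v₂) h_exp,
    integral_gaussPdf_mul_affine hS, integral_const_mul, integral_gaussPdf_mul_exp hS hb]

end Gaussian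

section Convexity

variable {E : Type*} [NormedAddCommGroup E] [InnerProductSpace ℝ E] {g : E → ℝ}

lemma exists_subgradient_of_convexOn [CompleteSpace E] (hg : ConvexOn ℝ Set.univ g)
    (hc : Continuous g) (x : E) : ∃ w : E, ∀ y, g x + inner ℝ w (y - x) ≤ g y := by
  have h_open : IsOpen {q : E × ℝ | q.1 ∈ Set.univ ∧ g q.1 < q.2} := by
    simpa using isOpen_lt (hc.comp continuous_fst) continuous_snd
  obtain ⟨f, hf⟩ := geometric_hahn_banach_open_point hg.convex_strict_epigraph h_open
    (x := (x, g x)) (by simp)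
  have h_split : ∀ y s, f (y, s) = f (y, 0) + s * f (0, 1) := by
    intro y s
    rw [← smul_eq_mul, ← map_smul, ← map_add]
    simp
  set c := -f (0, 1) with hc_def
  have hc_pos : 0 < c := by
    have := hf (x, g x + 1) (by simp)
    rw [h_split x, h_split x (g x)] at this
    linarith [hc_def]
  set w := c⁻¹ • (InnerProductSpace.toDual ℝ E).symm (f.comp (.inl ℝ E ℝ)) with hw
  refine ⟨w, fun y => le_of_forall_pos_lt_add fun δ hδ => ?_⟩
  have h_inner : inner ℝ w (y - x) = c⁻¹ * (f (y, 0) - f (x, 0)) := by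
    rw [hw, real_inner_smul_left, InnerProductSpace.toDual_symm_apply, map_sub]
    simp
  have h_sep := hf (y, g y + δ) (by simpa using hδ)
  rw [h_split y, h_split x (g x)] at h_sep
  have h_slope : c⁻¹ * (f (y, 0) - f (x, 0)) < g y + δ - g x := by
    rw [inv_mul_lt_iff₀ hc_pos]
    linarith [hc_def]
  linarith

lemma le_add_inner_add_norm_of_lipschitzWith {ℓ : ℝ≥0} (hg : LipschitzWith ℓ g) {m v : E}
    (hv : ∀ y, g m + inner ℝ v (y - m) ≤ g y) (x : E) :
    g x ≤ g m + inner ℝ v (x - m) + 2 * ℓ * ‖x - m‖ := by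
  have h_reflect : m - (x - m) - m = -(x - m) := by abel
  have hx := hg.dist_le_mul x m
  have hx' := hg.dist_le_mul (m - (x - m)) m
  have hvx' := hv (m - (x - m))
  rw [dist_eq_norm, dist_eq_norm, Real.norm_eq_abs] at hx hx'
  rw [h_reflect, norm_neg] at hx'
  rw [h_reflect, inner_neg_right] at hvx'
  linarith [le_abs_self (g x - g m), le_abs_self (g (m - (x - m)) - g m)]

lemma ae_inner_sub_ne_zero [FiniteDimensional ℝ E] [MeasurableSpace E] [BorelSpace E]
    {u : E} (hu : u ≠ 0) (m : E) : ∀ᵐ y : E, inner ℝ u (y - m) ≠ 0 := by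
  have h_ker : LinearMap.ker (innerₛₗ ℝ u) ≠ ⊤ := fun h_top =>
    hu (by simpa using (h_top ▸ Submodule.mem_top : u ∈ LinearMap.ker (innerₛₗ ℝ u)))
  have h_null := Measure.addHaar_affineSubspace volume
    (AffineSubspace.mk' m (LinearMap.ker (innerₛₗ ℝ u))) fun h_top =>
      h_ker (by simpa using congrArg AffineSubspace.direction h_top)
  rw [ae_iff]
  convert h_null using 2
  ext y
  simp [AffineSubspace.mem_mk']

end Convexity

namespace IsCompactDensity

variable {n : ℕ} {K : Set (EuclideanSpace ℝ (Fin n))} {p : EuclideanSpace ℝ (Fin n) → ℝ}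

lemma integral_inner_sub_densMean (h : IsCompactDensity K p) (u : EuclideanSpace ℝ (Fin n)) :
    ∫ y, inner ℝ u (y - densMean n p) * p y = 0 := by
  have h_mean : ∫ y, inner ℝ u y * p y = inner ℝ u (densMean n p) := by
    rw [densMean, ← integral_inner (h.integrable_smul continuous_id')]
    simp_rw [real_inner_smul_right, mul_comm]
  simp_rw [inner_sub_right, sub_mul]
  rw [integral_sub (h.integrable_mul (by fun_prop)) (h.integrable_mul (by fun_prop)), h_mean,
    integral_const_mul, h.integral_eq_one, mul_one, sub_self]

lemma quadForm_densCov (h : IsCompactDensity K p) (u : EuclideanSpace ℝ (Fin n)) :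
    quadForm (densCov n p) u = ∫ y, inner ℝ u (y - densMean n p) ^ 2 * p y := by
  set m := densMean n p with hm
  have h_expand : ∀ y : EuclideanSpace ℝ (Fin n), inner ℝ u (y - m) ^ 2 * p y =
      ∑ i, ∑ j, u i * (p y * ((y i - m i) * (y j - m j))) * u j := by
    intro y
    rw [PiLp.inner_apply, sq, Finset.sum_mul_sum, Finset.sum_mul]
    refine Finset.sum_congr rfl fun i _ => ?_
    rw [Finset.sum_mul]
    refine Finset.sum_congr rfl fun j _ => ?_
    simp
    ring
  have h_int : ∀ i j, Integrable fun y : EuclideanSpace ℝ (Fin n) =>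
      p y * ((y i - m i) * (y j - m j)) :=
    fun i j => h.integrable_smul (φ := fun y => (y i - m i) * (y j - m j)) (by fun_prop)
  simp_rw [h_expand]
  rw [integral_finsetSum _ fun i _ => integrable_finsetSum _ fun j _ =>
    ((h_int i j).const_mul _).mul_const _]
  refine Finset.sum_congr rfl fun i _ => ?_
  rw [integral_finsetSum _ fun j _ => ((h_int i j).const_mul _).mul_const _]
  refine Finset.sum_congr rfl fun j _ => ?_
  rw [integral_mul_const, integral_const_mul, densCov, Matrix.of_apply, ← hm]

lemma quadForm_densCov_pos (h : IsCompactDensity K p) {u : EuclideanSpace ℝ (Fin n)}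
    (hu : u ≠ 0) : 0 < quadForm (densCov n p) u := by
  rw [h.quadForm_densCov]
  have h_nonneg : 0 ≤ fun y => inner ℝ u (y - densMean n p) ^ 2 * p y :=
    fun y => mul_nonneg (sq_nonneg _) (h.nonneg y)
  refine lt_of_le_of_ne (integral_nonneg h_nonneg) fun h_zero => ?_
  have h_ae := (integral_eq_zero_iff_of_nonneg h_nonneg
    (h.integrable_mul (by fun_prop))).mp h_zero.symm
  have hp_ae : p =ᵐ[volume] 0 := by
    filter_upwards [h_ae, ae_inner_sub_ne_zero hu (densMean n p)] with y hy hy_ne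
    simpa [hy_ne] using hy
  simpa [integral_congr_ae hp_ae] using h.integral_eq_one

lemma posDef_densCov (h : IsCompactDensity K p) : (densCov n p).PosDef := by
  refine .of_dotProduct_mulVec_pos ?_ fun v hv => ?_
  · ext i j
    simp only [densCov, Matrix.conjTranspose_apply, Matrix.of_apply, star_trivial]
    simp_rw [mul_comm (_ - densMean n p j)]
  · simpa [quadForm_eq_dotProduct] using h.quadForm_densCov_pos (u := WithLp.toLp 2 v)
      (by simpa using hv)

lemma norm_sub_densMean_le (h : IsCompactDensity K p) {y : EuclideanSpace ℝ (Fin n)} (hy : y ∈ K) :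
    ‖y - densMean n p‖ ≤ Metric.diam K := by
  have h_mean : y - densMean n p = ∫ z, p z • (y - z) := by
    simp_rw [smul_sub]
    rw [integral_sub (h.integrable_smul continuous_const) (h.integrable_smul continuous_id'),
      integral_smul_const, h.integral_eq_one, one_smul, densMean]
  rw [h_mean]
  calc ‖∫ z, p z • (y - z)‖ ≤ ∫ z, p z * Metric.diam K := by
        refine norm_integral_le_of_norm_le (h.integrable.mul_const _) (.of_forall fun z => ?_)
        rw [norm_smul, Real.norm_of_nonneg (h.nonneg z)]
        by_cases hz : z ∈ K
        · refine mul_le_mul_of_nonneg_left ?_ (h.nonneg z)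
          rw [← dist_eq_norm]
          exact Metric.dist_le_diam_of_mem h.isCompact.isBounded hy hz
        · simp [h.eq_zero z hz]
    _ = Metric.diam K := by rw [integral_mul_const, h.integral_eq_one, one_mul]

lemma quadForm_densCov_le (h : IsCompactDensity K p) (u : EuclideanSpace ℝ (Fin n)) :
    quadForm (densCov n p) u ≤ ‖u‖ ^ 2 * Metric.diam K ^ 2 := by
  rw [h.quadForm_densCov]
  calc ∫ y, inner ℝ u (y - densMean n p) ^ 2 * p y
      ≤ ∫ y, (‖u‖ ^ 2 * Metric.diam K ^ 2) * p y := by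
        refine integral_mono (h.integrable_mul (by fun_prop)) (h.integrable.const_mul _)
          fun y => ?_
        by_cases hy : y ∈ K
        · refine mul_le_mul_of_nonneg_right ?_ (h.nonneg y)
          rw [← mul_pow, ← sq_abs]
          gcongr
          exact (abs_real_inner_le_norm _ _).trans
            (mul_le_mul_of_nonneg_left (h.norm_sub_densMean_le hy) (norm_nonneg u))
        · simp [h.eq_zero y hy]
    _ = ‖u‖ ^ 2 * Metric.diam K ^ 2 := by rw [integral_const_mul, h.integral_eq_one, mul_one]

lemma norm_sub_densMean_sq_le (h : IsCompactDensity K p) (x : EuclideanSpace ℝ (Fin n)) :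
    ‖x - densMean n p‖ ^ 2 ≤
      Metric.diam K ^ 2 * quadForm (densCov n p)⁻¹ (x - densMean n p) := by
  set d := x - densMean n p
  have hq := quadForm_nonneg h.posDef_densCov.inv.posSemidef d
  rcases (sq_nonneg ‖d‖).eq_or_lt with hd | hd
  · rw [← hd]
    positivity
  refine le_of_mul_le_mul_left ?_ hd
  calc ‖d‖ ^ 2 * ‖d‖ ^ 2 = inner ℝ d d ^ 2 := by rw [real_inner_self_eq_norm_sq]; ring
    _ ≤ quadForm (densCov n p) d * quadForm (densCov n p)⁻¹ d :=
        inner_sq_le_quadForm_mul h.posDef_densCov d d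
    _ ≤ (‖d‖ ^ 2 * Metric.diam K ^ 2) * quadForm (densCov n p)⁻¹ d := by
        gcongr
        exact h.quadForm_densCov_le d
    _ = ‖d‖ ^ 2 * (Metric.diam K ^ 2 * quadForm (densCov n p)⁻¹ d) := by ring

lemma two_mul_norm_sub_densMean_le (h : IsCompactDensity K p) {s : ℝ} (hs₀ : 0 < s)
    (hs : s ≤ 1 / 16) (x : EuclideanSpace ℝ (Fin n)) :
    2 * ‖x - densMean n p‖ ≤
      Metric.diam K * Real.exp (quadForm (s • densCov n p)⁻¹ (x - densMean n p) / 8) := by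
  have h_norm := h.norm_sub_densMean_sq_le x
  rw [quadForm_inv_eq_mul_quadForm_smul_inv h.posDef_densCov hs₀.ne'] at h_norm
  have hq := quadForm_nonneg (h.posDef_densCov.smul hs₀).inv.posSemidef (x - densMean n p)
  set q := quadForm (s • densCov n p)⁻¹ (x - densMean n p)
  refine le_of_sq_le_sq ?_ (by positivity)
  calc (2 * ‖x - densMean n p‖) ^ 2 = 4 * ‖x - densMean n p‖ ^ 2 := by ring
    _ ≤ 4 * (Metric.diam K ^ 2 * (1 / 16 * q)) := by
        grw [h_norm, hs]
    _ = Metric.diam K ^ 2 * (q / 4) := by ring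
    _ ≤ Metric.diam K ^ 2 * Real.exp (q / 4) := by
        gcongr
        linarith [Real.add_one_le_exp (q / 4)]
    _ = (Metric.diam K * Real.exp (q / 8)) ^ 2 := by
        rw [mul_pow, ← Real.exp_nat_mul]
        ring_nf

variable {g : EuclideanSpace ℝ (Fin n) → ℝ} {v w : EuclideanSpace ℝ (Fin n)} {a c s R : ℝ}

lemma integral_add_inner_mul (h : IsCompactDensity K p) (a : ℝ) (u : EuclideanSpace ℝ (Fin n)) :
    ∫ y, (a + inner ℝ u (y - densMean n p)) * p y = a := by
  simp_rw [add_mul]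
  rw [integral_add (h.integrable.const_mul a) (h.integrable_mul (by fun_prop)),
    integral_const_mul, h.integral_eq_one, h.integral_inner_sub_densMean, mul_one, add_zero]

lemma add_integral_abs_inner_le (h : IsCompactDensity K p) (hg : Continuous g)
    (hv : ∀ y, a + inner ℝ v (y - densMean n p) ≤ g y)
    (hw : ∀ y, a + inner ℝ w (y - densMean n p) ≤ g y) :
    a + 2⁻¹ * ∫ y, |inner ℝ (w - v) (y - densMean n p)| * p y ≤ ∫ y, g y * p y := by
  have h_max : ∀ y, a + inner ℝ ((2 : ℝ)⁻¹ • (w + v)) (y - densMean n p) +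
      2⁻¹ * |inner ℝ (w - v) (y - densMean n p)| ≤ g y := by
    intro y
    have hvy := hv y
    have hwy := hw y
    rw [real_inner_smul_left, inner_add_left, inner_sub_left]
    rcases abs_cases (inner ℝ w (y - densMean n p) - inner ℝ v (y - densMean n p)) with
      ⟨h_abs, -⟩ | ⟨h_abs, -⟩ <;> linarith
  have h_affine : Integrable fun y =>
      (a + inner ℝ ((2 : ℝ)⁻¹ • (w + v)) (y - densMean n p)) * p y :=
    h.integrable_mul (by fun_prop)
  have h_abs : Integrable fun y => 2⁻¹ * |inner ℝ (w - v) (y - densMean n p)| * p y :=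
    h.integrable_mul (by fun_prop)
  nth_rw 1 [← h.integral_add_inner_mul a ((2 : ℝ)⁻¹ • (w + v)), ← integral_const_mul]
  simp_rw [← mul_assoc]
  rw [← integral_add h_affine h_abs]
  refine integral_mono (h_affine.add h_abs) (h.integrable_mul hg) fun y => ?_
  simpa only [Pi.add_apply, ← add_mul] using! mul_le_mul_of_nonneg_right (h_max y) (h.nonneg y)

/- The affine minorants of `g` touching it at `x` and at the mean differ by `⟪w - v, · - μ⟫`, whose
mean absolute value `g` must absorb; by reverse Hölder it controls `⟪w - v, x - μ⟫`. -/
theorem le_inner_add_integral (h : IsCompactDensity K p) (hlc : ApproxLogConcave c p) (hc : 0 < c)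
    (hg : ConvexOn ℝ Set.univ g) (hgc : Continuous g)
    (hv : ∀ y, g (densMean n p) + inner ℝ v (y - densMean n p) ≤ g y)
    {x : EuclideanSpace ℝ (Fin n)} (hx : 4 * reverseHolderConst c⁻¹ 2 *
      quadForm (densCov n p)⁻¹ (x - densMean n p) ≤ 1) :
    g x ≤ inner ℝ v (x - densMean n p) + ∫ y, g y * p y := by
  obtain ⟨w, hw⟩ := exists_subgradient_of_convexOn hg hgc x
  set m := densMean n p
  set I : ℝ := ∫ y, |inner ℝ (w - v) (y - m)| * p y
  have hI₀ : 0 ≤ I := integral_nonneg fun y => mul_nonneg (abs_nonneg _) (h.nonneg y)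
  have hq := quadForm_nonneg h.posDef_densCov.inv.posSemidef (x - m)
  have h_slope : inner ℝ (w - v) (x - m) ≤ I / 2 := by
    refine le_of_sq_le_sq ?_ (by positivity)
    calc inner ℝ (w - v) (x - m) ^ 2
        ≤ quadForm (densCov n p) (w - v) * quadForm (densCov n p)⁻¹ (x - m) :=
          inner_sq_le_quadForm_mul h.posDef_densCov _ _
      _ ≤ (reverseHolderConst c⁻¹ 2 * I ^ 2) * quadForm (densCov n p)⁻¹ (x - m) := by
          rw [h.quadForm_densCov]
          gcongr
          exact h.integral_inner_sq_le hlc hc _ _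
      _ = (4 * reverseHolderConst c⁻¹ 2 * quadForm (densCov n p)⁻¹ (x - m)) * (I ^ 2 / 4) := by
          ring
      _ ≤ 1 * (I ^ 2 / 4) := by gcongr
      _ = (I / 2) ^ 2 := by ring
  have h_sub : ∀ y, inner ℝ w (y - x) = inner ℝ w (y - m) - inner ℝ w (x - m) := fun y => by
    rw [← inner_sub_right, sub_sub_sub_cancel_right]
  have h_excess : g x - inner ℝ w (x - m) + 2⁻¹ * I ≤ ∫ y, g y * p y := by
    refine h.add_integral_abs_inner_le hgc (fun y => ?_) fun y => ?_
    · have hwm := hw m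
      rw [h_sub, sub_self, inner_zero_right] at hwm
      linarith [hv y]
    · linarith [hw y, h_sub y]
  rw [inner_sub_left] at h_slope
  linarith

lemma le_integral_add_inner_add_exp (h : IsCompactDensity K p) (hlc : ApproxLogConcave c p)
    (hc : 0 < c) (hs₀ : 0 < s) (hs : s ≤ 1 / 16)
    (hsR : 4 * reverseHolderConst c⁻¹ 2 * (s * R) ≤ 1) (hg : ConvexOn ℝ Set.univ g) {ℓ : ℝ≥0}
    (hgℓ : LipschitzWith ℓ g) (hv : ∀ y, g (densMean n p) + inner ℝ v (y - densMean n p) ≤ g y)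
    (x : EuclideanSpace ℝ (Fin n)) :
    g x ≤ (∫ y, g y * p y) + inner ℝ v (x - densMean n p) +
      ℓ * Metric.diam K * Real.exp (-R / 4) *
        Real.exp ((1 / 2 - 1 / 8) * quadForm (s • densCov n p)⁻¹ (x - densMean n p)) := by
  have h_near : ∀ {z}, 4 * reverseHolderConst c⁻¹ 2 *
      (s * quadForm (s • densCov n p)⁻¹ (z - densMean n p)) ≤ 1 →
        g z ≤ inner ℝ v (z - densMean n p) + ∫ y, g y * p y := fun hz =>
    h.le_inner_add_integral hlc hc hg hgℓ.continuous hv (by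
      rwa [quadForm_inv_eq_mul_quadForm_smul_inv h.posDef_densCov hs₀.ne'])
  have h_jensen : g (densMean n p) ≤ ∫ y, g y * p y := by
    simpa [quadForm] using h_near (z := densMean n p) (by simp [quadForm])
  have h_norm := h.two_mul_norm_sub_densMean_le hs₀ hs x
  have h_far := le_add_inner_add_norm_of_lipschitzWith hgℓ hv x
  set q := quadForm (s • densCov n p)⁻¹ (x - densMean n p)
  by_cases hq : q ≤ R
  · have h_const : 0 < reverseHolderConst c⁻¹ 2 :=
      reverseHolderConst_pos (by positivity) two_pos
    have h_pos : 0 ≤ ℓ * Metric.diam K * Real.exp (-R / 4) * Real.exp ((1 / 2 - 1 / 8) * q) := by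
      positivity
    linarith [h_near (z := x) (le_trans (by gcongr) hsR)]
  · have h_lip : 2 * ℓ * ‖x - densMean n p‖ ≤
        ℓ * Metric.diam K * Real.exp (-R / 4) * Real.exp ((1 / 2 - 1 / 8) * q) := by
      calc 2 * ℓ * ‖x - densMean n p‖ = ℓ * (2 * ‖x - densMean n p‖) := by ring
        _ ≤ ℓ * (Metric.diam K * Real.exp (q / 8)) := by gcongr
        _ ≤ ℓ * (Metric.diam K * Real.exp (-R / 4 + (1 / 2 - 1 / 8) * q)) := by
            gcongr
            linarith
        _ = _ := by
            rw [Real.exp_add]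
            ring
    linarith

theorem integral_gaussPdf_mul_le_add_exp (h : IsCompactDensity K p) (hlc : ApproxLogConcave c p)
    (hc : 0 < c) (hs₀ : 0 < s) (hs : s ≤ 1 / 16)
    (hsR : 4 * reverseHolderConst c⁻¹ 2 * (s * R) ≤ 1) (hg : ConvexOn ℝ Set.univ g) {ℓ : ℝ≥0}
    (hgℓ : LipschitzWith ℓ g) :
    ∫ x, gaussPdf n (densMean n p) (s • densCov n p) x * g x ≤
      (∫ x, g x * p x) + ℓ * Metric.diam K * Real.exp (-R / 4) * 2 ^ n := by
  obtain ⟨v, hv⟩ := exists_subgradient_of_convexOn hg hgℓ.continuous (densMean n p)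
  have h_pow : (2 * (1 / 8) : ℝ) ^ (-(n : ℝ) / 2) = 2 ^ n := by
    rw [show (2 * (1 / 8) : ℝ) = 2 ^ (-2 : ℝ) by norm_num, ← Real.rpow_mul zero_le_two,
      ← Real.rpow_natCast]
    ring_nf
  rw [← h_pow]
  exact integral_gaussPdf_mul_le (h.posDef_densCov.smul hs₀) hgℓ.continuous (by norm_num) hv
    (h.le_integral_add_inner_add_exp hlc hc hs₀ hs hsR hg hgℓ hv)

end IsCompactDensity

lemma mul_reverseHolderConst_mul_sq_le {ε : ℝ} (hε₀ : 0 ≤ ε) (hε : ε ≤ 1 / (1600 * Real.exp 1)) :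
    80 * reverseHolderConst (Real.exp 1) 2 * ε ^ 2 ≤ 1 := by
  set e := Real.exp 1 with he
  have he₀ : 0 < e := Real.exp_pos 1
  have he_lt : e ≤ 2.72 := by linarith [Real.exp_one_lt_d9]
  have h_const : reverseHolderConst e 2 = 2 * e ^ 3 * (1 + e ^ 4) ^ 2 := by
    have h_exp : Real.exp 2 = e ^ 2 := by rw [he, ← Real.exp_nat_mul]; norm_num
    have h_Gamma : Real.Gamma (2 + 1) = 2 := by
      simpa only [Nat.factorial_two, Nat.cast_ofNat] using Real.Gamma_nat_eq_factorial 2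
    rw [reverseHolderConst, h_exp, h_Gamma, Real.rpow_two]
    ring
  calc 80 * reverseHolderConst e 2 * ε ^ 2
      ≤ 80 * (2 * e ^ 3 * (1 + e ^ 4) ^ 2) * (1 / (1600 * e)) ^ 2 := by rw [h_const]; gcongr
    _ = e * (1 + e ^ 4) ^ 2 / 16000 := by field_simp; norm_num
    _ ≤ 2.72 * (1 + 2.72 ^ 4) ^ 2 / 16000 := by gcongr
    _ ≤ 1 := by norm_num

lemma exp_neg_five_mul_log_mul_two_pow_le {n : ℕ} (hn : 1 ≤ n) {T : ℝ} (hT : 2 ≤ T) :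
    Real.exp (-(5 * (n * Real.log T))) * 2 ^ n ≤ 1 / T ^ 4 := by
  have hT₀ : 0 < T := by linarith
  have h_exp : Real.exp (-(5 * (n * Real.log T))) = (T ^ (5 * n))⁻¹ := by
    rw [Real.exp_neg, ← Real.exp_log (pow_pos hT₀ (5 * n)), Real.log_pow]
    push_cast
    ring_nf
  rw [h_exp, inv_mul_le_iff₀ (by positivity), mul_one_div, le_div_iff₀ (by positivity)]
  calc (2 : ℝ) ^ n * T ^ 4 ≤ T ^ n * T ^ (4 * n) := by
        gcongr
        · linarith
        · omega
    _ = T ^ (5 * n) := by ring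

theorem gaussian_approximation_convex_domination_general {n : ℕ} (hn : 1 ≤ n) {T : ℝ} (hT : 2 ≤ T)
    {ε : ℝ} (hε₀ : 0 < ε) (hε : ε ≤ 1 / (1600 * Real.exp 1)) {K : Set (EuclideanSpace ℝ (Fin n))}
    {p : EuclideanSpace ℝ (Fin n) → ℝ} (h : IsCompactDensity K p) (hK : Metric.diam K ≤ T)
    (hlc : ApproxLogConcave (1 / Real.exp 1) p) {g : EuclideanSpace ℝ (Fin n) → ℝ}
    (hg : ConvexOn ℝ Set.univ g) (hgT : LipschitzWith T.toNNReal g) :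
    ∫ x, gaussPdf n (densMean n p) ((ε ^ 2 / (n * Real.log T)) • densCov n p) x * g x
      ≤ (∫ x, g x * p x) + 1 / T ^ 2 := by
  have hT₀ : 0 < T := by linarith
  have hL : 1 / 2 ≤ n * Real.log T := by
    have hn' : (1 : ℝ) ≤ n := by exact_mod_cast hn
    nlinarith [Real.log_le_log two_pos hT, Real.log_two_gt_d9]
  set L := n * Real.log T
  have h_const := mul_reverseHolderConst_mul_sq_le hε₀.le hε
  have hs : ε ^ 2 / L ≤ 1 / 16 := by
    have hε' : ε ≤ 1 / 16 :=
      hε.trans (one_div_le_one_div_of_le (by norm_num) (by linarith [Real.one_le_exp zero_le_one]))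
    rw [div_le_iff₀ (by linarith)]
    nlinarith
  have hsR : 4 * reverseHolderConst (1 / Real.exp 1)⁻¹ 2 * (ε ^ 2 / L * (20 * L)) ≤ 1 := by
    rw [one_div, inv_inv]
    refine le_of_eq_of_le ?_ h_const
    field_simp
    ring
  have h_main :=
    h.integral_gaussPdf_mul_le_add_exp hlc (by positivity) (by positivity) hs hsR hg hgT
  rw [Real.coe_toNNReal T hT₀.le] at h_main
  refine h_main.trans (add_le_add_right ?_ _)
  calc T * Metric.diam K * Real.exp (-(20 * L) / 4) * 2 ^ n
      ≤ T * T * (Real.exp (-(5 * L)) * 2 ^ n) := by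
        rw [show -(20 * L) / 4 = -(5 * L) by ring, mul_assoc]
        gcongr
    _ ≤ T * T * (1 / T ^ 4) := by gcongr; exact exp_neg_five_mul_log_mul_two_pow_le hn hT
    _ = 1 / T ^ 2 := by field_simp

/-- **Inequality (14).** The Gaussian approximation `r[p] = N(μ(p), (ε²/(n log T)) Cov(p))`
of `p` is approximately convexly dominated by `p`. -/
theorem gaussian_approximation_convex_domination
    (n : ℕ) (hn : 1 ≤ n) (T : ℝ) (hT : 10 ≤ T) (hTn : (n : ℝ) ≤ T)
    (ε : ℝ) (hε : ε = 1 / (1600 * Real.exp 1))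
    (K : Set (EuclideanSpace ℝ (Fin n))) (hKcompact : IsCompact K) (hKconv : Convex ℝ K)
    (hKint : (interior K).Nonempty) (hKdiam : Metric.diam K ≤ T)
    (p : EuclideanSpace ℝ (Fin n) → ℝ) (hp0 : ∀ x, 0 ≤ p x)
    (hp1 : ∫ x, p x = 1) (hpsupp : ∀ x, x ∉ K → p x = 0)
    (hplc : ApproxLogConcave (1 / Real.exp 1) p)
    (g : EuclideanSpace ℝ (Fin n) → ℝ)
    (hg0 : ∀ x, 0 ≤ g x) (hgconv : ConvexOn ℝ Set.univ g)
    (hgLip : LipschitzWith T.toNNReal g)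
    (hgμ : g (densMean n p) ≤ 2) :
    ∫ x, gaussPdf n (densMean n p) ((ε ^ 2 / (n * Real.log T)) • densCov n p) x * g x
      ≤ (∫ x, g x * p x) + 1 / T ^ 2 := by
  subst hε
  exact gaussian_approximation_convex_domination_general hn (by linarith) (by positivity) le_rfl
    ⟨hKcompact, hp0, hp1, hpsupp⟩ hKdiam hplc hgconv hgLip
end
end

section
/- Let 𝒦 ⊂ ℝⁿ be a convex body and let 𝓔 be an ellipsoid centered at the origin (the image of the unit Euclidean ball under an invertible linear map). If Vol(𝒦 ∩ 𝓔) ≥ (1/2)·Vol(𝒦), then 𝒦 ⊂ 10n·𝓔. -/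
/-!
Suppose a point `x ∈ K` lies outside `((1 + q) / (1 - q)) • E`. The homotheties centred at `x` of
ratios `q, q², q³, …` carry `K ∩ E` into `K` but off `E`, because `E` is symmetric and convex.
Since the homothety of ratio `q ^ j` is that of ratio `q ^ i` after that of ratio `q ^ (j - i)`,
these copies are pairwise disjoint, also from `K ∩ E` itself. Their volumes form a geometric series
of ratio `q ^ n`, whence `vol (K ∩ E) ≤ (1 - q ^ n) * vol K`. The choice `(1 + q) / (1 - q) = 4 * n`
makes `q ^ n > 1 / 2` by Bernoulli's inequality, so `K ∩ E` has less than half of the volume of `K`.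
-/

open MeasureTheory ProbabilityTheory Real
open scoped Pointwise

noncomputable section

lemma half_lt_four_mul_sub_one_div_pow (n : ℕ) :
    (1 / 2 : ℝ) < ((4 * n - 1) / (4 * n + 1)) ^ n := by
  have hn : (0 : ℝ) < 4 * n + 1 := by positivity
  calc (1 / 2 : ℝ) < 1 + n * ((4 * n - 1) / (4 * n + 1) - 1) := by
        rw [div_sub_one hn.ne', mul_div_assoc', ← sub_lt_iff_lt_add', lt_div_iff₀ hn]
        linarith
    _ ≤ ((4 * n - 1) / (4 * n + 1)) ^ n := by
        refine one_add_mul_sub_le_pow ?_ n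
        rw [le_div_iff₀ hn]
        linarith [n.cast_nonneg (α := ℝ)]

lemma absConvex_image {𝕜 V W : Type*} [SeminormedRing 𝕜] [PartialOrder 𝕜]
    [AddCommGroup V] [Module 𝕜 V] [AddCommGroup W] [Module 𝕜 W] {S : Set V}
    (hS : AbsConvex 𝕜 S) (f : V →ₗ[𝕜] W) : AbsConvex 𝕜 (f '' S) :=
  ⟨fun a ha ↦ image_smul_set f a S ▸ Set.image_mono (hS.1 a ha), hS.2.linear_image f⟩

lemma pairwise_disjoint_image_homothety_pow {𝕜 V P : Type*} [Field 𝕜] [AddCommGroup V]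
    [Module 𝕜 V] [AddTorsor V P] {S : Set P} {x : P} {q : 𝕜} (hq : q ≠ 0)
    (hS : ∀ k : ℕ, k ≠ 0 → Disjoint S (AffineMap.homothety x (q ^ k) '' S)) :
    Pairwise (Function.onFun Disjoint fun k : ℕ ↦ AffineMap.homothety x (q ^ k) '' S) := by
  rw [pairwise_disjoint_on]
  intro i j hij
  have hcomp : AffineMap.homothety x (q ^ j) '' S =
      AffineMap.homothety x (q ^ i) '' (AffineMap.homothety x (q ^ (j - i)) '' S) := by
    rw [← pow_mul_pow_sub q hij.le, AffineMap.homothety_mul, AffineMap.coe_comp, Set.image_comp]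
  rw [hcomp, Set.disjoint_image_iff (AffineMap.homothety_injective x (pow_ne_zero i hq))]
  exact hS (j - i) (Nat.sub_ne_zero_of_lt hij)

section Homothety

variable {V : Type*} [AddCommGroup V] [Module ℝ V] {E : Set V} {x y : V} {q r : ℝ}

lemma mem_smul_of_homothety_mem (hE : AbsConvex ℝ E) (hr0 : 0 ≤ r) (hr1 : r < 1) (hy : y ∈ E)
    (hxy : AffineMap.homothety x r y ∈ E) : x ∈ ((1 + r) / (1 - r)) • E := by
  have hsum : AffineMap.homothety x r y - r • y ∈ (1 + r) • E := by
    rw [hE.2.add_smul zero_le_one hr0, one_smul, sub_eq_add_neg, ← smul_neg]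
    exact Set.add_mem_add hxy (Set.smul_mem_smul_set (hE.1.neg_mem_iff.2 hy))
  have hx : AffineMap.homothety x r y - r • y = (1 - r) • x := by
    simp only [AffineMap.homothety_apply, vsub_eq_sub, vadd_eq_add]
    module
  rw [div_eq_inv_mul, mul_smul, Set.mem_inv_smul_set_iff₀ (sub_pos.2 hr1).ne', ← hx]
  exact hsum

lemma disjoint_image_homothety_of_notMem_smul (hE : AbsConvex ℝ E) (hr0 : 0 ≤ r) (hrq : r ≤ q)
    (hq1 : q < 1) (hx : x ∉ ((1 + q) / (1 - q)) • E) :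
    Disjoint E (AffineMap.homothety x r '' E) := by
  rw [Set.disjoint_right]
  rintro _ ⟨y, hy, rfl⟩ hxy
  have hratio : (1 + r) / (1 - r) ≤ (1 + q) / (1 - q) :=
    div_le_div₀ (by linarith) (by linarith) (by linarith) (by linarith)
  have hnonneg : 0 ≤ (1 + r) / (1 - r) := div_nonneg (by linarith) (by linarith)
  refine hx (hE.1.smul_mono ?_ (mem_smul_of_homothety_mem hE hr0 (hrq.trans_lt hq1) hy hxy))
  rwa [Real.norm_of_nonneg hnonneg, Real.norm_of_nonneg (hnonneg.trans hratio)]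

end Homothety

section Volume

variable {V : Type*} [NormedAddCommGroup V] [NormedSpace ℝ V] [FiniteDimensional ℝ V]
  [MeasurableSpace V] [BorelSpace V] (μ : Measure V) [μ.IsAddHaarMeasure]
  {K E S : Set V} {x : V} {q : ℝ}

lemma measure_iUnion_image_homothety_pow (hS : Convex ℝ S) (hq : 0 ≤ q)
    (hdisj : Pairwise
      (Function.onFun Disjoint fun k : ℕ ↦ AffineMap.homothety x (q ^ k) '' S)) :
    μ (⋃ k : ℕ, AffineMap.homothety x (q ^ k) '' S) =
      (1 - ENNReal.ofReal (q ^ Module.finrank ℝ V))⁻¹ * μ S := by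
  have hterm (k : ℕ) : μ (AffineMap.homothety x (q ^ k) '' S) =
      ENNReal.ofReal (q ^ Module.finrank ℝ V) ^ k * μ S := by
    rw [Measure.addHaar_image_homothety, abs_of_nonneg (by positivity), pow_right_comm,
      ENNReal.ofReal_pow (by positivity)]
  rw [measure_iUnion₀ (hdisj.mono fun _ _ h ↦ h.aedisjoint)
    fun k ↦ (hS.affine_image _).nullMeasurableSet μ]
  simp_rw [hterm]
  rw [ENNReal.tsum_mul_right, ENNReal.tsum_geometric]

lemma inv_one_sub_pow_mul_measure_inter_le (hK : Convex ℝ K) (hE : AbsConvex ℝ E) (hx : x ∈ K)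
    (hq0 : 0 < q) (hq1 : q < 1) (hxE : x ∉ ((1 + q) / (1 - q)) • E) :
    (1 - ENNReal.ofReal (q ^ Module.finrank ℝ V))⁻¹ * μ (K ∩ E) ≤ μ K := by
  have hdisj : ∀ k : ℕ, k ≠ 0 →
      Disjoint (K ∩ E) (AffineMap.homothety x (q ^ k) '' (K ∩ E)) := fun k hk ↦
    (disjoint_image_homothety_of_notMem_smul hE (by positivity)
      (pow_le_of_le_one hq0.le hq1.le hk) hq1 hxE).mono
      Set.inter_subset_right (Set.image_mono Set.inter_subset_right)
  rw [← measure_iUnion_image_homothety_pow μ (hK.inter hE.2) hq0.le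
    (pairwise_disjoint_image_homothety_pow hq0.ne' hdisj)]
  refine measure_mono (Set.iUnion_subset fun k ↦ ?_)
  rintro _ ⟨y, ⟨hy, -⟩, rfl⟩
  rw [AffineMap.homothety_eq_lineMap]
  exact hK.lineMap_mem hx hy ⟨by positivity, pow_le_one₀ hq0.le hq1.le⟩

theorem subset_smul_of_half_measure_le_of_half_lt_pow (hK : Convex ℝ K) (hE : AbsConvex ℝ E)
    (hK0 : μ K ≠ 0) (hKtop : μ K ≠ ⊤) (hvol : μ K / 2 ≤ μ (K ∩ E)) (hq0 : 0 < q) (hq1 : q < 1)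
    (hq : 1 / 2 < q ^ Module.finrank ℝ V) : K ⊆ ((1 + q) / (1 - q)) • E := by
  intro x hx
  by_contra hxE
  have htwo : 2 < (1 - ENNReal.ofReal (q ^ Module.finrank ℝ V))⁻¹ := by
    rw [ENNReal.lt_inv_iff_lt_inv, ← ENNReal.ofReal_one, ← ENNReal.ofReal_sub _ (by positivity),
      ← ENNReal.ofReal_ofNat, ← ENNReal.ofReal_inv_of_pos two_pos]
    exact (ENNReal.ofReal_lt_ofReal_iff (by norm_num)).2 (by linarith)
  have hinter0 : μ (K ∩ E) ≠ 0 := ((ENNReal.half_pos hK0).trans_le hvol).ne'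
  have hintertop : μ (K ∩ E) ≠ ⊤ := measure_ne_top_of_subset Set.inter_subset_left hKtop
  refine lt_irrefl (μ K) ?_
  calc μ K ≤ 2 * μ (K ∩ E) := by
        rwa [ENNReal.div_le_iff two_ne_zero ENNReal.ofNat_ne_top, mul_comm] at hvol
    _ < (1 - ENNReal.ofReal (q ^ Module.finrank ℝ V))⁻¹ * μ (K ∩ E) :=
        ENNReal.mul_lt_mul_left hinter0 hintertop htwo
    _ ≤ μ K := inv_one_sub_pow_mul_measure_inter_le μ hK hE hx hq0 hq1 hxE

theorem convex_body_in_dilated_ellipsoid_general (hK : Convex ℝ K) (hE : AbsConvex ℝ E)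
    (hK0 : μ K ≠ 0) (hKtop : μ K ≠ ⊤) (hvol : μ K / 2 ≤ μ (K ∩ E)) :
    K ⊆ (4 * Module.finrank ℝ V : ℝ) • E := by
  rcases Nat.eq_zero_or_pos (Module.finrank ℝ V) with hd | hd
  · have : Subsingleton V := Module.finrank_zero_iff.1 hd
    have hEne : E.Nonempty := (nonempty_of_measure_ne_zero
      ((ENNReal.half_pos hK0).trans_le hvol).ne').mono Set.inter_subset_right
    exact fun x _ ↦ Subsingleton.elim 0 x ▸ (hE.1.smul _).zero_mem hEne.smul_set
  have hd1 : (1 : ℝ) ≤ Module.finrank ℝ V := Nat.one_le_cast.2 hd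
  set d : ℝ := ↑(Module.finrank ℝ V)
  have hq0 : 0 < (4 * d - 1) / (4 * d + 1) := div_pos (by linarith) (by linarith)
  have hq1 : (4 * d - 1) / (4 * d + 1) < 1 := (div_lt_one (by linarith)).2 (by linarith)
  have hratio : (1 + (4 * d - 1) / (4 * d + 1)) / (1 - (4 * d - 1) / (4 * d + 1)) = 4 * d := by
    field_simp
    ring
  rw [← hratio]
  exact subset_smul_of_half_measure_le_of_half_lt_pow μ hK hE hK0 hKtop hvol hq0 hq1
    (half_lt_four_mul_sub_one_div_pow _)

end Volume

/-- **Lemma 5.5.** If a convex body `𝒦` has at least half of its volume inside an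
origin-centered ellipsoid `𝓔`, then `𝒦 ⊆ 10n·𝓔`. -/
theorem convex_body_in_dilated_ellipsoid
    (n : ℕ) (K : Set (EuclideanSpace ℝ (Fin n)))
    (hKcompact : IsCompact K) (hKconv : Convex ℝ K) (hKint : (interior K).Nonempty)
    (A : EuclideanSpace ℝ (Fin n) →ₗ[ℝ] EuclideanSpace ℝ (Fin n)) (hA : Function.Bijective A)
    (E : Set (EuclideanSpace ℝ (Fin n))) (hE : E = A '' Metric.closedBall 0 1)
    (hvol : volume K / 2 ≤ volume (K ∩ E)) :
    K ⊆ (10 * n : ℝ) • E := by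
  have hEabs : AbsConvex ℝ E :=
    hE ▸ absConvex_image ⟨balanced_closedBall_zero, convex_closedBall 0 1⟩ A
  have hK0 : volume K ≠ 0 := (Measure.measure_pos_of_nonempty_interior _ hKint).ne'
  calc K ⊆ (4 * n : ℝ) • E := by
        simpa only [finrank_euclideanSpace_fin] using convex_body_in_dilated_ellipsoid_general
          volume hKconv hEabs hK0 hKcompact.measure_lt_top.ne hvol
    _ ⊆ (10 * n : ℝ) • E := hEabs.1.smul_mono <| by
        rw [Real.norm_of_nonneg (by positivity), Real.norm_of_nonneg (by positivity)]
        gcongr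
        norm_num
end
end

section
/- Fix a dimension n ≥ 1 and an integer T ≥ 10. Let X be a Gaussian random vector in ℝⁿ with law N(0, Θ) for a positive definite matrix Θ. Let f : ℝⁿ → [0,∞) be a measurable function satisfying f(x) = 0 whenever ⟨x, Θ⁻¹x⟩ ≤ 20·n·log T, and f(x) ≤ T·|x| + 2 for all x ∈ ℝⁿ. Then E[f(X)] ≤ (‖Θ‖_op^{1/2} + 1)/T³. -/
open MeasureTheory ProbabilityTheory Real

noncomputable section

/-!
Write `Θ = A Aᵀ` with `A` invertible. The substitution `x = μ + A z` turns `N(μ, Θ)` into `N(0, 1)`,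
the quadratic form of `Θ⁻¹` into `|z|²`, and gives `|x - μ| ≤ ‖Θ‖^{1/2} |z|`. For the standard
Gaussian, split the exponent `|z|² / 2` into three parts: where `|z|² > R`, the part `|z|² / 4`
yields the factor `exp (-R / 4)`; one part `|z|² / 8` absorbs the linear growth; the other
integrates to `2ⁿ`. With `R = 20 n log T` the outcome carries the factor `(2 / T⁵)ⁿ`.
-/

open scoped RealInnerProductSpace ENNReal

lemma integral_le_of_lintegral_ofReal_le {α : Type*} {_ : MeasurableSpace α} {μ : Measure α}
    {f : α → ℝ} {c : ℝ} (hc : 0 ≤ c) (h : ∫⁻ x, ENNReal.ofReal (f x) ∂μ ≤ ENNReal.ofReal c) :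
    ∫ x, f x ∂μ ≤ c := by
  by_cases hf : Integrable f μ
  · rw [integral_eq_lintegral_pos_part_sub_lintegral_neg_part hf]
    exact (sub_le_self _ ENNReal.toReal_nonneg).trans (ENNReal.toReal_le_of_le_ofReal hc h)
  · rwa [integral_undef hf]

lemma lintegral_eq_lintegral_abs_det_mul_comp_const_add {E : Type*} [NormedAddCommGroup E]
    [NormedSpace ℝ E] [FiniteDimensional ℝ E] [MeasurableSpace E] [BorelSpace E]
    (μ : Measure E) [μ.IsAddHaarMeasure] {L : E →L[ℝ] E} (hL : IsUnit L) (v : E) (g : E → ℝ≥0∞) :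
    ∫⁻ x, g x ∂μ = ∫⁻ z, ENNReal.ofReal |L.det| * g (v + L z) ∂μ := by
  have hbij : Function.Bijective fun z ↦ v + L z :=
    (Equiv.addLeft v).bijective.comp (ContinuousLinearMap.isUnit_iff_bijective.mp hL)
  simpa [hbij.surjective.range_eq] using
    lintegral_image_eq_lintegral_abs_det_fderiv_mul μ MeasurableSet.univ
      (fun z _ ↦ (L.hasFDerivAt (x := z)).hasFDerivWithinAt.const_add v) hbij.injective.injOn g

lemma lintegral_ofReal_exp_neg_mul_sq_norm {V : Type*} [NormedAddCommGroup V]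
    [InnerProductSpace ℝ V] [FiniteDimensional ℝ V] [MeasurableSpace V] [BorelSpace V]
    {b : ℝ} (hb : 0 < b) :
    ∫⁻ v : V, ENNReal.ofReal (exp (-b * ‖v‖ ^ 2)) =
      ENNReal.ofReal ((π / b) ^ (Module.finrank ℝ V / 2 : ℝ)) := by
  have hint := GaussianFourier.integral_rexp_neg_mul_sq_norm (V := V) hb
  rw [← hint, ofReal_integral_eq_lintegral_ofReal _ (.of_forall fun v ↦ (exp_pos _).le)]
  exact .of_integral_ne_zero (hint ▸ (by positivity))

section EuclideanCLM

variable {ι : Type*} [Fintype ι] [DecidableEq ι]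

lemma sum_sum_mul_mul_eq_inner_toEuclideanCLM (M : Matrix ι ι ℝ)
    (x : EuclideanSpace ℝ ι) :
    ∑ i, ∑ j, x i * M i j * x j = ⟪x, Matrix.toEuclideanCLM (𝕜 := ℝ) M x⟫ := by
  simp only [Matrix.inner_toEuclideanCLM, dotProduct, Matrix.mulVec, Finset.mul_sum, mul_assoc]

lemma sum_sum_toEuclideanCLM_mul_inv_mul_star {A : Matrix ι ι ℝ} (hA : IsUnit A)
    (z : EuclideanSpace ℝ ι) :
    ∑ i, ∑ j, Matrix.toEuclideanCLM (𝕜 := ℝ) A z i * (A * star A)⁻¹ i j *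
      Matrix.toEuclideanCLM (𝕜 := ℝ) A z j = ‖z‖ ^ 2 := by
  have hdet : IsUnit A.det := (Matrix.isUnit_iff_isUnit_det A).mp hA
  have hcancel : star A * ((A * star A)⁻¹ * A) = 1 := by
    rw [Matrix.mul_inv_rev, mul_assoc, Matrix.nonsing_inv_mul _ hdet, mul_one,
      Matrix.mul_nonsing_inv _ ((Matrix.isUnit_iff_isUnit_det _).mp hA.star)]
  rw [sum_sum_mul_mul_eq_inner_toEuclideanCLM, ← ContinuousLinearMap.adjoint_inner_right,
    ← ContinuousLinearMap.star_eq_adjoint, ← map_star, ← mul_apply_eq_comp,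
    ← mul_apply_eq_comp, ← map_mul, ← map_mul, mul_assoc, hcancel, map_one,
    one_apply_eq_self, real_inner_self_eq_norm_sq]

lemma det_toEuclideanCLM {𝕜 : Type*} [RCLike 𝕜] (A : Matrix ι ι 𝕜) :
    (Matrix.toEuclideanCLM (𝕜 := 𝕜) A).det = A.det := by
  rw [ContinuousLinearMap.det, Matrix.coe_toEuclideanCLM_eq_toEuclideanLin,
    Matrix.toEuclideanLin_eq_toLin_orthonormal, LinearMap.det_toLin]

lemma norm_toEuclideanCLM_eq_sqrt_norm_mul_star {𝕜 : Type*} [RCLike 𝕜] (A : Matrix ι ι 𝕜) :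
    ‖Matrix.toEuclideanCLM (𝕜 := 𝕜) A‖ = √‖Matrix.toEuclideanCLM (𝕜 := 𝕜) (A * star A)‖ := by
  rw [map_mul, map_star, CStarRing.norm_self_mul_star (x := Matrix.toEuclideanCLM (𝕜 := 𝕜) A),
    sqrt_mul_self (norm_nonneg _)]

end EuclideanCLM

section Whitening

variable {n : ℕ} {A : Matrix (Fin n) (Fin n) ℝ}

lemma gaussPdf_zero_one (z : EuclideanSpace ℝ (Fin n)) :
    gaussPdf n 0 1 z = (2 * π) ^ (-(n : ℝ) / 2) * exp (-(1 / 2) * ‖z‖ ^ 2) := by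
  have hquad : ∑ i, ∑ j, z i * (1 : Matrix (Fin n) (Fin n) ℝ) i j * z j = ‖z‖ ^ 2 := by
    simpa using sum_sum_toEuclideanCLM_mul_inv_mul_star isUnit_one z
  simp [gaussPdf, hquad]

lemma abs_det_mul_gaussPdf_add_toEuclideanCLM (hA : IsUnit A) (μ z : EuclideanSpace ℝ (Fin n)) :
    |A.det| * gaussPdf n μ (A * star A) (μ + Matrix.toEuclideanCLM (𝕜 := ℝ) A z) =
      gaussPdf n 0 1 z := by
  have hdet : (A * star A).det ^ (-(1 : ℝ) / 2) = |A.det|⁻¹ := by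
    rw [Matrix.det_mul, Matrix.star_eq_conjTranspose, Matrix.det_conjTranspose, star_trivial,
      neg_div, rpow_neg (mul_self_nonneg _), ← sqrt_eq_rpow, sqrt_mul_self_eq_abs]
  have hdet0 : |A.det| ≠ 0 := abs_ne_zero.mpr ((Matrix.isUnit_iff_isUnit_det A).mp hA).ne_zero
  rw [gaussPdf_zero_one]
  simp only [gaussPdf, PiLp.add_apply, add_sub_cancel_left, hdet,
    sum_sum_toEuclideanCLM_mul_inv_mul_star hA]
  field_simp

lemma lintegral_ofReal_gaussPdf_mul_star (hA : IsUnit A) (μ : EuclideanSpace ℝ (Fin n))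
    (f : EuclideanSpace ℝ (Fin n) → ℝ) :
    ∫⁻ x, ENNReal.ofReal (gaussPdf n μ (A * star A) x * f x) =
      ∫⁻ z, ENNReal.ofReal
        (gaussPdf n 0 1 z * f (μ + Matrix.toEuclideanCLM (𝕜 := ℝ) A z)) := by
  rw [lintegral_eq_lintegral_abs_det_mul_comp_const_add volume
    (hA.map (Matrix.toEuclideanCLM (𝕜 := ℝ))) μ]
  simp_rw [det_toEuclideanCLM, ← ENNReal.ofReal_mul (abs_nonneg _), ← mul_assoc,
    abs_det_mul_gaussPdf_add_toEuclideanCLM hA]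

end Whitening

section Tail

lemma le_two_mul_exp_sq_div_eight (r : ℝ) : r ≤ 2 * exp (r ^ 2 / 8) := by
  linarith [add_one_le_exp (r ^ 2 / 8), sq_nonneg (r - 2)]

lemma exp_neg_sq_mul_le_of_growth {a b r R y : ℝ} (ha : 0 ≤ a) (hb : 0 ≤ b)
    (hvanish : r ^ 2 ≤ R → y ≤ 0) (hgrowth : y ≤ a * r + b) :
    exp (-(1 / 2) * r ^ 2) * y ≤ (2 * a + b) * exp (-R / 4) * exp (-(1 / 8) * r ^ 2) := by
  rcases le_or_gt (r ^ 2) R with hr | hr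
  · exact (mul_nonpos_of_nonneg_of_nonpos (exp_pos _).le (hvanish hr)).trans (by positivity)
  have hy : y ≤ (2 * a + b) * exp (r ^ 2 / 8) := calc
    y ≤ a * r + b * 1 := by rwa [mul_one]
    _ ≤ a * (2 * exp (r ^ 2 / 8)) + b * exp (r ^ 2 / 8) := by
      gcongr
      · exact le_two_mul_exp_sq_div_eight r
      · exact one_le_exp (by positivity)
    _ = (2 * a + b) * exp (r ^ 2 / 8) := by ring
  calc exp (-(1 / 2) * r ^ 2) * y
      ≤ exp (-(1 / 2) * r ^ 2) * ((2 * a + b) * exp (r ^ 2 / 8)) := by gcongr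
    _ = (2 * a + b) * exp (-r ^ 2 / 4) * exp (-(1 / 8) * r ^ 2) := by
      rw [mul_left_comm, ← exp_add, mul_assoc, ← exp_add]
      ring_nf
    _ ≤ (2 * a + b) * exp (-R / 4) * exp (-(1 / 8) * r ^ 2) := by gcongr

lemma two_pi_rpow_mul_lintegral_exp_neg_sq_norm_div_eight (n : ℕ) :
    ENNReal.ofReal ((2 * π) ^ (-(n : ℝ) / 2)) *
      ∫⁻ z : EuclideanSpace ℝ (Fin n), ENNReal.ofReal (exp (-(1 / 8) * ‖z‖ ^ 2)) = 2 ^ n := by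
  have hpow : (2 * π) ^ (-(n : ℝ) / 2) * (π / (1 / 8)) ^ ((n : ℝ) / 2) = 2 ^ n := by
    calc (2 * π) ^ (-(n : ℝ) / 2) * (π / (1 / 8)) ^ ((n : ℝ) / 2)
        = (2 * π / (π / (1 / 8))) ^ (-(n : ℝ) / 2) := by
          rw [div_rpow (x := 2 * π) (by positivity) (by positivity), neg_div,
            rpow_neg (x := π / (1 / 8)) (by positivity), div_inv_eq_mul]
      _ = ((2 : ℝ) ^ (-2 : ℝ)) ^ (-(n : ℝ) / 2) := by
          congr 1
          rw [rpow_neg zero_le_two, rpow_two]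
          field_simp
          norm_num
      _ = 2 ^ n := by
          rw [← rpow_mul zero_le_two, ← rpow_natCast]
          congr 1
          ring
  rw [lintegral_ofReal_exp_neg_mul_sq_norm (by norm_num), finrank_euclideanSpace_fin,
    ← ENNReal.ofReal_mul (by positivity), hpow, ENNReal.ofReal_pow zero_le_two,
    ENNReal.ofReal_ofNat]

variable {n : ℕ} {a b R : ℝ} {f : EuclideanSpace ℝ (Fin n) → ℝ}

lemma lintegral_ofReal_gaussPdf_zero_one_mul_le (ha : 0 ≤ a) (hb : 0 ≤ b)
    (hvanish : ∀ z, ‖z‖ ^ 2 ≤ R → f z ≤ 0) (hgrowth : ∀ z, f z ≤ a * ‖z‖ + b) :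
    ∫⁻ z, ENNReal.ofReal (gaussPdf n 0 1 z * f z) ≤
      ENNReal.ofReal ((2 * a + b) * exp (-R / 4) * 2 ^ n) := by
  have hK : 0 ≤ (2 * a + b) * exp (-R / 4) := by positivity
  calc ∫⁻ z, ENNReal.ofReal (gaussPdf n 0 1 z * f z)
      ≤ ∫⁻ z, ENNReal.ofReal ((2 * a + b) * exp (-R / 4)) *
          (ENNReal.ofReal ((2 * π) ^ (-(n : ℝ) / 2)) *
            ENNReal.ofReal (exp (-(1 / 8) * ‖z‖ ^ 2))) := by
        refine lintegral_mono fun z ↦ ?_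
        rw [← ENNReal.ofReal_mul (by positivity), ← ENNReal.ofReal_mul hK, gaussPdf_zero_one,
          mul_assoc, mul_left_comm ((2 * a + b) * _)]
        refine ENNReal.ofReal_le_ofReal (mul_le_mul_of_nonneg_left ?_ (by positivity))
        exact exp_neg_sq_mul_le_of_growth ha hb (hvanish z) (hgrowth z)
    _ = ENNReal.ofReal ((2 * a + b) * exp (-R / 4) * 2 ^ n) := by
        rw [lintegral_const_mul _ (by measurability), lintegral_const_mul _ (by measurability),
          two_pi_rpow_mul_lintegral_exp_neg_sq_norm_div_eight, ENNReal.ofReal_mul hK,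
          ENNReal.ofReal_pow zero_le_two, ENNReal.ofReal_ofNat]

open scoped MatrixOrder Matrix.Norms.L2Operator in
lemma lintegral_ofReal_gaussPdf_mul_le {μ : EuclideanSpace ℝ (Fin n)}
    {Θ : Matrix (Fin n) (Fin n) ℝ} (hΘ : Θ.PosDef) (ha : 0 ≤ a) (hb : 0 ≤ b)
    (hvanish : ∀ x, ∑ i, ∑ j, (x i - μ i) * Θ⁻¹ i j * (x j - μ j) ≤ R → f x ≤ 0)
    (hgrowth : ∀ x, f x ≤ a * ‖x - μ‖ + b) :
    ∫⁻ x, ENNReal.ofReal (gaussPdf n μ Θ x * f x) ≤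
      ENNReal.ofReal
        ((2 * (a * √‖Matrix.toEuclideanCLM (𝕜 := ℝ) Θ‖) + b) * exp (-R / 4) * 2 ^ n) := by
  obtain ⟨A, hA, rfl⟩ :=
    CStarAlgebra.isStrictlyPositive_iff_eq_mul_star_self.mp hΘ.isStrictlyPositive
  rw [lintegral_ofReal_gaussPdf_mul_star hA, ← norm_toEuclideanCLM_eq_sqrt_norm_mul_star]
  refine lintegral_ofReal_gaussPdf_zero_one_mul_le (by positivity) hb
    (fun z hz ↦ hvanish _ ?_) fun z ↦ (hgrowth _).trans ?_
  · simpa only [PiLp.add_apply, add_sub_cancel_left,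
      sum_sum_toEuclideanCLM_mul_inv_mul_star hA] using hz
  · rw [add_sub_cancel_left, mul_assoc]
    gcongr
    exact ContinuousLinearMap.le_opNorm _ z

lemma exp_neg_mul_log_mul_two_pow_le (hn : 1 ≤ n) {T : ℝ} (hT : 2 ≤ T) :
    exp (-(20 * n * log T) / 4) * 2 ^ n ≤ 2 / T ^ 5 := by
  have hexp : exp (-(20 * n * log T) / 4) = ((T ^ 5)⁻¹) ^ n := by
    rw [← exp_log (show 0 < T by linarith), ← exp_nat_mul, ← exp_neg, ← exp_nat_mul, log_exp]
    push_cast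
    ring_nf
  rw [hexp, ← mul_pow, inv_mul_eq_div]
  refine pow_le_of_le_one (by positivity) ((div_le_one (by positivity)).mpr ?_) (by lia)
  exact hT.trans (le_self_pow₀ (by linarith) (by norm_num))

lemma two_mul_add_two_mul_two_div_pow_le {T : ℝ} (hT : 4 ≤ T) {s : ℝ} (hs : 0 ≤ s) :
    (2 * (T * s) + 2) * (2 / T ^ 5) ≤ (s + 1) / T ^ 3 := by
  have hsq : 4 * T ≤ T ^ 2 := by nlinarith
  calc (2 * (T * s) + 2) * (2 / T ^ 5)
      = (4 * T * s + 4) / T ^ 5 := by ring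
    _ ≤ (T ^ 2 * s + T ^ 2) / T ^ 5 := by gcongr; linarith
    _ = (s + 1) / T ^ 3 := by field_simp

end Tail

/-- Bounding the `ℝ≥0∞`-valued integral also excludes functions that are too large to be integrable,
to which the Bochner integral would assign the value `0`. -/
theorem gaussian_tail_general {n : ℕ} (hn : 1 ≤ n) {T : ℝ} (hT : 4 ≤ T)
    {μ : EuclideanSpace ℝ (Fin n)} {Θ : Matrix (Fin n) (Fin n) ℝ} (hΘ : Θ.PosDef)
    {f : EuclideanSpace ℝ (Fin n) → ℝ}
    (hvanish : ∀ x, ∑ i, ∑ j, (x i - μ i) * Θ⁻¹ i j * (x j - μ j) ≤ 20 * n * log T → f x ≤ 0)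
    (hgrowth : ∀ x, f x ≤ T * ‖x - μ‖ + 2) :
    ∫⁻ x, ENNReal.ofReal (gaussPdf n μ Θ x * f x) ≤
      ENNReal.ofReal ((√‖Matrix.toEuclideanCLM (𝕜 := ℝ) Θ‖ + 1) / T ^ 3) := by
  refine (lintegral_ofReal_gaussPdf_mul_le hΘ (by linarith) zero_le_two hvanish hgrowth).trans
    (ENNReal.ofReal_le_ofReal ?_)
  rw [mul_assoc]
  refine le_trans ?_ (two_mul_add_two_mul_two_div_pow_le hT (sqrt_nonneg _))
  gcongr
  exact exp_neg_mul_log_mul_two_pow_le hn (by linarith)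

/-- **Lemma 7.2.** Gaussian tail estimate: if `X ∼ N(0, Θ)` and `f ≥ 0` vanishes on
`{⟨x, Θ⁻¹x⟩ ≤ 20 n log T}` and satisfies `f(x) ≤ T|x| + 2`, then
`E f(X) ≤ (‖Θ‖_op^{1/2} + 1)/T³`. -/
theorem gaussian_tail
    (n : ℕ) (hn : 1 ≤ n) (T : ℕ) (hT : 10 ≤ T)
    (Θ : Matrix (Fin n) (Fin n) ℝ) (hΘ : Θ.PosDef)
    (f : EuclideanSpace ℝ (Fin n) → ℝ) (hfmeas : Measurable f) (hf0 : ∀ x, 0 ≤ f x)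
    (hvanish : ∀ x : EuclideanSpace ℝ (Fin n),
      (∑ i, ∑ j, x i * Θ⁻¹ i j * x j) ≤ 20 * n * Real.log T → f x = 0)
    (hgrowth : ∀ x, f x ≤ T * ‖x‖ + 2) :
    ∫ x, gaussPdf n 0 Θ x * f x
      ≤ (Real.sqrt ‖Matrix.toEuclideanCLM (𝕜 := ℝ) Θ‖ + 1) / (T : ℝ) ^ 3 := by
  exact integral_le_of_lintegral_ofReal_le (by positivity)
    (gaussian_tail_general (μ := 0) hn (by norm_cast; lia) hΘ
      (fun x hx ↦ (hvanish x (by simpa using hx)).le) (by simpa using hgrowth))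
end
end

section
/- Let ε ∈ (0,1) and let f, g be nonnegative measurable functions on ℝ with 0 < ∫ f, such that ∫ (x² + 1)·f(x) dx < ∞ and ε < g(x)/f(x) < 1/ε for all x (in particular f(x) > 0 where relevant). Define E[h] = (∫ x·h(x) dx)/(∫ h(x) dx) and Var[h] = (∫ x²·h(x) dx)/(∫ h(x) dx) − E[h]² for a nonnegative integrable h. Then |E[f] − E[g]| < √(Var[f])/(2ε²) and ε² ≤ Var[g]/Var[f] ≤ 1/ε². -/
open MeasureTheory Real

noncomputable section

/-- Mean of an (unnormalized) density `h` on `ℝ`. -/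
def densMean1 (h : ℝ → ℝ) : ℝ := (∫ x, x * h x) / ∫ x, h x

/-- Variance of an (unnormalized) density `h` on `ℝ`. -/
def densVar1 (h : ℝ → ℝ) : ℝ := (∫ x, x ^ 2 * h x) / (∫ x, h x) - densMean1 h ^ 2

/-!
The probability measures `P` and `Q` with densities `f / ∫ f` and `g / ∫ g` satisfy `Q ≤ ε⁻² P` and
`P ≤ ε⁻² Q`, one factor `ε⁻¹` coming from the densities and one from their masses. Since the mean
minimizes `t ↦ E[(X - t)²]`, the variance is monotone under such domination, up to the same factor.
For the means, the centered variable `Y = X - P[X]` satisfies `P[Y⁺] = P[Y⁻] = P[|Y|] / 2`, so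
`Q[Y] = Q[Y⁺] - Q[Y⁻] ≤ (ε⁻² - ε²) / 2 * P[|Y|]`, and `P[|Y|]` is at most the standard deviation
of `X`.
-/

open ProbabilityTheory
open scoped NNReal ENNReal

section Domination

variable {Ω : Type*} [MeasurableSpace Ω] {P Q : Measure Ω} {X Y : Ω → ℝ} {b c : ℝ≥0}

theorem one_le_of_le_smul [IsProbabilityMeasure P] [IsProbabilityMeasure Q] (h : Q ≤ c • P) :
    1 ≤ c := by
  simpa only [Measure.smul_apply, measure_univ, ENNReal.smul_def, smul_eq_mul, mul_one,
    ENNReal.one_le_coe_iff] using h Set.univ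

theorem integral_le_mul_integral_of_le_smul (h : Q ≤ c • P) (hY : 0 ≤ Y) (hYP : Integrable Y P) :
    ∫ ω, Y ω ∂Q ≤ c * ∫ ω, Y ω ∂P := by
  rw [← smul_eq_mul, ← NNReal.smul_def, ← integral_smul_nnreal_measure]
  exact integral_mono_measure h (.of_forall hY) hYP.smul_measure_nnreal

theorem variance_le_integral_sub_sq [IsProbabilityMeasure Q] (hX : AEStronglyMeasurable X Q)
    (t : ℝ) : Var[X; Q] ≤ ∫ ω, (X ω - t) ^ 2 ∂Q := by
  rw [← variance_sub_const hX t]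
  exact variance_le_expectation_sq (hX.sub aestronglyMeasurable_const)

theorem variance_le_mul_variance_of_le_smul [IsFiniteMeasure P] [IsProbabilityMeasure Q]
    (h : Q ≤ c • P) (hX : MemLp X 2 P) : Var[X; Q] ≤ c * Var[X; P] :=
  calc Var[X; Q] ≤ ∫ ω, (X ω - P[X]) ^ 2 ∂Q :=
        variance_le_integral_sub_sq (hX.of_measure_le_smul ENNReal.coe_ne_top h).1 _
    _ ≤ c * ∫ ω, (X ω - P[X]) ^ 2 ∂P :=
        integral_le_mul_integral_of_le_smul h (fun _ => sq_nonneg _)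
          (hX.sub (memLp_const _)).integrable_sq
    _ = c * Var[X; P] := by rw [variance_eq_integral hX.aemeasurable]

theorem integral_abs_sub_integral_le_sqrt_variance [IsProbabilityMeasure P] (hX : MemLp X 2 P) :
    ∫ ω, |X ω - P[X]| ∂P ≤ √(Var[X; P]) := by
  have nonneg := variance_nonneg (fun ω => |X ω - P[X]|) P
  have memLp_abs : MemLp (fun ω => |X ω - P[X]|) 2 P := (hX.sub (memLp_const _)).abs
  rw [variance_eq_sub memLp_abs] at nonneg
  simp only [Pi.pow_apply, sq_abs, ← variance_eq_integral hX.aemeasurable] at nonneg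
  exact Real.le_sqrt_of_sq_le (sub_nonneg.1 nonneg)

theorem integral_le_mul_integral_abs_of_le_smul (hQP : Q ≤ b • P) (hPQ : P ≤ c • Q)
    (hY : Integrable Y P) (hY_zero : ∫ ω, Y ω ∂P = 0) :
    ∫ ω, Y ω ∂Q ≤ (b - (c : ℝ)⁻¹) / 2 * ∫ ω, |Y ω| ∂P := by
  have hYQ : Integrable Y Q := hY.of_measure_le_smul ENNReal.coe_ne_top hQP
  -- Compare `P` and `Q` on `|Y| + Y = 2 Y⁺` and `|Y| - Y = 2 Y⁻`, which both have mean `P[|Y|]`.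
  have add_nonneg : ∀ ω, 0 ≤ |Y ω| + Y ω := fun ω => neg_le_iff_add_nonneg.1 (neg_le_abs _)
  have sub_nonneg : ∀ ω, 0 ≤ |Y ω| - Y ω := fun ω => sub_nonneg.2 (le_abs_self _)
  have upper : ∫ ω, (|Y ω| + Y ω) ∂Q ≤ b * ∫ ω, (|Y ω| + Y ω) ∂P :=
    integral_le_mul_integral_of_le_smul hQP add_nonneg (hY.abs.add hY)
  have lower : (c : ℝ)⁻¹ * ∫ ω, (|Y ω| - Y ω) ∂P ≤ ∫ ω, (|Y ω| - Y ω) ∂Q :=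
    inv_mul_le_of_le_mul₀ c.coe_nonneg (integral_nonneg sub_nonneg)
      (integral_le_mul_integral_of_le_smul hPQ sub_nonneg (hYQ.abs.sub hYQ))
  rw [integral_add hYQ.abs hYQ, integral_add hY.abs hY, hY_zero] at upper
  rw [integral_sub hYQ.abs hYQ, integral_sub hY.abs hY, hY_zero] at lower
  linarith

theorem abs_integral_le_mul_integral_abs_of_le_smul (hQP : Q ≤ b • P) (hPQ : P ≤ c • Q)
    (hY : Integrable Y P) (hY_zero : ∫ ω, Y ω ∂P = 0) :
    |∫ ω, Y ω ∂Q| ≤ (b - (c : ℝ)⁻¹) / 2 * ∫ ω, |Y ω| ∂P := by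
  refine abs_le'.2 ⟨integral_le_mul_integral_abs_of_le_smul hQP hPQ hY hY_zero, ?_⟩
  simpa only [Pi.neg_apply, integral_neg, abs_neg] using
    integral_le_mul_integral_abs_of_le_smul hQP hPQ hY.neg
      (by simp only [Pi.neg_apply, integral_neg, hY_zero, neg_zero])

theorem abs_integral_sub_integral_le_mul_sqrt_variance [IsProbabilityMeasure P]
    [IsProbabilityMeasure Q] (hQP : Q ≤ b • P) (hPQ : P ≤ c • Q) (hX : MemLp X 2 P) :
    |P[X] - Q[X]| ≤ (b - (c : ℝ)⁻¹) / 2 * √(Var[X; P]) := by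
  have hXP : Integrable X P := hX.integrable one_le_two
  have hXQ : Integrable X Q := hXP.of_measure_le_smul ENNReal.coe_ne_top hQP
  have inv_le : (c : ℝ)⁻¹ ≤ b :=
    (inv_le_one_of_one_le₀ (one_le_of_le_smul hPQ)).trans (one_le_of_le_smul hQP)
  have centered : ∫ ω, (X ω - P[X]) ∂P = 0 := by
    rw [integral_sub hXP (integrable_const _), integral_const, probReal_univ, one_smul, sub_self]
  calc |P[X] - Q[X]| = |∫ ω, (X ω - P[X]) ∂Q| := by
        rw [integral_sub hXQ (integrable_const _), integral_const, probReal_univ, one_smul,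
          abs_sub_comm]
    _ ≤ (b - (c : ℝ)⁻¹) / 2 * ∫ ω, |X ω - P[X]| ∂P :=
        abs_integral_le_mul_integral_abs_of_le_smul hQP hPQ (hXP.sub (integrable_const _)) centered
    _ ≤ (b - (c : ℝ)⁻¹) / 2 * √(Var[X; P]) := by
        gcongr
        exact integral_abs_sub_integral_le_sqrt_variance hX

theorem variance_id_pos {P : Measure ℝ} [IsProbabilityMeasure P] [NullSingletonClass P]
    (hP : MemLp id 2 P) : 0 < Var[id; P] := by
  refine (variance_nonneg id P).lt_of_ne' fun h => ?_
  have ae_eq_mean : ∀ᵐ x ∂P, x = P[id] := ae_eq_integral_of_variance_eq_zero hP h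
  have ae_ne_mean : ∀ᵐ x ∂P, x ≠ P[id] := Measure.ae_ne P _
  obtain ⟨x, hx, hx'⟩ := (ae_eq_mean.and ae_ne_mean).exists
  exact hx' hx

end Domination

section NormalizedDensity

variable {Ω : Type*} [MeasurableSpace Ω] {μ : Measure Ω} {f g : Ω → ℝ} {b c : ℝ≥0}

/-- The probability distribution with unnormalized density `h` with respect to `μ`, meaningful when
`h` is nonnegative with positive integral; negative values of the density are truncated to `0`. -/
def normalizedMeasure (μ : Measure Ω) (h : Ω → ℝ) : Measure Ω :=
  μ.withDensity fun ω => ENNReal.ofReal (h ω / ∫ ω', h ω' ∂μ)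

theorem isProbabilityMeasure_normalizedMeasure (hf0 : 0 ≤ᵐ[μ] f) (hfpos : 0 < ∫ ω, f ω ∂μ) :
    IsProbabilityMeasure (normalizedMeasure μ f) := by
  have hf : Integrable f μ := .of_integral_ne_zero hfpos.ne'
  refine ⟨?_⟩
  rw [normalizedMeasure, withDensity_apply _ .univ, setLIntegral_univ,
    ← ofReal_integral_eq_lintegral_ofReal (hf.div_const _)
    (hf0.mono fun ω hω => div_nonneg hω hfpos.le), integral_div, div_self hfpos.ne',
    ENNReal.ofReal_one]

theorem integral_normalizedMeasure (hf0 : 0 ≤ᵐ[μ] f) (hfpos : 0 < ∫ ω, f ω ∂μ) (φ : Ω → ℝ) :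
    ∫ ω, φ ω ∂(normalizedMeasure μ f) = (∫ ω, φ ω * f ω ∂μ) / ∫ ω, f ω ∂μ := by
  have hf : AEMeasurable f μ := (Integrable.of_integral_ne_zero hfpos.ne').aemeasurable
  rw [normalizedMeasure, integral_withDensity_eq_integral_toReal_smul₀ (by fun_prop)
    (.of_forall fun _ => ENNReal.ofReal_lt_top), ← integral_div]
  refine integral_congr_ae (hf0.mono fun ω hω => ?_)
  simp only
  rw [ENNReal.toReal_ofReal (div_nonneg hω hfpos.le), smul_eq_mul]
  ring

theorem integrable_normalizedMeasure (hf0 : 0 ≤ᵐ[μ] f) (hfpos : 0 < ∫ ω, f ω ∂μ) {φ : Ω → ℝ}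
    (hφ : Integrable (fun ω => φ ω * f ω) μ) : Integrable φ (normalizedMeasure μ f) := by
  have hf : AEMeasurable f μ := (Integrable.of_integral_ne_zero hfpos.ne').aemeasurable
  rw [normalizedMeasure, integrable_withDensity_iff_integrable_smul₀' (by fun_prop)
    (.of_forall fun _ => ENNReal.ofReal_lt_top)]
  refine (hφ.div_const (∫ ω, f ω ∂μ)).congr (hf0.mono fun ω hω => ?_)
  simp only
  rw [ENNReal.toReal_ofReal (div_nonneg hω hfpos.le), smul_eq_mul]
  ring

instance [NullSingletonClass μ] : NullSingletonClass (normalizedMeasure μ f) :=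
  inferInstanceAs (NullSingletonClass (μ.withDensity _))

theorem integral_pos_of_le_mul (hg0 : 0 ≤ᵐ[μ] g) (hgmeas : AEStronglyMeasurable g μ)
    (hfpos : 0 < ∫ ω, f ω ∂μ) (hgf : ∀ᵐ ω ∂μ, g ω ≤ b * f ω) (hfg : ∀ᵐ ω ∂μ, f ω ≤ c * g ω) :
    0 < ∫ ω, g ω ∂μ := by
  have hf : Integrable f μ := .of_integral_ne_zero hfpos.ne'
  have hg : Integrable g μ := by
    refine (hf.const_mul b).mono' hgmeas ?_
    filter_upwards [hg0, hgf] with ω g_nonneg g_le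
    rwa [Real.norm_of_nonneg g_nonneg]
  have mass_le := integral_mono_ae hf (hg.const_mul c) hfg
  rw [integral_const_mul] at mass_le
  exact pos_of_mul_pos_right (hfpos.trans_le mass_le) c.coe_nonneg

theorem normalizedMeasure_le_smul (hf0 : 0 ≤ᵐ[μ] f) (hfpos : 0 < ∫ ω, f ω ∂μ)
    (hgpos : 0 < ∫ ω, g ω ∂μ) (hgf : ∀ᵐ ω ∂μ, g ω ≤ b * f ω) (hfg : ∀ᵐ ω ∂μ, f ω ≤ c * g ω) :
    normalizedMeasure μ g ≤ (b * c) • normalizedMeasure μ f := by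
  have mass_le : ∫ ω, f ω ∂μ ≤ c * ∫ ω, g ω ∂μ := by
    rw [← integral_const_mul]
    exact integral_mono_ae (.of_integral_ne_zero hfpos.ne')
      ((Integrable.of_integral_ne_zero hgpos.ne').const_mul _) hfg
  have smul_eq : (b * c) • normalizedMeasure μ f = μ.withDensity
      (((b * c : ℝ≥0) : ℝ≥0∞) • fun ω => ENNReal.ofReal (f ω / ∫ ω', f ω' ∂μ)) :=
    (withDensity_smul' _ _ ENNReal.coe_ne_top).symm
  rw [smul_eq]
  refine withDensity_mono ?_
  filter_upwards [hf0, hgf] with ω f_nonneg g_le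
  rw [Pi.smul_apply, smul_eq_mul, ← ENNReal.ofReal_coe_nnreal,
    ← ENNReal.ofReal_mul (NNReal.coe_nonneg _)]
  refine ENNReal.ofReal_le_ofReal ?_
  rw [NNReal.coe_mul, ← mul_div_assoc, div_le_div_iff₀ hgpos hfpos]
  calc g ω * ∫ ω', f ω' ∂μ ≤ (b * f ω) * (c * ∫ ω', g ω' ∂μ) :=
        mul_le_mul g_le mass_le hfpos.le (mul_nonneg b.coe_nonneg f_nonneg)
    _ = b * c * f ω * ∫ ω', g ω' ∂μ := by ring

end NormalizedDensity

section Density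

variable {f g : ℝ → ℝ} {b c : ℝ≥0}

theorem integrable_sq_mul_of_integrable_sq_add_one_mul (hf : Integrable f)
    (hfint : Integrable fun x => (x ^ 2 + 1) * f x) : Integrable fun x => x ^ 2 * f x := by
  refine (hfint.sub hf).congr (.of_forall fun x => ?_)
  simp only [Pi.sub_apply]
  ring

theorem densMean1_eq_integral_normalizedMeasure (hf0 : 0 ≤ᵐ[volume] f) (hfpos : 0 < ∫ x, f x) :
    densMean1 f = (normalizedMeasure volume f)[id] :=
  (integral_normalizedMeasure hf0 hfpos id).symm

theorem memLp_id_normalizedMeasure (hf0 : 0 ≤ᵐ[volume] f) (hfpos : 0 < ∫ x, f x)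
    (hf2 : Integrable fun x => x ^ 2 * f x) : MemLp id 2 (normalizedMeasure volume f) :=
  (memLp_two_iff_integrable_sq aestronglyMeasurable_id).2
    (integrable_normalizedMeasure hf0 hfpos hf2)

theorem densVar1_eq_variance_normalizedMeasure (hf0 : 0 ≤ᵐ[volume] f) (hfpos : 0 < ∫ x, f x)
    (hf : MemLp id 2 (normalizedMeasure volume f)) :
    densVar1 f = Var[id; normalizedMeasure volume f] := by
  have := isProbabilityMeasure_normalizedMeasure hf0 hfpos
  rw [variance_eq_sub hf, ← densMean1_eq_integral_normalizedMeasure hf0 hfpos, densVar1]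
  congr 1
  exact (integral_normalizedMeasure hf0 hfpos (fun x => x ^ 2)).symm

theorem densVar1_pos (hf0 : 0 ≤ᵐ[volume] f) (hfpos : 0 < ∫ x, f x)
    (hf : MemLp id 2 (normalizedMeasure volume f)) : 0 < densVar1 f := by
  have := isProbabilityMeasure_normalizedMeasure hf0 hfpos
  rw [densVar1_eq_variance_normalizedMeasure hf0 hfpos hf]
  exact variance_id_pos hf

theorem abs_densMean1_sub_le (hf0 : 0 ≤ᵐ[volume] f) (hg0 : 0 ≤ᵐ[volume] g)
    (hfpos : 0 < ∫ x, f x) (hgpos : 0 < ∫ x, g x)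
    (hgf : ∀ᵐ x, g x ≤ b * f x) (hfg : ∀ᵐ x, f x ≤ c * g x)
    (hf : MemLp id 2 (normalizedMeasure volume f)) :
    |densMean1 f - densMean1 g| ≤ (b * c - (b * c : ℝ)⁻¹) / 2 * √(densVar1 f) := by
  have := isProbabilityMeasure_normalizedMeasure hf0 hfpos
  have := isProbabilityMeasure_normalizedMeasure hg0 hgpos
  rw [densMean1_eq_integral_normalizedMeasure hf0 hfpos,
    densMean1_eq_integral_normalizedMeasure hg0 hgpos,
    densVar1_eq_variance_normalizedMeasure hf0 hfpos hf]
  simpa only [NNReal.coe_mul, mul_comm (c : ℝ)] using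
    abs_integral_sub_integral_le_mul_sqrt_variance
      (normalizedMeasure_le_smul hf0 hfpos hgpos hgf hfg)
      (normalizedMeasure_le_smul hg0 hgpos hfpos hfg hgf) hf

theorem densVar1_le_mul_densVar1 (hf0 : 0 ≤ᵐ[volume] f) (hg0 : 0 ≤ᵐ[volume] g)
    (hfpos : 0 < ∫ x, f x) (hgpos : 0 < ∫ x, g x)
    (hgf : ∀ᵐ x, g x ≤ b * f x) (hfg : ∀ᵐ x, f x ≤ c * g x)
    (hf : MemLp id 2 (normalizedMeasure volume f)) :
    densVar1 g ≤ b * c * densVar1 f := by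
  have := isProbabilityMeasure_normalizedMeasure hf0 hfpos
  have := isProbabilityMeasure_normalizedMeasure hg0 hgpos
  have le_smul := normalizedMeasure_le_smul hf0 hfpos hgpos hgf hfg
  rw [densVar1_eq_variance_normalizedMeasure hf0 hfpos hf,
    densVar1_eq_variance_normalizedMeasure hg0 hgpos
      (hf.of_measure_le_smul ENNReal.coe_ne_top le_smul)]
  exact_mod_cast variance_le_mul_variance_of_le_smul le_smul hf

theorem nonneg_of_mul_le_of_mul_le {ε s t : ℝ} (hε : ε ∈ Set.Ioo (0 : ℝ) 1)
    (hst : ε * s ≤ t) (hts : ε * t ≤ s) : 0 ≤ s := by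
  have one_sub_sq_mul_nonneg : 0 ≤ (1 - ε ^ 2) * s := by
    linarith [mul_le_mul_of_nonneg_left hst hε.1.le]
  exact nonneg_of_mul_nonneg_right one_sub_sq_mul_nonneg
    (sub_pos.2 (pow_lt_one₀ hε.1.le hε.2 two_ne_zero))

theorem mul_le_and_mul_le_of_div_mem_Ioo {ε s t : ℝ} (hε : 0 < ε) (hs : 0 ≤ s)
    (hts : t / s ∈ Set.Ioo ε (1 / ε)) : ε * s ≤ t ∧ ε * t ≤ s := by
  have s_ne_zero : s ≠ 0 := fun h => (hε.trans hts.1).ne' (by rw [h, div_zero])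
  have s_pos : 0 < s := hs.lt_of_ne' s_ne_zero
  have upper := (div_lt_div_iff₀ s_pos hε).1 hts.2
  exact ⟨((lt_div_iff₀ s_pos).1 hts.1).le, by linarith⟩

theorem moment_comparison_general {ε : ℝ} (hε : ε ∈ Set.Ioo (0 : ℝ) 1)
    (hgmeas : AEStronglyMeasurable g) (hfpos : 0 < ∫ x, f x)
    (hfint : Integrable fun x => (x ^ 2 + 1) * f x)
    (hratio : ∀ᵐ x, ε * f x ≤ g x ∧ ε * g x ≤ f x) :
    |densMean1 f - densMean1 g| < √(densVar1 f) / (2 * ε ^ 2) ∧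
      ε ^ 2 ≤ densVar1 g / densVar1 f ∧ densVar1 g / densVar1 f ≤ 1 / ε ^ 2 := by
  have hf0 : 0 ≤ᵐ[volume] f := hratio.mono fun x hx => nonneg_of_mul_le_of_mul_le hε hx.1 hx.2
  have hg0 : 0 ≤ᵐ[volume] g := hratio.mono fun x hx => nonneg_of_mul_le_of_mul_le hε hx.2 hx.1
  obtain ⟨ε_pos, -⟩ := hε
  lift ε to ℝ≥0 using ε_pos.le
  have hgf : ∀ᵐ x, g x ≤ ↑ε⁻¹ * f x := hratio.mono fun x hx => (le_inv_mul_iff₀ ε_pos).2 hx.2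
  have hfg : ∀ᵐ x, f x ≤ ↑ε⁻¹ * g x := hratio.mono fun x hx => (le_inv_mul_iff₀ ε_pos).2 hx.1
  have hgpos := integral_pos_of_le_mul hg0 hgmeas hfpos hgf hfg
  have hf := memLp_id_normalizedMeasure hf0 hfpos
    (integrable_sq_mul_of_integrable_sq_add_one_mul (.of_integral_ne_zero hfpos.ne') hfint)
  have hg : MemLp id 2 (normalizedMeasure volume g) := hf.of_measure_le_smul ENNReal.coe_ne_top
    (normalizedMeasure_le_smul hf0 hfpos hgpos hgf hfg)
  have var_pos := densVar1_pos hf0 hfpos hf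
  have mean_le := abs_densMean1_sub_le hf0 hg0 hfpos hgpos hgf hfg hf
  have var_g_le := densVar1_le_mul_densVar1 hf0 hg0 hfpos hgpos hgf hfg hf
  have var_f_le := densVar1_le_mul_densVar1 hg0 hf0 hgpos hfpos hfg hgf hg
  have inv_mul_inv : (↑ε⁻¹ * ↑ε⁻¹ : ℝ) = 1 / (ε : ℝ) ^ 2 := by
    rw [NNReal.coe_inv, ← mul_inv, ← sq, one_div]
  rw [inv_mul_inv] at mean_le var_g_le var_f_le
  refine ⟨mean_le.trans_lt ?_, ?_, (div_le_iff₀ var_pos).2 var_g_le⟩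
  · calc (1 / (ε : ℝ) ^ 2 - (1 / (ε : ℝ) ^ 2)⁻¹) / 2 * √(densVar1 f)
        < 1 / (ε : ℝ) ^ 2 / 2 * √(densVar1 f) := by
          gcongr
          exact sub_lt_self _ (by positivity)
      _ = √(densVar1 f) / (2 * (ε : ℝ) ^ 2) := by ring
  · rw [le_div_iff₀ var_pos, ← le_inv_mul_iff₀ (by positivity), ← one_div]
    exact var_f_le

end Density

/-- **Lemma 7.3.** Moment comparison for multiplicatively comparable densities:
if `ε < g/f < 1/ε` pointwise then the means differ by at most `√(Var f)/(2ε²)` and the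
variances by a multiplicative factor at most `1/ε²`. -/
theorem moment_comparison
    (ε : ℝ) (hε : ε ∈ Set.Ioo (0 : ℝ) 1)
    (f g : ℝ → ℝ) (hfmeas : Measurable f) (hgmeas : Measurable g)
    (hf0 : ∀ x, 0 ≤ f x) (hg0 : ∀ x, 0 ≤ g x)
    (hfpos : 0 < ∫ x, f x)
    (hfint : Integrable fun x => (x ^ 2 + 1) * f x)
    (hratio : ∀ x, ε < g x / f x ∧ g x / f x < 1 / ε) :
    |densMean1 f - densMean1 g| < Real.sqrt (densVar1 f) / (2 * ε ^ 2) ∧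
      ε ^ 2 ≤ densVar1 g / densVar1 f ∧ densVar1 g / densVar1 f ≤ 1 / ε ^ 2 := by
  exact moment_comparison_general hε hgmeas.aestronglyMeasurable hfpos hfint
    (.of_forall fun x => mul_le_and_mul_le_of_div_mem_Ioo hε.1 (hf0 x) (hratio x))
end
end

section
/- Let n ≥ 2 and let f be an isotropic log-concave probability density on ℝⁿ. Then for every x ∈ ℝⁿ with |x| ≥ e¹⁵·n·log n, one has f(x) < exp(−|x|/e¹⁵). -/
open MeasureTheory ProbabilityTheory Real

noncomputable section

/-! Let `d` be the dimension and let `f ≤ M`. Log-concavity gives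
`(f x / M) ^ t * f y ≤ f ((1 - t) • y + t • x)`: contracting towards `x` carries a definite part of
the mass near `x`. For `t = 2 / ‖x‖` the function `⟪·, x⟫ ^ 2` has average at least `4 * ‖x‖ ^ 2` on
the contracted mass, whereas its total integral against `f` is only `‖x‖ ^ 2`. This forces
`f x * 2 ^ ‖x‖ ≤ M * 4 ^ d`, and it remains to bound `f` by `d ^ O(d)`.

Let `f x₀` be within a factor `2` of the supremum. By the tail bound, the convex set
`K = {δ ^ 2 * f x₀ ≤ f}` with `δ = 2 ^ (-17 * d)` lies in the ball of radius `R = 40 * d`. Outside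
of `K`, log-concavity along the segment to `x₀` bounds `f` by `δ` times an integrable function, so
almost all of the second moment lives in `K`. As `f` has mean `0` and variance `1` in every
direction, `K` is not contained in any half-space `{⟪·, u⟫ ≤ 1 / (4 * R)}`, hence contains the ball
of that radius. The volume of this ball times `δ ^ 2 * f x₀` is at most `1`, which bounds `f`. -/

open Module Set
open scoped RealInnerProductSpace

theorem exists_forall_le_two_mul {α : Type*} [Nonempty α] {g : α → ℝ} (hg : ∀ x, 0 ≤ g x)
    (hbdd : BddAbove (range g)) : ∃ x₀, ∀ x, g x ≤ 2 * g x₀ := by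
  rcases (Real.iSup_nonneg hg).eq_or_lt with hsup | hsup
  · exact ⟨Classical.arbitrary α, fun x => by
      linarith [le_ciSup hbdd x, hg (Classical.arbitrary α)]⟩
  · obtain ⟨x₀, hx₀⟩ := exists_lt_of_lt_ciSup (half_lt_self hsup)
    exact ⟨x₀, fun x => by linarith [le_ciSup hbdd x]⟩

theorem integrable_smul_of_integrable_mul_norm_sq {Ω F : Type*} [MeasurableSpace Ω]
    {μ : Measure Ω} [NormedAddCommGroup F] [NormedSpace ℝ F] {f : Ω → ℝ} {g : Ω → F}
    (hf : Integrable f μ) (hg : AEStronglyMeasurable g μ)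
    (hfg : Integrable (fun y => f y * ‖g y‖ ^ 2) μ) : Integrable (fun y => f y • g y) μ := by
  refine (hf.norm.add hfg.norm).mono' (hf.aestronglyMeasurable.smul hg) (ae_of_all _ fun y => ?_)
  simp only [Pi.add_apply, norm_smul, norm_mul, norm_pow, norm_norm]
  nlinarith [mul_nonneg (norm_nonneg (f y)) (sq_nonneg (‖g y‖ - 1)),
    mul_nonneg (norm_nonneg (f y)) (sq_nonneg ‖g y‖), norm_nonneg (f y)]

section AffineChange

variable {E : Type*} [NormedAddCommGroup E] [NormedSpace ℝ E] [FiniteDimensional ℝ E]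
  [MeasurableSpace E] [BorelSpace E] {μ : Measure E} [μ.IsAddHaarMeasure]

theorem integral_comp_smul_add (F : E → ℝ) {a : ℝ} (ha : 0 ≤ a) (v : E) :
    ∫ y, F (a • y + v) ∂μ = (a ^ finrank ℝ E)⁻¹ * ∫ y, F y ∂μ := by
  rw [μ.integral_comp_smul (fun y => F (y + v)) a, integral_add_right_eq_self,
    abs_of_nonneg (by positivity), smul_eq_mul]

theorem integrable_comp_smul_add {F : E → ℝ} (hF : Integrable F μ) {a : ℝ} (ha : a ≠ 0) (v : E) :
    Integrable (fun y => F (a • y + v)) μ :=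
  (hF.comp_add_right v).comp_smul ha

end AffineChange

namespace IsLogConcave

section Module

variable {E : Type*} [AddCommGroup E] [Module ℝ E] {f : E → ℝ}

theorem convex_superlevel (hf : IsLogConcave f) (m : ℝ) : Convex ℝ {y | m ≤ f y} := by
  rcases le_or_gt m 0 with hm | hm
  · simpa only [hm.trans (hf.1 _), ofPred_true] using convex_univ
  intro x hx y hy a b ha hb hab
  calc m = m ^ a * m ^ b := by rw [← rpow_add hm, hab, rpow_one]
    _ ≤ f x ^ a * f y ^ b :=
      mul_le_mul (rpow_le_rpow hm.le hx ha) (rpow_le_rpow hm.le hy hb) (by positivity)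
        (rpow_nonneg (hf.1 x) a)
    _ ≤ f (a • x + b • y) := hf.2 x y a b ha hb hab

theorem div_rpow_mul_le (hf : IsLogConcave f) {M : ℝ} (hM : ∀ y, f y ≤ M) {t : ℝ} (ht₀ : 0 ≤ t)
    (ht₁ : t ≤ 1) (x y : E) : (f x / M) ^ t * f y ≤ f ((1 - t) • y + t • x) := by
  rcases (hf.1 y).eq_or_lt with hy | hy
  · rw [← hy, mul_zero]
    exact hf.1 _
  have hM₀ : 0 < M := hy.trans_le (hM y)
  calc (f x / M) ^ t * f y = f y / M ^ t * f x ^ t := by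
        rw [div_rpow (hf.1 x) hM₀.le]; ring
    _ ≤ f y / f y ^ t * f x ^ t := by
        have := hf.1 x
        gcongr
        exact hM y
    _ = f y ^ (1 - t) * f x ^ t := by rw [rpow_sub hy, rpow_one]
    _ ≤ f ((1 - t) • y + t • x) := hf.2 y x (1 - t) t (by linarith) ht₀ (by ring)

theorem sqrt_mul_sqrt_le (hf : IsLogConcave f) (x y : E) :
    √(f x) * √(f y) ≤ f ((1 / 2 : ℝ) • y + (1 / 2 : ℝ) • x) := by
  rw [sqrt_eq_rpow, sqrt_eq_rpow, mul_comm]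
  exact hf.2 y x _ _ (by norm_num) (by norm_num) (by norm_num)

theorem le_mul_of_le_sq_mul (hf : IsLogConcave f) {δ : ℝ} (hδ : 0 ≤ δ) {x y : E}
    (hxy : f y ≤ δ ^ 2 * f x) : f y ≤ δ * f ((1 / 2 : ℝ) • y + (1 / 2 : ℝ) • x) :=
  calc f y = √(f y) * √(f y) := (mul_self_sqrt (hf.1 y)).symm
    _ ≤ √(δ ^ 2 * f x) * √(f y) := by gcongr
    _ = δ * (√(f x) * √(f y)) := by rw [sqrt_mul (sq_nonneg δ), sqrt_sq hδ, mul_assoc]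
    _ ≤ δ * f ((1 / 2 : ℝ) • y + (1 / 2 : ℝ) • x) := by
      gcongr
      exact hf.sqrt_mul_sqrt_le x y

end Module

section Integral

variable {E : Type*} [NormedAddCommGroup E] [NormedSpace ℝ E] [FiniteDimensional ℝ E]
  [MeasurableSpace E] [BorelSpace E] {μ : Measure E} [μ.IsAddHaarMeasure] {f : E → ℝ}

theorem integrable_sqrt (hf : IsLogConcave f) (hint : Integrable f μ) :
    Integrable (fun y => √(f y)) μ := by
  by_cases hzero : ∃ x, 0 < f x
  · obtain ⟨x, hx⟩ := hzero
    have hmid : Integrable (fun y => f ((1 / 2 : ℝ) • y + (1 / 2 : ℝ) • x)) μ :=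
      integrable_comp_smul_add hint (by norm_num) _
    refine (hmid.const_mul (√(f x))⁻¹).mono'
      (continuous_sqrt.comp_aestronglyMeasurable hint.aestronglyMeasurable)
      (ae_of_all _ fun y => ?_)
    rw [norm_of_nonneg (sqrt_nonneg _), le_inv_mul_iff₀ (sqrt_pos.2 hx)]
    exact hf.sqrt_mul_sqrt_le x y
  · push Not at hzero
    exact (integrable_zero E ℝ μ).congr
      (ae_of_all _ fun y => (sqrt_eq_zero_of_nonpos (hzero y)).symm)

theorem sqrt_mul_integral_sqrt_le (hf : IsLogConcave f) (hint : Integrable f μ) (x : E) :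
    √(f x) * ∫ y, √(f y) ∂μ ≤ 2 ^ finrank ℝ E * ∫ y, f y ∂μ :=
  calc √(f x) * ∫ y, √(f y) ∂μ = ∫ y, √(f x) * √(f y) ∂μ := (integral_const_mul _ _).symm
    _ ≤ ∫ y, f ((1 / 2 : ℝ) • y + (1 / 2 : ℝ) • x) ∂μ :=
      integral_mono ((hf.integrable_sqrt hint).const_mul _)
        (integrable_comp_smul_add hint (by norm_num) _) (hf.sqrt_mul_sqrt_le x)
    _ = 2 ^ finrank ℝ E * ∫ y, f y ∂μ := by
      rw [integral_comp_smul_add f (by norm_num)]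
      simp only [one_div, inv_pow, inv_inv]

theorem bddAbove_range (hf : IsLogConcave f) (hint : ∫ y, f y ∂μ ≠ 0) : BddAbove (range f) := by
  have hfi : Integrable f μ := .of_integral_ne_zero hint
  set I := ∫ y, √(f y) ∂μ
  have hI : 0 < I := by
    refine (integral_nonneg fun y => sqrt_nonneg _).lt_of_ne' fun hzero => hint ?_
    rw [integral_eq_zero_iff_of_nonneg (fun y => sqrt_nonneg _) (hf.integrable_sqrt hfi)] at hzero
    refine integral_eq_zero_of_ae (hzero.mono fun y hy => ?_)
    exact (sqrt_eq_zero (hf.1 y)).1 hy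
  refine ⟨((2 ^ finrank ℝ E * ∫ y, f y ∂μ) / I) ^ 2, ?_⟩
  rintro _ ⟨x, rfl⟩
  have hx : √(f x) ≤ (2 ^ finrank ℝ E * ∫ y, f y ∂μ) / I :=
    (le_div_iff₀ hI).2 (hf.sqrt_mul_integral_sqrt_le hfi x)
  calc f x = √(f x) ^ 2 := (sq_sqrt (hf.1 x)).symm
    _ ≤ _ := by gcongr

theorem div_rpow_mul_integral_le (hf : IsLogConcave f) {M : ℝ} (hM : ∀ y, f y ≤ M) {t : ℝ}
    (ht₀ : 0 ≤ t) (ht₁ : t < 1) (x : E) {w : E → ℝ} (hw : ∀ y, 0 ≤ w y)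
    (hfw : Integrable (fun y => f y * w y) μ) :
    (f x / M) ^ t * ∫ y, f y * w ((1 - t) • y + t • x) ∂μ ≤
      ((1 - t) ^ finrank ℝ E)⁻¹ * ∫ y, f y * w y ∂μ := by
  rw [← integral_comp_smul_add _ (sub_nonneg.2 ht₁.le) (t • x), ← integral_const_mul]
  have hM₀ : 0 ≤ M := (hf.1 x).trans (hM x)
  refine integral_mono_of_nonneg (ae_of_all _ fun y => ?_)
    (integrable_comp_smul_add hfw (sub_pos.2 ht₁).ne' _) (ae_of_all _ fun y => ?_)
  · exact mul_nonneg (rpow_nonneg (div_nonneg (hf.1 x) hM₀) t) (mul_nonneg (hf.1 y) (hw _))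
  · dsimp only
    rw [← mul_assoc]
    exact mul_le_mul_of_nonneg_right (hf.div_rpow_mul_le hM ht₀ ht₁.le x y) (hw _)

end Integral

end IsLogConcave

theorem four_rpow_neg_le_one_sub {t : ℝ} (ht₀ : 0 ≤ t) (ht₁ : t ≤ 1 / 2) :
    (4 : ℝ) ^ (-t) ≤ 1 - t := by
  have hbernoulli := rpow_one_add_le_one_add_mul_self (s := -(1 / 2)) (p := 2 * t) (by norm_num)
    (by linarith) (by linarith)
  calc (4 : ℝ) ^ (-t) = (2 ^ (2 : ℝ)) ^ (-t) := by norm_num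
    _ = (1 + -(1 / 2)) ^ (2 * t) := by
      rw [← rpow_mul two_pos.le, show (1 : ℝ) + -(1 / 2) = 2⁻¹ by norm_num,
        inv_rpow two_pos.le, ← rpow_neg two_pos.le, mul_neg]
    _ ≤ 1 - t := hbernoulli.trans_eq (by ring)

section Geometry

variable {E : Type*} [NormedAddCommGroup E] [InnerProductSpace ℝ E] [FiniteDimensional ℝ E]
  [Nontrivial E] [MeasurableSpace E] [BorelSpace E]

theorem div_finrank_pow_le_volume_ball (x : E) {r : ℝ} (hr : 0 ≤ r) :
    (r / finrank ℝ E) ^ finrank ℝ E ≤ volume.real (Metric.ball x r) := by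
  set d := finrank ℝ E
  have hΓ : Gamma ((d : ℝ) / 2 + 1) ≤ (d : ℝ) ^ d := by
    calc Gamma ((d : ℝ) / 2 + 1) = Gamma (1 / 2 * (d + 1) + 1 / 2 * 1) := by ring_nf
      _ ≤ Gamma (d + 1) ^ (1 / 2 : ℝ) * Gamma 1 ^ (1 / 2 : ℝ) :=
        Gamma_mul_add_mul_le_rpow_Gamma_mul_rpow_Gamma (by positivity) one_pos (by norm_num)
          (by norm_num) (by norm_num)
      _ = (d.factorial : ℝ) ^ (1 / 2 : ℝ) := by
        rw [Gamma_nat_eq_factorial, Gamma_one, one_rpow, mul_one]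
      _ ≤ d.factorial :=
        rpow_le_self_of_one_le (by exact_mod_cast d.factorial_pos) (by norm_num)
      _ ≤ (d : ℝ) ^ d := by exact_mod_cast d.factorial_le_pow
  have hπ : 1 ≤ √π ^ d := one_le_pow₀ (one_le_sqrt.2 (by linarith [pi_gt_three]))
  calc (r / d) ^ d = r ^ d * (1 / (d : ℝ) ^ d) := by rw [div_pow, mul_one_div]
    _ ≤ r ^ d * (√π ^ d / Gamma ((d : ℝ) / 2 + 1)) := by gcongr
    _ = volume.real (Metric.ball x r) := by
      rw [measureReal_def, InnerProductSpace.volume_ball, ENNReal.toReal_mul, ENNReal.toReal_pow,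
        ENNReal.toReal_ofReal hr, ENNReal.toReal_ofReal (by positivity)]

theorem mul_div_finrank_pow_le_integral {f : E → ℝ} (hf : ∀ y, 0 ≤ f y) (hint : Integrable f)
    {m r : ℝ} (hm : 0 ≤ m) (hr : 0 ≤ r) {x : E} (hball : Metric.ball x r ⊆ {y | m ≤ f y}) :
    m * (r / finrank ℝ E) ^ finrank ℝ E ≤ ∫ y, f y :=
  calc m * (r / finrank ℝ E) ^ finrank ℝ E ≤ m * volume.real (Metric.ball x r) := by
        gcongr
        exact div_finrank_pow_le_volume_ball x hr
    _ ≤ ∫ y in Metric.ball x r, f y :=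
      setIntegral_ge_of_const_le_real measurableSet_ball measure_ball_lt_top.ne
        (fun _ hy => hball hy) hint.integrableOn
    _ ≤ ∫ y, f y := setIntegral_le_integral hint (ae_of_all _ hf)

theorem ball_zero_subset_of_forall_not_ae_inner_le {K : Set E} (hK : Convex ℝ K) {r : ℝ}
    (h : ∀ u : E, ‖u‖ = 1 → ¬ ∀ᵐ y, y ∈ K → ⟪y, u⟫ ≤ r) : Metric.ball 0 r ⊆ K := by
  have hint : (interior K).Nonempty := by
    by_contra hempty
    obtain ⟨u, hu⟩ := exists_norm_eq E zero_le_one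
    have hfrontier : ∀ᵐ y, y ∉ frontier K :=
      measure_eq_zero_iff_ae_notMem.1 (hK.addHaar_frontier volume)
    refine h u hu (hfrontier.mono fun y hy hyK => (hy ?_).elim)
    rw [frontier, not_nonempty_iff_eq_empty.1 hempty, sdiff_empty]
    exact subset_closure hyK
  intro p hp
  by_contra hpK
  obtain ⟨g, hg, hgp⟩ := geometric_hahn_banach_of_nonempty_interior_point hK
    (fun hpi => hpK (interior_subset hpi)) hint
  set v := (InnerProductSpace.toDual ℝ E).symm g with hv
  have hgv (y : E) : g y = ⟪y, v⟫ := by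
    rw [real_inner_comm, hv, InnerProductSpace.toDual_symm_apply]
  have hv₀ : 0 < ‖v‖ := by simpa [hv] using hg
  refine h (‖v‖⁻¹ • v) ?_ (ae_of_all _ fun y hy => ?_)
  · rw [norm_smul, norm_inv, norm_norm, inv_mul_cancel₀ hv₀.ne']
  · rw [real_inner_smul_right, inv_mul_le_iff₀ hv₀]
    calc ⟪y, v⟫ ≤ ⟪p, v⟫ := by simpa only [hgv] using hgp y hy
      _ ≤ ‖p‖ * ‖v‖ := real_inner_le_norm p v
      _ ≤ ‖v‖ * r := by
        rw [mul_comm]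
        gcongr
        exact (mem_ball_zero_iff.1 hp).le

end Geometry

/-- A probability density on a finite-dimensional Euclidean space with mean `0` and identity
covariance, both expressed through the one-dimensional projections `⟪·, u⟫` so that no
coordinates are needed. -/
structure IsIsotropicDensity {E : Type*} [NormedAddCommGroup E] [InnerProductSpace ℝ E]
    [FiniteDimensional ℝ E] [MeasurableSpace E] [BorelSpace E] (f : E → ℝ) : Prop where
  nonneg : ∀ y, 0 ≤ f y
  integral_eq_one : ∫ y, f y = 1
  integral_mul_inner : ∀ u, ∫ y, f y * ⟪y, u⟫ = 0
  integral_mul_inner_sq : ∀ u, ∫ y, f y * ⟪y, u⟫ ^ 2 = ‖u‖ ^ 2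

namespace IsIsotropicDensity

variable {E : Type*} [NormedAddCommGroup E] [InnerProductSpace ℝ E] [FiniteDimensional ℝ E]
  [MeasurableSpace E] [BorelSpace E] {f : E → ℝ}

theorem integrable (hf : IsIsotropicDensity f) : Integrable f :=
  integrable_of_integral_eq_one hf.integral_eq_one

theorem integrable_mul_inner_sq (hf : IsIsotropicDensity f) (u : E) :
    Integrable fun y => f y * ⟪y, u⟫ ^ 2 := by
  rcases eq_or_ne u 0 with rfl | hu
  · simp
  · refine .of_integral_ne_zero ?_
    rw [hf.integral_mul_inner_sq]
    exact pow_ne_zero 2 (norm_ne_zero_iff.2 hu)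

theorem integrable_mul_inner (hf : IsIsotropicDensity f) (u : E) :
    Integrable fun y => f y * ⟪y, u⟫ :=
  integrable_smul_of_integrable_mul_norm_sq hf.integrable (by fun_prop)
    (by simpa only [norm_eq_abs, sq_abs] using hf.integrable_mul_inner_sq u)

theorem integrable_mul_quadratic (hf : IsIsotropicDensity f) (u : E) (a b c : ℝ) :
    Integrable fun y => f y * (a * ⟪y, u⟫ ^ 2 + b * ⟪y, u⟫ + c) := by
  refine ((((hf.integrable_mul_inner_sq u).const_mul a).add
    ((hf.integrable_mul_inner u).const_mul b)).add (hf.integrable.const_mul c)).congr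
    (ae_of_all _ fun y => ?_)
  simp only [Pi.add_apply]
  ring

theorem integral_mul_quadratic (hf : IsIsotropicDensity f) (u : E) (a b c : ℝ) :
    ∫ y, f y * (a * ⟪y, u⟫ ^ 2 + b * ⟪y, u⟫ + c) = a * ‖u‖ ^ 2 + c := by
  have hsq := (hf.integrable_mul_inner_sq u).const_mul a
  have hlin := (hf.integrable_mul_inner u).const_mul b
  have hsum : Integrable fun y => a * (f y * ⟪y, u⟫ ^ 2) + b * (f y * ⟪y, u⟫) := hsq.add hlin
  calc ∫ y, f y * (a * ⟪y, u⟫ ^ 2 + b * ⟪y, u⟫ + c)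
      = ∫ y, (a * (f y * ⟪y, u⟫ ^ 2) + b * (f y * ⟪y, u⟫) + c * f y) := by
        congr with y
        ring
    _ = a * ‖u‖ ^ 2 + c := by
      rw [integral_add hsum (hf.integrable.const_mul c), integral_add hsq hlin,
        integral_const_mul, integral_const_mul, integral_const_mul, hf.integral_mul_inner_sq,
        hf.integral_mul_inner, hf.integral_eq_one, mul_zero, add_zero, mul_one]

theorem div_rpow_mul_sq_mul_norm_pow_four_le (hf : IsIsotropicDensity f) (hlc : IsLogConcave f)
    {M : ℝ} (hM : ∀ y, f y ≤ M) {t : ℝ} (ht₀ : 0 ≤ t) (ht₁ : t < 1) (x : E) :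
    (f x / M) ^ t * (t ^ 2 * ‖x‖ ^ 4) ≤ ((1 - t) ^ finrank ℝ E)⁻¹ * ‖x‖ ^ 2 := by
  have hM₀ : 0 ≤ M := (hf.nonneg x).trans (hM x)
  have hfx := hf.nonneg x
  have hmoment : ∫ y, f y * ⟪(1 - t) • y + t • x, x⟫ ^ 2 =
      (1 - t) ^ 2 * ‖x‖ ^ 2 + t ^ 2 * ‖x‖ ^ 4 := by
    convert hf.integral_mul_quadratic x ((1 - t) ^ 2) (2 * (1 - t) * (t * ‖x‖ ^ 2))
      (t ^ 2 * ‖x‖ ^ 4) using 3 with y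
    rw [inner_add_left, real_inner_smul_left, real_inner_smul_left, real_inner_self_eq_norm_sq]
    ring
  calc (f x / M) ^ t * (t ^ 2 * ‖x‖ ^ 4)
      ≤ (f x / M) ^ t * ((1 - t) ^ 2 * ‖x‖ ^ 2 + t ^ 2 * ‖x‖ ^ 4) := by
        gcongr
        exact le_add_of_nonneg_left (by positivity)
    _ ≤ ((1 - t) ^ finrank ℝ E)⁻¹ * ‖x‖ ^ 2 := by
      rw [← hmoment, ← hf.integral_mul_inner_sq x]
      exact hlc.div_rpow_mul_integral_le hM ht₀ ht₁ x (fun y => sq_nonneg ⟪y, x⟫)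
        (hf.integrable_mul_inner_sq x)

theorem mul_two_rpow_norm_le (hf : IsIsotropicDensity f) (hlc : IsLogConcave f) {M : ℝ}
    (hM : ∀ y, f y ≤ M) {x : E} (hx : 4 ≤ ‖x‖) : f x * 2 ^ ‖x‖ ≤ M * 4 ^ finrank ℝ E := by
  rcases (hf.nonneg x).eq_or_lt with hfx | hfx
  · have := (hf.nonneg x).trans (hM x)
    rw [← hfx, zero_mul]
    positivity
  have hM₀ : 0 < M := hfx.trans_le (hM x)
  have hx₀ : 0 < ‖x‖ := by linarith
  set t : ℝ := 2 / ‖x‖ with ht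
  have ht₀ : 0 < t := by positivity
  have ht₁ : t ≤ 1 / 2 := by rw [ht, div_le_iff₀ hx₀]; linarith
  have htx : t * ‖x‖ = 2 := div_mul_cancel₀ 2 hx₀.ne'
  have hcontract : (f x / M) ^ t * 4 ≤ ((1 - t) ^ finrank ℝ E)⁻¹ := by
    refine le_of_mul_le_mul_right (Eq.trans_le ?_ <| hf.div_rpow_mul_sq_mul_norm_pow_four_le hlc
      hM ht₀.le (by linarith) x) (pow_pos hx₀ 2)
    calc (f x / M) ^ t * 4 * ‖x‖ ^ 2 = (f x / M) ^ t * ((t * ‖x‖) ^ 2 * ‖x‖ ^ 2) := by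
          rw [htx]; ring
      _ = _ := by ring
  have hpow : (f x / M * 2 ^ ‖x‖) ^ t ≤ ((4 : ℝ) ^ finrank ℝ E) ^ t := by
    calc (f x / M * 2 ^ ‖x‖) ^ t = (f x / M) ^ t * 4 := by
          rw [mul_rpow (by positivity) (by positivity), ← rpow_mul two_pos.le, mul_comm ‖x‖, htx]
          norm_num
      _ ≤ ((1 - t) ^ finrank ℝ E)⁻¹ := hcontract
      _ ≤ (((4 : ℝ) ^ (-t)) ^ finrank ℝ E)⁻¹ := by
        gcongr
        exact four_rpow_neg_le_one_sub ht₀.le ht₁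
      _ = ((4 : ℝ) ^ finrank ℝ E) ^ t := by
        rw [rpow_neg (by norm_num), inv_pow, inv_inv, rpow_pow_comm (by norm_num)]
  have := (rpow_le_rpow_iff (by positivity) (by positivity) ht₀).1 hpow
  rwa [div_mul_eq_mul_div, div_le_iff₀' hM₀] at this

theorem integrable_comp_midpoint_mul (hf : IsIsotropicDensity f) (x₀ u : E) (a c : ℝ) :
    Integrable fun y => f ((1 / 2 : ℝ) • y + (1 / 2 : ℝ) • x₀) * (a * ⟪y, u⟫ ^ 2 + c) := by
  convert integrable_comp_smul_add (hf.integrable_mul_quadratic u (4 * a) (-4 * a * ⟪x₀, u⟫)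
    (a * ⟪x₀, u⟫ ^ 2 + c)) one_half_pos.ne' ((1 / 2 : ℝ) • x₀) using 3 with y
  rw [inner_add_left, real_inner_smul_left, real_inner_smul_left]
  ring

theorem integral_comp_midpoint_mul (hf : IsIsotropicDensity f) (x₀ u : E) (a c : ℝ) :
    ∫ y, f ((1 / 2 : ℝ) • y + (1 / 2 : ℝ) • x₀) * (a * ⟪y, u⟫ ^ 2 + c) =
      2 ^ finrank ℝ E * (a * (4 * ‖u‖ ^ 2 + ⟪x₀, u⟫ ^ 2) + c) := by
  set F : E → ℝ := fun z =>
    f z * (4 * a * ⟪z, u⟫ ^ 2 + -4 * a * ⟪x₀, u⟫ * ⟪z, u⟫ + (a * ⟪x₀, u⟫ ^ 2 + c)) with hF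
  calc ∫ y, f ((1 / 2 : ℝ) • y + (1 / 2 : ℝ) • x₀) * (a * ⟪y, u⟫ ^ 2 + c)
      = ∫ y, F ((1 / 2 : ℝ) • y + (1 / 2 : ℝ) • x₀) := by
        congr with y
        simp only [hF, inner_add_left, real_inner_smul_left]
        ring
    _ = 2 ^ finrank ℝ E * ∫ z, F z := by
      rw [integral_comp_smul_add F one_half_pos.le, one_div, inv_pow, inv_inv]
    _ = 2 ^ finrank ℝ E * (a * (4 * ‖u‖ ^ 2 + ⟪x₀, u⟫ ^ 2) + c) := by
      rw [hf.integral_mul_quadratic]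
      ring

end IsIsotropicDensity

theorem inv_two_pow_mul_le_half {d : ℕ} (hd : 1 ≤ d) :
    ((2 : ℝ) ^ (17 * d))⁻¹ * (2 ^ d * (8 + 4 * (40 * d) ^ 2)) ≤ 1 / 2 := by
  have hd₁ : (1 : ℝ) ≤ d := by exact_mod_cast hd
  have hd₂ : (d : ℝ) ≤ 2 ^ d := by exact_mod_cast d.lt_two_pow_self.le
  rw [inv_mul_le_iff₀ (by positivity)]
  calc (2 : ℝ) ^ d * (8 + 4 * (40 * d) ^ 2) ≤ 2 ^ d * (2 ^ 13 * d ^ 2) := by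
        gcongr
        nlinarith
    _ ≤ 2 ^ d * (2 ^ 13 * (2 ^ d) ^ 2) := by gcongr
    _ = 2 ^ (3 * d + 14) * (1 / 2) := by ring
    _ ≤ 2 ^ (17 * d) * (1 / 2) := by
      gcongr
      · exact one_le_two
      · lia

theorem IsLogConcave.mul_add_mul_sub_le {E : Type*} [AddCommGroup E] [Module ℝ E] {f : E → ℝ}
    (hf : IsLogConcave f) {x₀ y : E} {δ c R s : ℝ} (hδ : 0 ≤ δ) (hc : 0 ≤ c) (hcR : c ≤ R)
    (hs : δ ^ 2 * f x₀ ≤ f y → -R ≤ s ∧ s ≤ c) :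
    f y * ((s + R) * (s - c)) ≤
      δ * (f ((1 / 2 : ℝ) • y + (1 / 2 : ℝ) • x₀) * (2 * s ^ 2 + 2 * R ^ 2)) := by
  have hfy := hf.1 y
  have hfmid := hf.1 ((1 / 2 : ℝ) • y + (1 / 2 : ℝ) • x₀)
  by_cases hy : δ ^ 2 * f x₀ ≤ f y
  · obtain ⟨hRs, hsc⟩ := hs hy
    have hprod : (s + R) * (s - c) ≤ 0 :=
      mul_nonpos_of_nonneg_of_nonpos (by linarith) (by linarith)
    exact (mul_nonpos_of_nonneg_of_nonpos hfy hprod).trans (by positivity)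
  · calc f y * ((s + R) * (s - c)) ≤ f y * (2 * s ^ 2 + 2 * R ^ 2) := by
          gcongr
          nlinarith [sq_nonneg (s - (R - c)), mul_nonneg hc (sub_nonneg.2 hcR)]
      _ ≤ δ * f ((1 / 2 : ℝ) • y + (1 / 2 : ℝ) • x₀) * (2 * s ^ 2 + 2 * R ^ 2) := by
          gcongr
          exact hf.le_mul_of_le_sq_mul hδ (not_le.1 hy).le
      _ = _ := mul_assoc _ _ _

namespace IsIsotropicDensity

variable {E : Type*} [NormedAddCommGroup E] [InnerProductSpace ℝ E] [FiniteDimensional ℝ E]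
  [MeasurableSpace E] [BorelSpace E] {f : E → ℝ}

/- With `s = ⟪y, u⟫` and `c = 1 / (4 * R)`, mean `0` and variance `1` give
`∫ f * (s + R) * (s - c) = 3 / 4`. If the superlevel set were contained in `{-R ≤ s ≤ c}`, the
integrand would be nonpositive there, and outside of it there is too little mass. -/
theorem not_ae_inner_le (hf : IsIsotropicDensity f) (hlc : IsLogConcave f) {x₀ : E} {δ R : ℝ}
    (hδ : 0 ≤ δ) (hR : 1 ≤ R) (hbdd : {y | δ ^ 2 * f x₀ ≤ f y} ⊆ Metric.closedBall 0 R)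
    (hδR : δ * (2 ^ finrank ℝ E * (8 + 4 * R ^ 2)) ≤ 1 / 2) {u : E} (hu : ‖u‖ = 1) :
    ¬ ∀ᵐ y, δ ^ 2 * f x₀ ≤ f y → ⟪y, u⟫ ≤ 1 / (4 * R) := by
  intro hae
  set c := 1 / (4 * R) with hc
  have hcR : c * R = 1 / 4 := by rw [hc]; field_simp
  have hc₀ : 0 < c := by positivity
  have hcle : c ≤ R := by nlinarith
  have hinner {y : E} (hy : δ ^ 2 * f x₀ ≤ f y) : |⟪y, u⟫| ≤ R :=
    calc |⟪y, u⟫| ≤ ‖y‖ * ‖u‖ := abs_real_inner_le_norm y u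
      _ ≤ R := by simpa only [hu, mul_one, mem_closedBall_zero_iff] using hbdd hy
  have hx₀ : ⟪x₀, u⟫ ^ 2 ≤ R ^ 2 := by
    have hδ₁ : δ ≤ 1 := by
      have h2 : (1 : ℝ) ≤ 2 ^ finrank ℝ E := one_le_pow₀ one_le_two
      nlinarith [le_mul_of_one_le_right hδ (one_le_mul_of_one_le_of_one_le h2
        (show 1 ≤ 8 + 4 * R ^ 2 by nlinarith))]
    rw [← sq_abs]
    gcongr
    exact hinner (mul_le_of_le_one_left (hf.nonneg x₀) (pow_le_one₀ hδ hδ₁))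
  have hintegral : ∫ y, f y * (1 * ⟪y, u⟫ ^ 2 + (R - c) * ⟪y, u⟫ + -(c * R)) ≤
      ∫ y, δ * (f ((1 / 2 : ℝ) • y + (1 / 2 : ℝ) • x₀) * (2 * ⟪y, u⟫ ^ 2 + 2 * R ^ 2)) := by
    refine integral_mono_ae (hf.integrable_mul_quadratic u _ _ _)
      ((hf.integrable_comp_midpoint_mul x₀ u 2 _).const_mul δ) (hae.mono fun y hy => ?_)
    have hfactor : 1 * ⟪y, u⟫ ^ 2 + (R - c) * ⟪y, u⟫ + -(c * R) =
        (⟪y, u⟫ + R) * (⟪y, u⟫ - c) := by ring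
    dsimp only
    rw [hfactor]
    exact hlc.mul_add_mul_sub_le hδ hc₀.le hcle
      fun hyK => ⟨(abs_le.1 (hinner hyK)).1, hy hyK⟩
  rw [hf.integral_mul_quadratic, integral_const_mul, hf.integral_comp_midpoint_mul, hu, hcR]
    at hintegral
  have hmass : δ * (2 ^ finrank ℝ E * (2 * (4 * 1 ^ 2 + ⟪x₀, u⟫ ^ 2) + 2 * R ^ 2)) ≤
      δ * (2 ^ finrank ℝ E * (8 + 4 * R ^ 2)) := by
    gcongr δ * (2 ^ finrank ℝ E * ?_)
    linarith
  linarith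

section Nontrivial

variable [Nontrivial E]

theorem ball_subset_superlevel (hf : IsIsotropicDensity f) (hlc : IsLogConcave f) {x₀ : E}
    {δ R : ℝ} (hδ : 0 ≤ δ) (hR : 1 ≤ R)
    (hbdd : {y | δ ^ 2 * f x₀ ≤ f y} ⊆ Metric.closedBall 0 R)
    (hδR : δ * (2 ^ finrank ℝ E * (8 + 4 * R ^ 2)) ≤ 1 / 2) :
    Metric.ball 0 (1 / (4 * R)) ⊆ {y | δ ^ 2 * f x₀ ≤ f y} :=
  ball_zero_subset_of_forall_not_ae_inner_le (hlc.convex_superlevel _)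
    fun _ hu => hf.not_ae_inner_le hlc hδ hR hbdd hδR hu

theorem superlevel_subset_closedBall (hf : IsIsotropicDensity f) (hlc : IsLogConcave f) {x₀ : E}
    (hx₀ : 0 < f x₀) (hmax : ∀ x, f x ≤ 2 * f x₀) :
    {y | ((2 : ℝ) ^ (17 * finrank ℝ E))⁻¹ ^ 2 * f x₀ ≤ f y} ⊆
      Metric.closedBall 0 (40 * finrank ℝ E) := by
  intro y (hy : _ ≤ f y)
  set d := finrank ℝ E
  have hd : 1 ≤ d := finrank_pos
  have hd' : (1 : ℝ) ≤ d := by exact_mod_cast hd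
  rw [mem_closedBall_zero_iff]
  by_contra! hnorm
  have htail := hf.mul_two_rpow_norm_le hlc hmax (show 4 ≤ ‖y‖ by linarith)
  have hlt : (2 : ℝ) ^ (40 * d) < 2 ^ ‖y‖ := by
    rw [← rpow_natCast]
    exact rpow_lt_rpow_of_exponent_lt one_lt_two (by push_cast; linarith)
  have hcontra : (2 : ℝ) ^ (6 * d) * f x₀ < 2 ^ (1 + 2 * d) * f x₀ := by
    calc (2 : ℝ) ^ (6 * d) * f x₀ = ((2 : ℝ) ^ (17 * d))⁻¹ ^ 2 * f x₀ * 2 ^ (40 * d) := by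
          field_simp
          ring
      _ < f y * 2 ^ ‖y‖ := mul_lt_mul' hy hlt (by positivity) (hy.trans_lt' (by positivity))
      _ ≤ 2 * f x₀ * 4 ^ d := htail
      _ = 2 ^ (1 + 2 * d) * f x₀ := by
          rw [pow_add, pow_mul, pow_one]
          norm_num
          ring
  have hpow : (2 : ℝ) ^ (1 + 2 * d) ≤ 2 ^ (6 * d) :=
    pow_le_pow_right₀ one_le_two (by lia)
  exact absurd hcontra (not_lt.2 (by gcongr))

theorem le_mul_sq_pow (hf : IsIsotropicDensity f) (hlc : IsLogConcave f) (x : E) :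
    f x ≤ (2 ^ 43 * (finrank ℝ E : ℝ) ^ 2) ^ finrank ℝ E := by
  obtain ⟨x₀, hmax⟩ := exists_forall_le_two_mul hf.nonneg
    (hlc.bddAbove_range (hf.integral_eq_one.trans_ne one_ne_zero))
  rcases (hf.nonneg x₀).eq_or_lt with hx₀ | hx₀
  · refine (hmax x).trans ?_
    rw [← hx₀, mul_zero]
    positivity
  set d := finrank ℝ E
  set δ : ℝ := (2 ^ (17 * d))⁻¹ with hδ
  have hd : 1 ≤ d := finrank_pos
  have hd' : (1 : ℝ) ≤ d := by exact_mod_cast hd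
  have hball : Metric.ball 0 (1 / (4 * (40 * d))) ⊆ {y | δ ^ 2 * f x₀ ≤ f y} :=
    hf.ball_subset_superlevel hlc (by positivity) (by linarith)
      (hf.superlevel_subset_closedBall hlc hx₀ hmax) (inv_two_pow_mul_le_half hd)
  have hmass : δ ^ 2 * f x₀ * (1 / (4 * (40 * d)) / d) ^ d ≤ 1 :=
    (mul_div_finrank_pow_le_integral hf.nonneg hf.integrable (by positivity) (by positivity)
      hball).trans_eq hf.integral_eq_one
  calc f x ≤ 2 * f x₀ := hmax x
    _ = 2 * (2 ^ 34 * (160 * (d : ℝ) ^ 2)) ^ d * (δ ^ 2 * f x₀ * (1 / (4 * (40 * d)) / d) ^ d) := by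
      have hδ₂ : δ ^ 2 = ((2 ^ 34) ^ d)⁻¹ := by
        rw [hδ, inv_pow, ← pow_mul, ← pow_mul]
        ring_nf
      have hr : (1 / (4 * (40 * d)) / d : ℝ) = (160 * (d : ℝ) ^ 2)⁻¹ := by
        field_simp
        norm_num
      rw [hδ₂, hr, mul_pow, inv_pow]
      field_simp
    _ ≤ 2 ^ d * (2 ^ 34 * (2 ^ 8 * (d : ℝ) ^ 2)) ^ d * 1 := by
      gcongr
      · exact le_self_pow₀ one_le_two (by lia)
      · norm_num
    _ = (2 ^ 43 * (d : ℝ) ^ 2) ^ d := by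
      rw [mul_one, ← mul_pow]
      ring

end Nontrivial

end IsIsotropicDensity

theorem isotropic_logconcave_tail_general {E : Type*} [NormedAddCommGroup E]
    [InnerProductSpace ℝ E] [FiniteDimensional ℝ E] [MeasurableSpace E] [BorelSpace E]
    {f : E → ℝ} (hf : IsIsotropicDensity f) (hlc : IsLogConcave f) (hd : 2 ≤ finrank ℝ E)
    {C : ℝ} (hC : 100 ≤ C) {x : E} (hx : C * finrank ℝ E * log (finrank ℝ E) ≤ ‖x‖) :
    f x < exp (-(‖x‖ / C)) := by
  have : Nontrivial E := nontrivial_of_finrank_pos (by lia : 0 < finrank ℝ E)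
  set d := finrank ℝ E
  have hd' : (2 : ℝ) ≤ d := by exact_mod_cast hd
  have hlog : log 2 ≤ log d := log_le_log two_pos hd'
  have hlog2 := log_two_gt_d9
  have hx₄ : 4 ≤ ‖x‖ :=
    calc (4 : ℝ) ≤ 100 * 2 * 0.6 := by norm_num
      _ ≤ C * d * log d := by gcongr; linarith
      _ ≤ ‖x‖ := hx
  have hxC : d * log d ≤ ‖x‖ / C := by
    rw [le_div_iff₀ (by linarith)]
    linarith
  have hmul : f x * 2 ^ ‖x‖ ≤ exp (47 * (d * log d)) :=
    calc f x * 2 ^ ‖x‖ ≤ (2 ^ 43 * (d : ℝ) ^ 2) ^ d * 4 ^ d :=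
          hf.mul_two_rpow_norm_le hlc (hf.le_mul_sq_pow hlc) hx₄
      _ = (2 ^ 45 * (d : ℝ) ^ 2) ^ d := by rw [← mul_pow]; ring
      _ ≤ ((d : ℝ) ^ 45 * (d : ℝ) ^ 2) ^ d := by gcongr
      _ = exp (47 * (d * log d)) := by
        rw [← pow_add, ← pow_mul, ← rpow_natCast, rpow_def_of_pos (by linarith)]
        push_cast
        ring_nf
  calc f x = f x * 2 ^ ‖x‖ * exp (-(log 2 * ‖x‖)) := by
        rw [rpow_def_of_pos two_pos, mul_assoc, ← exp_add, add_neg_cancel, exp_zero, mul_one]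
    _ ≤ exp (47 * (d * log d)) * exp (-(log 2 * ‖x‖)) := by gcongr
    _ < exp (-(‖x‖ / C)) := by
      rw [← exp_add, exp_lt_exp]
      have : ‖x‖ / C ≤ ‖x‖ / 100 := by gcongr
      linarith [mul_lt_mul_of_pos_right hlog2 (show 0 < ‖x‖ by linarith)]

section Coordinates

section SecondMoments

variable {ι : Type*} [Fintype ι] {μ : Measure (EuclideanSpace ℝ ι)} {f : EuclideanSpace ℝ ι → ℝ}

theorem integrable_mul_apply_mul_apply (hf : AEStronglyMeasurable f μ)
    (hfn : Integrable (fun y => f y * ‖y‖ ^ 2) μ) (i j : ι) :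
    Integrable (fun y => f y * (y i * y j)) μ := by
  refine hfn.mono (hf.mul (by fun_prop)) (ae_of_all _ fun y => ?_)
  rw [norm_mul, norm_mul, norm_mul, norm_pow, norm_norm, sq]
  gcongr <;> exact PiLp.norm_apply_le y _

theorem integral_mul_inner_sq_eq_sum
    (hint : ∀ i j, Integrable (fun y => f y * (y i * y j)) μ) (u : EuclideanSpace ℝ ι) :
    ∫ y, f y * ⟪y, u⟫ ^ 2 ∂μ = ∑ i, ∑ j, u i * u j * ∫ y, f y * (y i * y j) ∂μ := by
  have hexpand (y : EuclideanSpace ℝ ι) :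
      f y * ⟪y, u⟫ ^ 2 = ∑ i, ∑ j, u i * u j * (f y * (y i * y j)) := by
    rw [PiLp.inner_apply, sq, Finset.sum_mul_sum]
    simp only [RCLike.inner_apply, conj_trivial, Finset.mul_sum]
    exact Finset.sum_congr rfl fun i _ => Finset.sum_congr rfl fun j _ => by ring
  have hterm (i j : ι) : Integrable (fun y => u i * u j * (f y * (y i * y j))) μ :=
    (hint i j).const_mul _
  simp_rw [hexpand, ← integral_const_mul]
  rw [integral_finsetSum _ fun i _ => integrable_finsetSum _ fun j _ => hterm i j]
  exact Finset.sum_congr rfl fun i _ => integral_finsetSum _ fun j _ => hterm i j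

end SecondMoments

variable {n : ℕ} {f : EuclideanSpace ℝ (Fin n) → ℝ}

theorem integral_mul_apply_mul_apply_of_densCov (hmean : densMean n f = 0)
    (hcov : densCov n f = 1) (i j : Fin n) :
    ∫ y, f y * (y i * y j) = (1 : Matrix (Fin n) (Fin n) ℝ) i j := by
  simpa only [densCov, hmean, Matrix.of_apply, PiLp.zero_apply, sub_zero] using
    congrFun₂ hcov i j

theorem integrable_mul_norm_sq_of_densCov (hmean : densMean n f = 0) (hcov : densCov n f = 1) :
    Integrable fun y => f y * ‖y‖ ^ 2 := by
  simp only [EuclideanSpace.real_norm_sq_eq, Finset.mul_sum]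
  simp only [sq]
  exact integrable_finsetSum _ fun i _ => integrable_of_integral_eq_one <|
    (integral_mul_apply_mul_apply_of_densCov hmean hcov i i).trans (Matrix.one_apply_eq i)

theorem isIsotropicDensity_of_densMean_densCov (hf₀ : ∀ y, 0 ≤ f y) (hf₁ : ∫ y, f y = 1)
    (hmean : densMean n f = 0) (hcov : densCov n f = 1) : IsIsotropicDensity f where
  nonneg := hf₀
  integral_eq_one := hf₁
  integral_mul_inner u := by
    have hint : Integrable fun y => f y • y :=
      integrable_smul_of_integrable_mul_norm_sq (integrable_of_integral_eq_one hf₁) (by fun_prop)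
        (integrable_mul_norm_sq_of_densCov hmean hcov)
    calc ∫ y, f y * ⟪y, u⟫ = ∫ y, ⟪u, f y • y⟫ := by
          simp only [real_inner_smul_right, real_inner_comm]
      _ = ⟪u, densMean n f⟫ := integral_inner hint u
      _ = 0 := by rw [hmean, inner_zero_right]
  integral_mul_inner_sq u := by
    have hint := integrable_mul_apply_mul_apply
      (integrable_of_integral_eq_one hf₁).aestronglyMeasurable
      (integrable_mul_norm_sq_of_densCov hmean hcov)
    rw [integral_mul_inner_sq_eq_sum hint, EuclideanSpace.real_norm_sq_eq]
    simp only [integral_mul_apply_mul_apply_of_densCov hmean hcov, Matrix.one_apply, mul_ite,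
      mul_one, mul_zero, Finset.sum_ite_eq, Finset.mem_univ, if_true, sq]

end Coordinates

/-- **Lemma 7.4.** Pointwise tail bound for isotropic log-concave densities: for `n ≥ 2`
and `|x| ≥ e¹⁵ n log n` one has `f(x) < exp(-|x|/e¹⁵)`. -/
theorem isotropic_logconcave_tail
    (n : ℕ) (hn : 2 ≤ n)
    (f : EuclideanSpace ℝ (Fin n) → ℝ)
    (hf0 : ∀ x, 0 ≤ f x) (hf1 : ∫ x, f x = 1)
    (hflc : IsLogConcave f)
    (hmean : densMean n f = 0) (hcov : densCov n f = 1) :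
    ∀ x : EuclideanSpace ℝ (Fin n),
      Real.exp 15 * n * Real.log n ≤ ‖x‖ → f x < Real.exp (-(‖x‖ / Real.exp 15)) := by
  intro x hx
  have hC : 100 ≤ exp 15 := by
    calc (100 : ℝ) ≤ 2 ^ 15 := by norm_num
      _ ≤ exp 1 ^ 15 := by gcongr; linarith [exp_one_gt_d9]
      _ = exp 15 := by rw [← exp_nat_mul]; norm_num
  have hiso := isIsotropicDensity_of_densMean_densCov hf0 hf1 hmean hcov
  exact isotropic_logconcave_tail_general hiso hflc (by rwa [finrank_euclideanSpace_fin]) hC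
    (by rwa [finrank_euclideanSpace_fin])
end
end
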